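/- Let I and J be ℤ-invariant subsets of ℂ^* with I∩J=∅. (1) If M is an irreducible finite-dimensional H^A_m-module of type I and N is an irreducible finite-dimensional H^A_n-module of type J, then Ind_{H^A_m⊗H^A_n}^{H^A_{m+n}}(M⊗N) := H^A_{m+n} ⊗_{H^A_m⊗H^A_n} (M⊗N) is an irreducible H^A_{m+n}-module of type I∪J. (2) Conversely, if L is an irreducible finite-dimensional H^A_n-module of type I∪J, then there exist m with 0≤m≤n, an irreducible H^A_m-module M of type I and an irreducible H^A_{n−m}-module N of type J such that L ≅ Ind_{H^A_m⊗H^A_{n−m}}^{H^A_n}(M⊗N). -/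

import Mathlib

set_option synthInstance.maxHeartbeats 1000000
set_option maxHeartbeats 1000000

noncomputable section
open scoped BigOperators

/-- generators of the affine Hecke algebra of type `A` of degree `n`:
`T_1, …, T_{n-1}` (indexed by `Fin (n-1)`) and `X_1, …, X_n` (indexed by `Fin n`)
with their inverses. -/
inductive AGen (n : ℕ) : Type
  | T : Fin (n - 1) → AGen n
  | X : Fin n → AGen n
  | Xi : Fin n → AGen n

def aT {n : ℕ} (i : Fin (n - 1)) : FreeAlgebra ℂ (AGen n) := FreeAlgebra.ι ℂ (AGen.T i)
def aX {n : ℕ} (i : Fin n) : FreeAlgebra ℂ (AGen n) := FreeAlgebra.ι ℂ (AGen.X i)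
def aXi {n : ℕ} (i : Fin n) : FreeAlgebra ℂ (AGen n) := FreeAlgebra.ι ℂ (AGen.Xi i)

/-- the defining relations of the affine Hecke algebra `H^A_n`
(here `T_k` for `k : Fin (n-1)` is the paper's `T_{k+1}`, and it exchanges the
variables `X_k` and `X_{k+1}` in the 0-indexed notation). -/
inductive HARel (p₁ : ℂ) (n : ℕ) :
    FreeAlgebra ℂ (AGen n) → FreeAlgebra ℂ (AGen n) → Prop
  | Xcomm (i j : Fin n) : HARel p₁ n (aX i * aX j) (aX j * aX i)
  | Xinv_right (i : Fin n) : HARel p₁ n (aX i * aXi i) 1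
  | Xinv_left (i : Fin n) : HARel p₁ n (aXi i * aX i) 1
  | braid (i j : Fin (n - 1)) (hj : (j : ℕ) = (i : ℕ) + 1) :
      HARel p₁ n (aT i * aT j * aT i) (aT j * aT i * aT j)
  | Tcomm (i j : Fin (n - 1)) (h : (i : ℕ) + 1 < (j : ℕ) ∨ (j : ℕ) + 1 < (i : ℕ)) :
      HARel p₁ n (aT i * aT j) (aT j * aT i)
  | quad (i : Fin (n - 1)) :
      HARel p₁ n ((aT i - algebraMap ℂ _ p₁) * (aT i + algebraMap ℂ _ p₁⁻¹)) 0
  | TXT (k : Fin (n - 1)) (a b : Fin n) (ha : (a : ℕ) = (k : ℕ)) (hb : (b : ℕ) = (k : ℕ) + 1) :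
      HARel p₁ n (aT k * aX a * aT k) (aX b)
  | TXcomm (k : Fin (n - 1)) (a : Fin n) (h : (a : ℕ) ≠ (k : ℕ) ∧ (a : ℕ) ≠ (k : ℕ) + 1) :
      HARel p₁ n (aT k * aX a) (aX a * aT k)

/-- the affine Hecke algebra of type `A` of degree `n`. -/
abbrev HA (p₁ : ℂ) (n : ℕ) : Type := RingQuot (HARel p₁ n)

def TgA (p₁ : ℂ) {n : ℕ} (i : Fin (n - 1)) : HA p₁ n :=
  RingQuot.mkAlgHom ℂ (HARel p₁ n) (aT i)
def XgA (p₁ : ℂ) {n : ℕ} (i : Fin n) : HA p₁ n :=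
  RingQuot.mkAlgHom ℂ (HARel p₁ n) (aX i)
def XigA (p₁ : ℂ) {n : ℕ} (i : Fin n) : HA p₁ n :=
  RingQuot.mkAlgHom ℂ (HARel p₁ n) (aXi i)

/-- a finite-dimensional representation of `H^A_n`. -/
structure ARep (p₁ : ℂ) (n : ℕ) where
  carrier : Type
  [ag : AddCommGroup carrier]
  [mo : Module ℂ carrier]
  [fd : FiniteDimensional ℂ carrier]
  rho : HA p₁ n →ₐ[ℂ] Module.End ℂ carrier

attribute [instance] ARep.ag ARep.mo ARep.fd

/-- the representation is nonzero and has no proper invariant subspace. -/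
def IsIrredA {p₁ : ℂ} {n : ℕ} (M : ARep p₁ n) : Prop :=
  (∃ v : M.carrier, v ≠ 0) ∧
  ∀ W : Submodule ℂ M.carrier,
    (∀ x : HA p₁ n, ∀ w ∈ W, M.rho x w ∈ W) → W = ⊥ ∨ W = ⊤

/-- all eigenvalues of all the `X_i` belong to `S`. -/
def OfTypeA {p₁ : ℂ} {n : ℕ} (M : ARep p₁ n) (S : Set ℂ) : Prop :=
  ∀ (i : Fin n) (c : ℂ) (v : M.carrier), v ≠ 0 → M.rho (XgA p₁ i) v = c • v → c ∈ S

/-- `S` is invariant under the `ℤ`-action `a ↦ a p₁^{2k}`. -/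
def ZInv (p₁ : ℂ) (S : Set ℂ) : Prop :=
  ∀ a ∈ S, a * p₁ ^ 2 ∈ S ∧ a * (p₁ ^ 2)⁻¹ ∈ S

/-- `em` is the canonical embedding `H^A_m → H^A_{m+k}` (on the first factor),
`m + k = nn`. -/
def IsEmb1 (p₁ : ℂ) (m nn : ℕ) (em : HA p₁ m →ₐ[ℂ] HA p₁ nn) : Prop :=
  (∀ (i : Fin (m - 1)) (i' : Fin (nn - 1)), (i' : ℕ) = (i : ℕ) →
    em (TgA p₁ i) = TgA p₁ i') ∧
  (∀ (j : Fin m) (j' : Fin nn), (j' : ℕ) = (j : ℕ) → em (XgA p₁ j) = XgA p₁ j') ∧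
  (∀ (j : Fin m) (j' : Fin nn), (j' : ℕ) = (j : ℕ) → em (XigA p₁ j) = XigA p₁ j')

/-- `em` is the canonical embedding `H^A_k → H^A_{m+k}` (on the second factor,
shifting indices by `m`), `m + k = nn`. -/
def IsEmb2 (p₁ : ℂ) (m k nn : ℕ) (em : HA p₁ k →ₐ[ℂ] HA p₁ nn) : Prop :=
  (∀ (i : Fin (k - 1)) (i' : Fin (nn - 1)), (i' : ℕ) = m + (i : ℕ) →
    em (TgA p₁ i) = TgA p₁ i') ∧
  (∀ (j : Fin k) (j' : Fin nn), (j' : ℕ) = m + (j : ℕ) → em (XgA p₁ j) = XgA p₁ j') ∧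
  (∀ (j : Fin k) (j' : Fin nn), (j' : ℕ) = m + (j : ℕ) → em (XigA p₁ j) = XigA p₁ j')

/-- `V` is (a module isomorphic to) the induced module
`Ind_{H^A_m ⊗ H^A_k}^{H^A_{nn}} (M ⊗ N)`, characterized by its universal property. -/
def IsInducedA {p₁ : ℂ} {m k nn : ℕ}
    (em₁ : HA p₁ m →ₐ[ℂ] HA p₁ nn) (em₂ : HA p₁ k →ₐ[ℂ] HA p₁ nn)
    (M : ARep p₁ m) (N : ARep p₁ k) (V : ARep p₁ nn) : Prop :=
  ∃ φ : M.carrier →ₗ[ℂ] N.carrier →ₗ[ℂ] V.carrier,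
    (∀ (x : HA p₁ m) (u : M.carrier) (v : N.carrier),
      φ (M.rho x u) v = V.rho (em₁ x) (φ u v)) ∧
    (∀ (y : HA p₁ k) (u : M.carrier) (v : N.carrier),
      φ u (N.rho y v) = V.rho (em₂ y) (φ u v)) ∧
    (∀ W : Submodule ℂ V.carrier,
      (∀ z : HA p₁ nn, ∀ w ∈ W, V.rho z w ∈ W) →
      (∀ u v, φ u v ∈ W) → W = ⊤) ∧
    (∀ (Z : ARep p₁ nn) (ψ : M.carrier →ₗ[ℂ] N.carrier →ₗ[ℂ] Z.carrier),
      (∀ (x : HA p₁ m) (u : M.carrier) (v : N.carrier),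
        ψ (M.rho x u) v = Z.rho (em₁ x) (ψ u v)) →
      (∀ (y : HA p₁ k) (u : M.carrier) (v : N.carrier),
        ψ u (N.rho y v) = Z.rho (em₂ y) (ψ u v)) →
      ∃! g : V.carrier →ₗ[ℂ] Z.carrier,
        (∀ (z : HA p₁ nn) (w : V.carrier), g (V.rho z w) = Z.rho z (g w)) ∧
        ∀ u v, g (φ u v) = ψ u v)

/-!
Call `x ∈ I` and `y ∈ J` linked if `x = y`, `x = p² y` or `y = p² x`; the hypotheses on `I` and `J`
exclude this. On a vector with unlinked weights `x`, `y` at the neighbouring positions `i`, `i + 1`,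
the operator `T i - (p - p⁻¹) y / (y - x)` exchanges the two weights, and it is invertible.

Hence the module induced from `M ⊗ N` is a sum of copies of `M ⊗ N`, one for each shuffle of the
positions carrying `M` with those carrying `N`. Given a nonzero stable subspace, these intertwiners
move the weights of some weight vector in it that lie in `I` in front of those in `J`. In the
induced module only the copy of the trivial shuffle has such weights; this copy is `M ⊗ N`, which is
irreducible and generates, so the stable subspace is everything.

Conversely, a weight vector sorted in this way in an irreducible `L` shows that, for some `m`, the
sum of the generalized weight spaces whose first `m` weights lie in `I` and whose other weights lie
in `J` is nonzero. This sum is stable under `H_m ⊗ H_{n-m}` and so contains the image of a nonzero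
homomorphism from an irreducible `M ⊗ N`. The resulting map from the induced module to `L` is a
nonzero map between irreducibles, hence an isomorphism.
-/

section HeckeFamily

variable {K R R' : Type*} [Field K] [Ring R] [Algebra K R] [Ring R'] [Algebra K R'] {p : K}
  {n m k : ℕ} {D : Set ℕ} {T X : ℕ → R}

/-- Elements `T i`, `X i` of an algebra satisfying the relations of the affine Hecke algebra of
degree `n` that involve only the simple reflections `i ∈ D`. Indices start at `0`, and `T i` is
constrained only when `i ∈ D` and `i + 1 < n`. With `D = Set.univ` this is a representation of the
whole algebra, with `D = leviIndices m` one of its subalgebra `H^A_m ⊗ H^A_{n-m}`. -/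
structure IsHeckeFamily (p : K) (n : ℕ) (D : Set ℕ) (T X : ℕ → R) : Prop where
  X_comm : ∀ i < n, ∀ j < n, Commute (X i) (X j)
  X_isUnit : ∀ i < n, IsUnit (X i)
  T_mul_self : ∀ i ∈ D, i + 1 < n → T i * T i = (p - p⁻¹) • T i + 1
  braid : ∀ i ∈ D, i + 1 ∈ D → i + 2 < n → T i * T (i + 1) * T i = T (i + 1) * T i * T (i + 1)
  T_comm : ∀ i ∈ D, ∀ j ∈ D, i + 1 < j → j + 1 < n → Commute (T i) (T j)
  TXT : ∀ i ∈ D, i + 1 < n → T i * X i * T i = X (i + 1)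
  T_comm_X : ∀ i ∈ D, ∀ a < n, i + 1 < n → a ≠ i → a ≠ i + 1 → Commute (T i) (X a)

/-- The simple reflections generating the parabolic subgroup `S_m × S_{n-m}` of `S_n`: all of them
except the one exchanging the (zero-based) positions `m - 1` and `m`. -/
def leviIndices (m : ℕ) : Set ℕ := {i | i + 1 ≠ m}

/-- The concatenation of the first `m` terms of `f` with the sequence `g`. -/
def glue {A : Type*} (m : ℕ) (f g : ℕ → A) (i : ℕ) : A := if i < m then f i else g (i - m)

theorem glue_of_lt {A : Type*} (f g : ℕ → A) {i : ℕ} (hi : i < m) : glue m f g i = f i :=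
  if_pos hi

theorem glue_add {A : Type*} (f g : ℕ → A) (i : ℕ) : glue m f g (m + i) = g i := by
  simp [glue]

theorem lt_or_exists_add_of_mem_leviIndices {i : ℕ} (hi : i ∈ leviIndices m) :
    i + 1 < m ∨ ∃ j, i = m + j := by
  rcases lt_or_ge i m with h | h
  · exact Or.inl (lt_of_le_of_ne h hi)
  · exact Or.inr (Nat.exists_eq_add_of_le h)

namespace IsHeckeFamily

theorem T_mul_X (H : IsHeckeFamily p n D T X) {i : ℕ} (hD : i ∈ D) (hi : i + 1 < n) :
    T i * X i = X (i + 1) * T i - (p - p⁻¹) • X (i + 1) := by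
  have h : X (i + 1) * T i = T i * X i * (T i * T i) := by
    rw [← H.TXT i hD hi]; noncomm_ring
  rw [h, H.T_mul_self i hD hi, mul_add, mul_one, mul_smul_comm, H.TXT i hD hi, add_sub_cancel_left]

theorem T_mul_X_succ (H : IsHeckeFamily p n D T X) {i : ℕ} (hD : i ∈ D) (hi : i + 1 < n) :
    T i * X (i + 1) = X i * T i + (p - p⁻¹) • X (i + 1) := by
  have h : T i * X (i + 1) = T i * T i * (X i * T i) := by
    rw [← H.TXT i hD hi]; noncomm_ring
  rw [h, H.T_mul_self i hD hi, add_mul, one_mul, smul_mul_assoc, ← mul_assoc, H.TXT i hD hi,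
    add_comm]

theorem TXT_of_T_mul_X {i : ℕ} (h : T i * X i = X (i + 1) * T i - (p - p⁻¹) • X (i + 1))
    (hT : T i * T i = (p - p⁻¹) • T i + 1) : T i * X i * T i = X (i + 1) := by
  rw [h, sub_mul, mul_assoc, hT, mul_add, mul_one, mul_smul_comm, smul_mul_assoc,
    add_sub_cancel_left]

theorem map (H : IsHeckeFamily p n D T X) (φ : R →ₐ[K] R') :
    IsHeckeFamily p n D (φ ∘ T) (φ ∘ X) where
  X_comm i hi j hj := (H.X_comm i hi j hj).map φ
  X_isUnit i hi := (H.X_isUnit i hi).map φ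
  T_mul_self i hD hi := by simpa using congrArg φ (H.T_mul_self i hD hi)
  braid i hD hD' hi := by simpa using congrArg φ (H.braid i hD hD' hi)
  T_comm i hD j hD' hij hj := (H.T_comm i hD j hD' hij hj).map φ
  TXT i hD hi := by simpa using congrArg φ (H.TXT i hD hi)
  T_comm_X i hD a ha hi h h' := (H.T_comm_X i hD a ha hi h h').map φ

theorem shift (H : IsHeckeFamily p (m + k) Set.univ T X) :
    IsHeckeFamily p k Set.univ (fun i => T (m + i)) (fun i => X (m + i)) where
  X_comm i hi j hj := H.X_comm _ (by lia) _ (by lia)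
  X_isUnit i hi := H.X_isUnit _ (by lia)
  T_mul_self i _ hi := H.T_mul_self _ trivial (by lia)
  braid i _ _ hi := H.braid (m + i) trivial trivial (by lia)
  T_comm i _ j _ hij hj := H.T_comm _ trivial _ trivial (by lia) (by lia)
  TXT i _ hi := H.TXT _ trivial (by lia)
  T_comm_X i _ a ha hi h h' := H.T_comm_X _ trivial _ (by lia) (by lia) (by lia) (by lia)

theorem restrict (H : IsHeckeFamily p (m + k) Set.univ T X) :
    IsHeckeFamily p m Set.univ T X where
  X_comm i hi j hj := H.X_comm i (by lia) j (by lia)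
  X_isUnit i hi := H.X_isUnit i (by lia)
  T_mul_self i _ hi := H.T_mul_self i trivial (by lia)
  braid i _ _ hi := H.braid i trivial trivial (by lia)
  T_comm i _ j _ hij hj := H.T_comm i trivial j trivial hij (by lia)
  TXT i _ hi := H.TXT i trivial (by lia)
  T_comm_X i _ a ha hi h h' := H.T_comm_X i trivial a (by lia) (by lia) h h'

theorem glue {T' X' : ℕ → R} (H : IsHeckeFamily p m Set.univ T X)
    (H' : IsHeckeFamily p k Set.univ T' X') (hTT : ∀ i j, Commute (T i) (T' j))
    (hTX : ∀ i j, Commute (T i) (X' j)) (hXT : ∀ i j, Commute (X i) (T' j))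
    (hXX : ∀ i j, Commute (X i) (X' j)) :
    IsHeckeFamily p (m + k) (leviIndices m) (glue m T T') (glue m X X') where
  X_comm i hi j hj := by
    simp only [_root_.glue]
    split_ifs with h h'
    exacts [H.X_comm i h j h', hXX _ _, (hXX _ _).symm, H'.X_comm _ (by lia) _ (by lia)]
  X_isUnit i hi := by
    simp only [_root_.glue]
    split_ifs with h
    exacts [H.X_isUnit i h, H'.X_isUnit _ (by lia)]
  T_mul_self i hD hi := by
    obtain h | ⟨j, rfl⟩ := lt_or_exists_add_of_mem_leviIndices hD
    · rw [glue_of_lt _ _ (by lia)]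
      exact H.T_mul_self i trivial h
    · rw [glue_add]
      exact H'.T_mul_self j trivial (by lia)
  braid i hD hD' hi := by
    obtain h | ⟨j, rfl⟩ := lt_or_exists_add_of_mem_leviIndices hD
    · have h' : i + 1 + 1 ≠ m := hD'
      rw [glue_of_lt _ _ (by lia), glue_of_lt _ _ (by lia)]
      exact H.braid i trivial trivial (by lia)
    · rw [glue_add, add_assoc, glue_add]
      exact H'.braid j trivial trivial (by lia)
  T_comm i hD j hD' hij hj := by
    simp only [_root_.glue]
    obtain h | ⟨i, rfl⟩ := lt_or_exists_add_of_mem_leviIndices hD <;>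
    obtain h' | ⟨j, rfl⟩ := lt_or_exists_add_of_mem_leviIndices hD'
    · rw [if_pos (by lia), if_pos (by lia)]
      exact H.T_comm i trivial j trivial hij h'
    · rw [if_pos (by lia), if_neg (by lia)]
      exact hTT _ _
    · lia
    · rw [if_neg (by lia), if_neg (by lia)]
      exact H'.T_comm _ trivial _ trivial (by lia) (by lia)
  TXT i hD hi := by
    obtain h | ⟨j, rfl⟩ := lt_or_exists_add_of_mem_leviIndices hD
    · rw [glue_of_lt _ _ (by lia), glue_of_lt _ _ (by lia), glue_of_lt _ _ h]
      exact H.TXT i trivial h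
    · rw [glue_add, glue_add, add_assoc, glue_add]
      exact H'.TXT j trivial (by lia)
  T_comm_X i hD a ha hi h h' := by
    simp only [_root_.glue]
    obtain hm | ⟨i, rfl⟩ := lt_or_exists_add_of_mem_leviIndices hD
    · rw [if_pos (by lia)]
      split_ifs with ham
      exacts [H.T_comm_X i trivial a ham hm h h', hTX _ _]
    · rw [if_neg (by lia)]
      split_ifs with ham
      exacts [(hXT _ _).symm,
        H'.T_comm_X _ trivial _ (by lia) (by lia) (by lia) (by lia)]

end IsHeckeFamily

end HeckeFamily

section Exchange

variable {K R : Type*} [Field K] [Ring R] [Algebra K R] {p q : K} {x y z t x₁ x₂ α₁ α₂ : R}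

/-- The coefficient `α = q y / (y - x)` for which `T - α` exchanges two commuting weights `x` and
`y`. It is meaningful only when `y - x` is a unit. -/
def exchangeCoeff (q : K) (x y : R) : R := q • (y * Ring.inverse (y - x))

theorem commute_ringInverse_right (h : Commute z x) (hx : IsUnit x) :
    Commute z (Ring.inverse x) := by
  obtain ⟨u, rfl⟩ := hx
  rw [Ring.inverse_unit]
  exact h.units_inv_right

theorem commute_exchangeCoeff (hx : Commute z x) (hy : Commute z y) (h : IsUnit (y - x)) :
    Commute z (exchangeCoeff q x y) :=
  (hy.mul_right (commute_ringInverse_right (hy.sub_right hx) h)).smul_right q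

theorem commute_smul_one_sub (p : K) (h : Commute x y) : Commute x (p • 1 - y) :=
  ((Commute.one_right x).smul_right p).sub_right h

theorem exchangeCoeff_mul_sub (q : K) (h : IsUnit (y - x)) :
    exchangeCoeff q x y * (y - x) = q • y := by
  rw [exchangeCoeff, smul_mul_assoc, mul_assoc, Ring.inverse_mul_cancel _ h, mul_one]

theorem exchangeCoeff_mul (hxy : Commute x y) (h : IsUnit (y - x)) :
    exchangeCoeff q x y * x = y * exchangeCoeff q x y - q • y := by
  have hy : Commute y (exchangeCoeff q x y) := commute_exchangeCoeff hxy.symm (Commute.refl y) h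
  rw [hy.eq, ← exchangeCoeff_mul_sub q h]
  noncomm_ring

theorem exchangeCoeff_swap (q : K) (h : IsUnit (y - x)) :
    exchangeCoeff q y x = q • 1 - exchangeCoeff q x y := by
  have h' : IsUnit (x - y) := by simpa using h.neg
  refine h'.mul_right_cancel ?_
  linear_combination (norm := noncomm_ring)
    exchangeCoeff_mul_sub q h' - exchangeCoeff_mul_sub q h

theorem isUnit_sub_exchangeCoeff (hp : p ≠ 0) (h : IsUnit (y - x))
    (h' : IsUnit (y - p ^ 2 • x)) : IsUnit (p • 1 - exchangeCoeff (p - p⁻¹) x y) := by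
  have key : (p • 1 - exchangeCoeff (p - p⁻¹) x y) * (y - x) = p⁻¹ • (y - p ^ 2 • x) := by
    rw [sub_mul, exchangeCoeff_mul_sub _ h, smul_mul_assoc, one_mul]
    match_scalars <;> field_simp
    ring
  have hu : IsUnit (p⁻¹ • (y - p ^ 2 • x)) := h'.smul (Units.mk0 p⁻¹ (inv_ne_zero hp))
  rw [← key] at hu
  obtain ⟨u, hu⟩ := hu
  obtain ⟨v, hv⟩ := h
  exact ⟨u * v⁻¹, by rw [Units.val_mul, hu, ← hv, Units.mul_inv_cancel_right]⟩

theorem sub_mul_sub_exchangeCoeff (hp : p ≠ 0) (α : R) :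
    (p • 1 - ((p - p⁻¹) • 1 - α)) * (p • 1 - α) = 1 + (p - p⁻¹) • α - α * α := by
  have h : p • 1 - ((p - p⁻¹) • 1 - α) = p⁻¹ • 1 + α := by module
  have h₁ : p⁻¹ • p • (1 : R) = 1 := inv_smul_smul₀ hp 1
  rw [h, add_mul, mul_sub, mul_sub, smul_mul_assoc, one_mul, smul_mul_assoc, one_mul, h₁,
    mul_smul_comm, mul_one]
  module

/-- The relations between a Hecke generator `t` and the coefficients `α₁`, `α₂` exchanging a third
weight with the two weights that `t` permutes. -/
structure IsExchange (q : K) (t α₁ α₂ : R) : Prop where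
  mul_self : t * t = q • t + 1
  comm : Commute α₁ α₂
  snd_mul : α₂ * t = t * α₁ + α₁ * (α₂ - q • 1)
  fst_mul : α₁ * t = t * α₂ - α₁ * (α₂ - q • 1)

theorem isExchange_exchangeCoeff (h₁ : t * x₁ = x₂ * t - q • x₂) (h₂ : t * x₂ = x₁ * t + q • x₂)
    (ht : t * t = q • t + 1) (hx : Commute x₁ x₂) (hz₁ : Commute x₁ z) (hz₂ : Commute x₂ z)
    (hzt : Commute z t) (hu₁ : IsUnit (z - x₁)) (hu₂ : IsUnit (z - x₂)) :
    IsExchange q t (exchangeCoeff q x₁ z) (exchangeCoeff q x₂ z) := by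
  set α₁ := exchangeCoeff q x₁ z
  set α₂ := exchangeCoeff q x₂ z
  have e₁ : α₁ * (z - x₁) = q • z := exchangeCoeff_mul_sub q hu₁
  have e₂ : α₂ * (z - x₂) = q • z := exchangeCoeff_mul_sub q hu₂
  have c (w : R) (hw₁ : Commute w x₁) (hwz : Commute w z) : Commute w α₁ :=
    commute_exchangeCoeff hw₁ hwz hu₁
  have comm : Commute α₁ α₂ := commute_exchangeCoeff (c x₂ hx.symm hz₂).symm
    (c z hz₁.symm (Commute.refl z)).symm hu₂
  have h₁' : t * (z - x₁) = (z - x₂) * t + q • x₂ := by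
    rw [mul_sub, h₁, ← hzt.eq]; noncomm_ring
  have h₂' : t * (z - x₂) = (z - x₁) * t - q • x₂ := by
    rw [mul_sub, h₂, ← hzt.eq]; noncomm_ring
  refine ⟨ht, comm, hu₁.mul_right_cancel ?_, hu₂.mul_right_cancel ?_⟩
  · linear_combination (norm := (noncomm_ring; module))
      α₂ * h₁' + e₂ * t - t * e₁ - (α₂ - q • 1) * e₁ - comm.eq * (z - x₁) + q • hzt.eq - q • e₂
  · linear_combination (norm := noncomm_ring)
      α₁ * h₂' + e₁ * t - t * e₂ + α₁ * e₂ + q • hzt.eq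

namespace IsExchange

theorem flip (H : IsExchange q t α₁ α₂) : IsExchange q t (q • 1 - α₂) (q • 1 - α₁) where
  mul_self := H.mul_self
  comm := by
    rw [Commute, SemiconjBy]
    linear_combination (norm := (noncomm_ring; module)) -H.comm.eq
  snd_mul := by
    linear_combination (norm := noncomm_ring) -H.fst_mul + H.comm.eq
  fst_mul := by
    linear_combination (norm := noncomm_ring) -H.snd_mul - H.comm.eq

theorem conj_snd (H : IsExchange q t α₁ α₂) :
    t * α₂ * t = α₂ * t * α₂ + α₁ * (1 + q • α₂ - α₂ * α₂) := by
  linear_combination (norm := noncomm_ring) t * H.snd_mul + H.mul_self * α₁ - H.snd_mul * α₂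

theorem commute_mul (H : IsExchange q t α₁ α₂) (p : K) :
    Commute t ((p • 1 - α₁) * (p • 1 - α₂)) := by
  rw [Commute, SemiconjBy]
  linear_combination (norm := (noncomm_ring; module)) p • (H.snd_mul + H.fst_mul) -
    α₁ * H.snd_mul - H.fst_mul * α₁ + t * H.comm.eq - α₁ * H.comm.eq

end IsExchange

end Exchange

section Link

variable {K E V : Type*} [Field K] [AddCommGroup E] [Module K E] [AddCommGroup V] [Module K V]
  {p : K} {S S' X₁ X₂ Y : Module.End K V} {t x y α β α₁ α₂ : Module.End K E}
  {θ θ' θ₀ θ₁ θ₂ θ₃ : E →ₗ[K] V}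

/-- `S` carries the embedded copy `θ` of `E` to the span of the copies `θ` and `θ'`, the way a Hecke
generator acts on two components of an induced module exchanged by a simple reflection. -/
def IsLink (p : K) (S : Module.End K V) (α : Module.End K E) (θ θ' : E →ₗ[K] V) : Prop :=
  ∀ e, S (θ e) = θ (α e) + θ' ((p • 1 - α) e)

namespace IsLink

theorem symm (hp : p ≠ 0) (hS : S * S = (p - p⁻¹) • S + 1) (hα : IsUnit (p • 1 - α))
    (h : IsLink p S α θ θ') : IsLink p S ((p - p⁻¹) • 1 - α) θ' θ := by
  intro e
  obtain ⟨e, rfl⟩ := ((Module.End.isUnit_iff _).1 hα).2 e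
  have hα' := LinearMap.congr_fun (sub_mul_sub_exchangeCoeff hp α) e
  have hSS := LinearMap.congr_fun hS (θ e)
  have h₂ : S (θ' ((p • 1 - α) e)) = S (S (θ e)) - S (θ (α e)) := by rw [h e, map_add]; abel
  rw [Module.End.mul_apply] at hSS hα'
  rw [hα', h₂, hSS, h (α e)]
  simp only [LinearMap.add_apply, LinearMap.sub_apply, LinearMap.smul_apply, Module.End.one_apply,
    Module.End.mul_apply, h e, map_add, map_sub, map_smul]
  module

theorem mul_self (hp : p ≠ 0) (h : IsLink p S α θ θ')
    (h' : IsLink p S ((p - p⁻¹) • 1 - α) θ' θ) (e : E) :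
    S (S (θ e)) = (p - p⁻¹) • S (θ e) + θ e := by
  have hα := LinearMap.congr_fun (sub_mul_sub_exchangeCoeff hp α) e
  rw [Module.End.mul_apply] at hα
  rw [h e, map_add, h, h', hα]
  simp only [LinearMap.add_apply, LinearMap.sub_apply, LinearMap.smul_apply, Module.End.one_apply,
    Module.End.mul_apply, map_add, map_sub, map_smul]
  module

theorem apply_weight (h : IsLink p S (exchangeCoeff (p - p⁻¹) x y) θ θ') (hxy : Commute x y)
    (hu : IsUnit (y - x)) (h₁ : ∀ e, X₁ (θ e) = θ (x e)) (h₂ : ∀ e, X₂ (θ e) = θ (y e))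
    (h₂' : ∀ e, X₂ (θ' e) = θ' (x e)) (e : E) :
    S (X₁ (θ e)) = X₂ (S (θ e)) - (p - p⁻¹) • X₂ (θ e) := by
  have hα := LinearMap.congr_fun (exchangeCoeff_mul (q := p - p⁻¹) hxy hu) e
  have hx : Commute x (p • 1 - exchangeCoeff (p - p⁻¹) x y) :=
    commute_smul_one_sub p (commute_exchangeCoeff (Commute.refl x) hxy hu)
  have hx' := LinearMap.congr_fun hx.eq e
  simp only [Module.End.mul_apply, LinearMap.sub_apply (y * _),
    LinearMap.smul_apply] at hα hx'
  rw [h₁, h, h, map_add, h₂, h₂, h₂', ← hx', hα, map_sub, map_smul]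
  abel

theorem apply_sub (h : IsLink p S α θ θ') (e : E) :
    θ' ((p • 1 - α) e) = S (θ e) - θ (α e) :=
  eq_sub_of_add_eq' (h e).symm

theorem apply_of_commute (h : IsLink p S α θ θ') (hα : IsUnit (p • 1 - α)) (hSY : Commute S Y)
    (hy : Commute y α) (hθ : ∀ e, Y (θ e) = θ (y e)) (e : E) : Y (θ' e) = θ' (y e) := by
  obtain ⟨e, rfl⟩ := ((Module.End.isUnit_iff _).1 hα).2 e
  have hy' : Commute y (p • 1 - α) := commute_smul_one_sub p hy
  have hye : y (α e) = α (y e) := LinearMap.congr_fun hy.eq e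
  have hye' : y ((p • 1 - α) e) = (p • 1 - α) (y e) := LinearMap.congr_fun hy'.eq e
  have hYS : Y (S (θ e)) = S (Y (θ e)) := (LinearMap.congr_fun hSY.eq (θ e)).symm
  rw [hye', h.apply_sub, h.apply_sub, map_sub, hYS, hθ, hθ, hye]

theorem apply_weight_swap (h : IsLink p S (exchangeCoeff (p - p⁻¹) x y) θ θ') (hxy : Commute x y)
    (hu : IsUnit (y - x)) (hα : IsUnit (p • 1 - exchangeCoeff (p - p⁻¹) x y))
    (hS₁ : S * X₁ = X₂ * S - (p - p⁻¹) • X₂) (hS₂ : S * X₂ = X₁ * S + (p - p⁻¹) • X₂)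
    (h₁ : ∀ e, X₁ (θ e) = θ (x e)) (h₂ : ∀ e, X₂ (θ e) = θ (y e)) (e : E) :
    X₁ (θ' e) = θ' (y e) ∧ X₂ (θ' e) = θ' (x e) := by
  obtain ⟨e, rfl⟩ := ((Module.End.isUnit_iff _).1 hα).2 e
  set α := exchangeCoeff (p - p⁻¹) x y
  have hαx : Commute x α := commute_exchangeCoeff (Commute.refl x) hxy hu
  have hαy : Commute y α := commute_exchangeCoeff hxy.symm (Commute.refl y) hu
  have hx : x ((p • 1 - α) e) = (p • 1 - α) (x e) :=
    LinearMap.congr_fun (commute_smul_one_sub p hαx).eq e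
  have hy : y ((p • 1 - α) e) = (p • 1 - α) (y e) :=
    LinearMap.congr_fun (commute_smul_one_sub p hαy).eq e
  have hαe : α (x e) = y (α e) - (p - p⁻¹) • y e :=
    LinearMap.congr_fun (exchangeCoeff_mul (q := p - p⁻¹) hxy hu) e
  have hxe : x (α e) = α (x e) := LinearMap.congr_fun hαx.eq e
  have hye : y (α e) = α (y e) := LinearMap.congr_fun hαy.eq e
  have hSX₁ : S (X₁ (θ e)) = X₂ (S (θ e)) - (p - p⁻¹) • X₂ (θ e) := LinearMap.congr_fun hS₁ (θ e)
  have hSX₂ : S (X₂ (θ e)) = X₁ (S (θ e)) + (p - p⁻¹) • X₂ (θ e) := LinearMap.congr_fun hS₂ (θ e)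
  constructor
  · rw [hy, h.apply_sub, h.apply_sub, map_sub, eq_sub_of_add_eq hSX₂.symm, h₁, h₂, hxe, hαe, ← hye,
      map_sub, map_smul]
    abel
  · rw [hx, h.apply_sub, h.apply_sub, map_sub, eq_add_of_sub_eq hSX₁.symm, h₁, h₂, h₂, hαe,
      map_sub, map_smul]
    abel

theorem square (h₀₁ : IsLink p S α θ₀ θ₁) (h₀₂ : IsLink p S' β θ₀ θ₂) (h₂₃ : IsLink p S α θ₂ θ₃)
    (hSS' : Commute S S') (hαβ : Commute α β) (hα : IsUnit (p • 1 - α)) :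
    IsLink p S' β θ₁ θ₃ := by
  intro e
  obtain ⟨e, rfl⟩ := ((Module.End.isUnit_iff _).1 hα).2 e
  have hS : S' (S (θ₀ e)) = S (S' (θ₀ e)) := (LinearMap.congr_fun hSS'.eq (θ₀ e)).symm
  have hβ : β ((p • 1 - α) e) = (p • 1 - α) (β e) :=
    LinearMap.congr_fun (commute_smul_one_sub p hαβ.symm).eq e
  have hβ' : (p • 1 - β) ((p • 1 - α) e) = (p • 1 - α) ((p • 1 - β) e) :=
    LinearMap.congr_fun (commute_smul_one_sub p (commute_smul_one_sub p hαβ).symm).eq e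
  have hβe : β (α e) = α (β e) := (LinearMap.congr_fun hαβ.eq e).symm
  have hβe' : (p • 1 - β) (α e) = α ((p • 1 - β) e) :=
    (LinearMap.congr_fun (commute_smul_one_sub p hαβ).eq e).symm
  rw [hβ, hβ', h₀₁.apply_sub, h₀₁.apply_sub, h₂₃.apply_sub, map_sub, hS, h₀₂ e, h₀₂ (α e), map_add,
    hβe, hβe']
  abel

end IsLink

theorem braid_defect (hp : p ≠ 0) (H : IsExchange (p - p⁻¹) t α₁ α₂)
    (h₀ : ∀ e, S (θ₀ e) = θ₀ (t e)) (h₀₁ : IsLink p S' α₂ θ₀ θ₁) (h₁₂ : IsLink p S α₁ θ₁ θ₂)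
    (h₁₀ : IsLink p S' ((p - p⁻¹) • 1 - α₂) θ₁ θ₀) (e : E) :
    S (S' (S (θ₀ e))) - S' (S (S' (θ₀ e))) =
      θ₂ (t (((p • 1 - α₁) * (p • 1 - α₂)) e)) - S' (θ₂ (((p • 1 - α₁) * (p • 1 - α₂)) e)) := by
  have left_side : S (S' (S (θ₀ e))) = θ₀ ((t * α₂ * t) e) + θ₁ ((α₁ * (p • 1 - α₂) * t) e) +
      θ₂ (((p • 1 - α₁) * (p • 1 - α₂) * t) e) := by
    rw [h₀, h₀₁, map_add, h₀, h₁₂, ← add_assoc]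
    rfl
  have right_side : S' (S (S' (θ₀ e))) =
      θ₀ ((α₂ * t * α₂ + (p • 1 - ((p - p⁻¹) • 1 - α₂)) * α₁ * (p • 1 - α₂)) e) +
      θ₁ (((p • 1 - α₂) * t * α₂ + ((p - p⁻¹) • 1 - α₂) * α₁ * (p • 1 - α₂)) e) +
      S' (θ₂ (((p • 1 - α₁) * (p • 1 - α₂)) e)) := by
    rw [h₀₁, map_add, h₀, h₁₂, map_add, map_add, h₀₁, h₁₀, LinearMap.add_apply, map_add,
      LinearMap.add_apply, map_add]
    simp only [Module.End.mul_apply]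
    abel
  have coeff₀ : t * α₂ * t =
      α₂ * t * α₂ + (p • 1 - ((p - p⁻¹) • 1 - α₂)) * α₁ * (p • 1 - α₂) := by
    have comm' : Commute α₁ (p • 1 - ((p - p⁻¹) • 1 - α₂)) := by
      rw [Commute, SemiconjBy]
      linear_combination (norm := noncomm_ring) H.comm.eq
    rw [H.conj_snd, ← sub_mul_sub_exchangeCoeff hp, ← comm'.eq, mul_assoc α₁]
  have coeff₁ : α₁ * (p • 1 - α₂) * t =
      (p • 1 - α₂) * t * α₂ + ((p - p⁻¹) • 1 - α₂) * α₁ * (p • 1 - α₂) := by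
    linear_combination (norm := (noncomm_ring; module))
      (p • 1 - α₂) * H.fst_mul - H.comm.eq * t + ((p - p⁻¹) - p) • H.comm.eq
  rw [left_side, right_side, coeff₀, coeff₁, (H.commute_mul p).symm.eq, Module.End.mul_apply t]
  abel

theorem apply_link_end (hp : p ≠ 0) (H : IsExchange (p - p⁻¹) t α₁ α₂)
    (hu : IsUnit ((p • 1 - α₁) * (p • 1 - α₂)))
    (h₀ : ∀ e, S (θ₀ e) = θ₀ (t e)) (h₀₁ : IsLink p S' α₂ θ₀ θ₁) (h₁₂ : IsLink p S α₁ θ₁ θ₂)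
    (h₁₀ : IsLink p S' ((p - p⁻¹) • 1 - α₂) θ₁ θ₀) (hSS' : S * S' * S = S' * S * S') (e : E) :
    S' (θ₂ e) = θ₂ (t e) := by
  obtain ⟨e, rfl⟩ := ((Module.End.isUnit_iff _).1 hu).2 e
  have h := braid_defect hp H h₀ h₀₁ h₁₂ h₁₀ e
  have hb : S (S' (S (θ₀ e))) = S' (S (S' (θ₀ e))) := LinearMap.congr_fun hSS' (θ₀ e)
  rw [hb, sub_self] at h
  exact (sub_eq_zero.1 h.symm).symm

theorem braid_apply_link_start (hp : p ≠ 0) (H : IsExchange (p - p⁻¹) t α₁ α₂)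
    (h₀ : ∀ e, S (θ₀ e) = θ₀ (t e)) (h₀₁ : IsLink p S' α₂ θ₀ θ₁) (h₁₂ : IsLink p S α₁ θ₁ θ₂)
    (h₁₀ : IsLink p S' ((p - p⁻¹) • 1 - α₂) θ₁ θ₀) (h₂ : ∀ e, S' (θ₂ e) = θ₂ (t e)) (e : E) :
    S (S' (S (θ₀ e))) = S' (S (S' (θ₀ e))) := by
  rw [← sub_eq_zero, braid_defect hp H h₀ h₀₁ h₁₂ h₁₀, h₂, sub_self]

end Link

/-- A shuffle of the labels `0, …, m - 1` with the labels `m, …, n - 1`, i.e. a minimal length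
representative of a coset of `S_m × S_{n-m}` in `S_n`: a permutation of `{0, …, n - 1}`, extended by
the identity to `ℕ` and sending positions to labels, in which labels on the same side of `m` occur
in increasing order. -/
@[ext] structure Shuffle (n m : ℕ) where
  toPerm : Equiv.Perm ℕ
  apply_of_le : ∀ i, n ≤ i → toPerm i = i
  symm_lt_symm_succ : ∀ l ∈ leviIndices m, toPerm.symm l < toPerm.symm (l + 1)

namespace Shuffle

variable {n m : ℕ}

instance : CoeFun (Shuffle n m) fun _ => ℕ → ℕ := ⟨fun c => c.toPerm⟩

instance : One (Shuffle n m) := ⟨⟨1, fun _ _ => rfl, fun l _ => Nat.lt_succ_self l⟩⟩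

theorem one_apply (i : ℕ) : (1 : Shuffle n m) i = i := rfl

theorem apply_lt (c : Shuffle n m) {i : ℕ} (hi : i < n) : c i < n := by
  by_contra! h
  exact absurd (c.toPerm.injective (c.apply_of_le _ h)) (by lia)

theorem apply_ne (c : Shuffle n m) {i j : ℕ} (h : i ≠ j) : c i ≠ c j :=
  c.toPerm.injective.ne h

instance : Finite (Shuffle n m) := by
  refine Finite.of_injective (β := Fin n → Fin n) (fun c i => ⟨c i, c.apply_lt i.2⟩) ?_
  intro c c' h
  ext i
  rcases lt_or_ge i n with hi | hi
  · exact congrArg Fin.val (congrFun h ⟨i, hi⟩)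
  · rw [c.apply_of_le i hi, c'.apply_of_le i hi]

theorem symm_lt_symm (c : Shuffle n m) {l l' : ℕ} (h : l < l') (hm : l < m ↔ l' < m) :
    c.toPerm.symm l < c.toPerm.symm l' := by
  induction l', h using Nat.le_induction with
  | base => exact c.symm_lt_symm_succ l (by change l + 1 ≠ m; lia)
  | succ l' h ih =>
    exact (ih (by lia)).trans (c.symm_lt_symm_succ l' (by change l' + 1 ≠ m; lia))

/-- The labels at positions `i` and `i + 1` lie on different sides of `m`. -/
def IsMixed (c : Shuffle n m) (i : ℕ) : Prop := c i < m ↔ m ≤ c (i + 1)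

theorem apply_succ_of_not_isMixed (c : Shuffle n m) {i : ℕ} (h : ¬ c.IsMixed i) :
    c (i + 1) = c i + 1 := by
  have hm : c i < m ↔ c (i + 1) < m := by rw [IsMixed] at h; lia
  have mono {l l' : ℕ} := c.symm_lt_symm (l := l) (l' := l')
  rcases lt_trichotomy (c (i + 1)) (c i + 1) with hlt | heq | hgt
  · have := mono (lt_of_le_of_ne (Nat.lt_succ_iff.1 hlt) (c.apply_ne (by lia))) hm.symm
    simp at this
  · exact heq
  · have h₁ := mono (Nat.lt_succ_self (c i)) (by lia)
    have h₂ := mono hgt (by lia)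
    simp only [Equiv.symm_apply_apply] at h₁ h₂
    lia

theorem apply_mem_leviIndices (c : Shuffle n m) {i : ℕ} (h : ¬ c.IsMixed i) :
    c i ∈ leviIndices m := by
  have h' := c.apply_succ_of_not_isMixed h
  intro hm
  exact h (by rw [IsMixed]; lia)

open Classical in
/-- Exchange the labels at positions `i` and `i + 1`, if the result is again a shuffle. -/
def swap (c : Shuffle n m) (i : ℕ) : Shuffle n m :=
  if h : i + 1 < n ∧ c.IsMixed i then
    { toPerm := c.toPerm * Equiv.swap i (i + 1)
      apply_of_le := fun j hj => by
        rw [Equiv.Perm.mul_apply, Equiv.swap_apply_of_ne_of_ne (by lia) (by lia),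
          c.apply_of_le j hj]
      symm_lt_symm_succ := fun l hl => by
        have hlt := c.symm_lt_symm_succ l hl
        have hne : ¬ (c.toPerm.symm l = i ∧ c.toPerm.symm (l + 1) = i + 1) := by
          rintro ⟨h₁, h₂⟩
          rw [Equiv.symm_apply_eq] at h₁ h₂
          have hmix := h.2
          rw [IsMixed, ← h₁, ← h₂] at hmix
          have : l + 1 ≠ m := hl
          lia
        change Equiv.swap i (i + 1) _ < Equiv.swap i (i + 1) _
        simp only [Equiv.swap_apply_def]
        split_ifs <;> lia }
  else c

theorem swap_apply (c : Shuffle n m) {i : ℕ} (hi : i + 1 < n) (h : c.IsMixed i) (j : ℕ) :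
    c.swap i j = c (Equiv.swap i (i + 1) j) := by
  rw [swap, dif_pos ⟨hi, h⟩, Equiv.Perm.mul_apply]

theorem swap_apply_left (c : Shuffle n m) {i : ℕ} (hi : i + 1 < n) (h : c.IsMixed i) :
    c.swap i i = c (i + 1) := by
  rw [c.swap_apply hi h, Equiv.swap_apply_left]

theorem swap_apply_right (c : Shuffle n m) {i : ℕ} (hi : i + 1 < n) (h : c.IsMixed i) :
    c.swap i (i + 1) = c i := by
  rw [c.swap_apply hi h, Equiv.swap_apply_right]

theorem swap_apply_of_ne (c : Shuffle n m) {i j : ℕ} (h : j ≠ i) (h' : j ≠ i + 1) :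
    c.swap i j = c j := by
  rw [swap]
  split_ifs
  · rw [Equiv.Perm.mul_apply, Equiv.swap_apply_of_ne_of_ne h h']
  · rfl

theorem isMixed_swap (c : Shuffle n m) {i : ℕ} (hi : i + 1 < n) (h : c.IsMixed i) :
    (c.swap i).IsMixed i := by
  rw [IsMixed, c.swap_apply_left hi h, c.swap_apply_right hi h]
  rw [IsMixed] at h
  lia

theorem swap_swap (c : Shuffle n m) {i : ℕ} (hi : i + 1 < n) (h : c.IsMixed i) :
    (c.swap i).swap i = c := by
  ext j
  rw [swap_apply _ hi (c.isMixed_swap hi h), c.swap_apply hi h, Equiv.swap_apply_self]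

theorem swap_of_not_isMixed (c : Shuffle n m) {i : ℕ} (h : ¬ c.IsMixed i) : c.swap i = c :=
  dif_neg fun h' => h h'.2

theorem isMixed_swap_iff_of_lt (c : Shuffle n m) {i j : ℕ} (h : i + 1 < j ∨ j + 1 < i) :
    (c.swap i).IsMixed j ↔ c.IsMixed j := by
  rw [IsMixed, IsMixed, c.swap_apply_of_ne (by lia) (by lia),
    c.swap_apply_of_ne (by lia) (by lia)]

theorem swap_comm (c : Shuffle n m) {i j : ℕ} (hij : i + 1 < j) (hj : j + 1 < n) :
    (c.swap i).swap j = (c.swap j).swap i := by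
  by_cases hi : c.IsMixed i
  · have hi' := (c.isMixed_swap_iff_of_lt (Or.inr hij)).2 hi
    by_cases hjm : c.IsMixed j
    · have hj' := (c.isMixed_swap_iff_of_lt (Or.inl hij)).2 hjm
      ext k
      rw [swap_apply _ hj hj', swap_apply _ (by lia) hi, swap_apply _ (by lia) hi',
        swap_apply _ hj hjm]
      simp only [Equiv.swap_apply_def]
      split_ifs <;> first | rfl | lia
    · rw [c.swap_of_not_isMixed hjm,
        swap_of_not_isMixed _ (mt (c.isMixed_swap_iff_of_lt (Or.inl hij)).1 hjm)]
  · rw [c.swap_of_not_isMixed hi,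
      swap_of_not_isMixed _ (mt (c.isMixed_swap_iff_of_lt (Or.inr hij)).1 hi)]

theorem isMixed_swap_succ (c : Shuffle n m) {i : ℕ} (hi : i + 2 < n) (h : ¬ c.IsMixed i)
    (h' : c.IsMixed (i + 1)) : (c.swap (i + 1)).IsMixed i := by
  rw [IsMixed] at h ⊢
  rw [c.swap_apply_left hi h', c.swap_apply_of_ne (by lia) (by lia)]
  rw [IsMixed] at h'
  lia

theorem isMixed_succ_swap (c : Shuffle n m) {i : ℕ} (hi : i + 1 < n) (h : c.IsMixed i)
    (h' : ¬ c.IsMixed (i + 1)) : (c.swap i).IsMixed (i + 1) := by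
  rw [IsMixed] at h' ⊢
  rw [c.swap_apply_right hi h, c.swap_apply_of_ne (by lia) (by lia)]
  rw [IsMixed] at h
  lia

theorem swap_succ_swap_apply (c : Shuffle n m) {i : ℕ} (hi : i + 2 < n) (h : ¬ c.IsMixed i)
    (h' : c.IsMixed (i + 1)) :
    (c.swap (i + 1)).swap i (i + 1) = c i ∧ (c.swap (i + 1)).swap i (i + 2) = c (i + 1) :=
  ⟨(swap_apply_right _ (by lia) (c.isMixed_swap_succ hi h h')).trans
    (c.swap_apply_of_ne (by lia) (by lia)),
  (swap_apply_of_ne _ (i := i) (j := i + 2) (by lia) (by lia)).trans (c.swap_apply_right hi h')⟩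

theorem swap_swap_succ_apply (c : Shuffle n m) {i : ℕ} (hi : i + 2 < n) (h : c.IsMixed i)
    (h' : ¬ c.IsMixed (i + 1)) :
    (c.swap i).swap (i + 1) i = c (i + 1) ∧ (c.swap i).swap (i + 1) (i + 1) = c (i + 2) :=
  ⟨(swap_apply_of_ne _ (by lia) (by lia)).trans (c.swap_apply_left (by lia) h),
  (swap_apply_left _ hi (c.isMixed_succ_swap (by lia) h h')).trans
    (c.swap_apply_of_ne (by lia) (by lia))⟩

/-- The labels at positions `i` and `i + 1` are out of order. -/
def IsDescent (c : Shuffle n m) (i : ℕ) : Prop := m ≤ c i ∧ c (i + 1) < m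

theorem IsDescent.succ_lt {c : Shuffle n m} {i : ℕ} (h : c.IsDescent i) : i + 1 < n := by
  by_contra! hi
  have h' := h.2
  rw [c.apply_of_le _ hi] at h'
  rcases lt_or_ge i n with hin | hin
  · have := c.apply_lt hin
    have := h.1
    lia
  · have := h.1
    rw [c.apply_of_le _ hin] at this
    lia

theorem IsDescent.isMixed {c : Shuffle n m} {i : ℕ} (h : c.IsDescent i) : c.IsMixed i := by
  have := h.1
  have := h.2
  rw [IsMixed]
  lia

theorem IsMixed.isDescent_or {c : Shuffle n m} {i : ℕ} (h : c.IsMixed i) (hi : i + 1 < n) :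
    c.IsDescent i ∨ (c.swap i).IsDescent i := by
  rw [IsDescent, IsDescent, c.swap_apply_left hi h, c.swap_apply_right hi h]
  rw [IsMixed] at h
  lia

theorem IsDescent.swap_succ {c : Shuffle n m} {i : ℕ} (h : c.IsDescent i)
    (h' : ¬ c.IsMixed (i + 1)) : (c.swap i).IsDescent (i + 1) := by
  rw [IsDescent, c.swap_apply_right h.succ_lt h.isMixed, c.swap_apply_of_ne (by lia) (by lia)]
  rw [IsMixed] at h'
  have := h.1
  have := h.2
  lia

theorem IsDescent.swap_pred {c : Shuffle n m} {i : ℕ} (h : c.IsDescent (i + 1))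
    (h' : ¬ c.IsMixed i) : (c.swap (i + 1)).IsDescent i := by
  rw [IsDescent, c.swap_apply_left h.succ_lt h.isMixed, c.swap_apply_of_ne (by lia) (by lia)]
  rw [IsMixed] at h'
  have := h.1
  have := h.2
  lia

/-- The sum of the positions of the labels below `m`: up to a constant, the number of inversions. -/
def length (c : Shuffle n m) : ℕ := ∑ l ∈ Finset.range m, c.toPerm.symm l

theorem IsDescent.length_swap_lt {c : Shuffle n m} {i : ℕ} (h : c.IsDescent i) :
    (c.swap i).length < c.length := by
  have symm_swap (l : ℕ) : (c.swap i).toPerm.symm l = Equiv.swap i (i + 1) (c.toPerm.symm l) := by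
    rw [Equiv.symm_apply_eq, c.swap_apply h.succ_lt h.isMixed, Equiv.swap_apply_self,
      Equiv.apply_symm_apply]
  have symm_ne (l : ℕ) (hl : l < m) : c.toPerm.symm l ≠ i := fun e =>
    absurd h.1 (by rw [← e, Equiv.apply_symm_apply]; lia)
  refine Finset.sum_lt_sum (fun l hl => ?_) ⟨c (i + 1), Finset.mem_range.2 h.2, ?_⟩
  · have := symm_ne l (Finset.mem_range.1 hl)
    rw [symm_swap, Equiv.swap_apply_def]
    split_ifs <;> lia
  · rw [symm_swap, Equiv.symm_apply_apply, Equiv.swap_apply_right]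
    lia

theorem eq_one_of_forall_not_isDescent (c : Shuffle n m) (h : ∀ i, ¬ c.IsDescent i) : c = 1 := by
  have mono : StrictMono c := strictMono_nat_of_lt_succ fun i => by
    by_cases hmix : c.IsMixed i
    · have := h i
      rw [IsMixed] at hmix
      rw [IsDescent] at this
      lia
    · exact (c.apply_succ_of_not_isMixed hmix).symm ▸ Nat.lt_succ_self _
  have symm_mono : StrictMono c.toPerm.symm := fun a b hab => by
    rwa [← mono.lt_iff_lt, Equiv.apply_symm_apply, Equiv.apply_symm_apply]
  ext i
  have h₁ : c i ≤ i := by simpa using symm_mono.le_apply (x := c i)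
  exact le_antisymm h₁ mono.le_apply

theorem exists_isDescent {c : Shuffle n m} (h : c ≠ 1) : ∃ i, c.IsDescent i := by
  by_contra! h'
  exact h (c.eq_one_of_forall_not_isDescent h')

theorem induction_on {motive : Shuffle n m → Prop} (c : Shuffle n m) (one : motive 1)
    (swap : ∀ (c : Shuffle n m) (i : ℕ), c.IsDescent i → motive (c.swap i) → motive c) :
    motive c := by
  by_cases h : c = 1
  · exact h ▸ one
  · obtain ⟨i, hi⟩ := exists_isDescent h
    exact swap c i hi (induction_on (c.swap i) one swap)
termination_by c.length
decreasing_by exact hi.length_swap_lt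

end Shuffle

section Frame

variable {K E V : Type*} [Field K] [AddCommGroup E] [Module K E] [AddCommGroup V] [Module K V]
  {p : K} {n m : ℕ} {t x : ℕ → Module.End K E} {T X : ℕ → Module.End K V}
  {θ : Shuffle n m → E →ₗ[K] V}

/-- A representation of the subalgebra `H^A_m ⊗ H^A_{n-m}` in which the weights on the two sides of
`m` are so far apart that each of them can be moved past every weight of the other side. -/
structure IsSeparatedFamily (p : K) (n m : ℕ) (t x : ℕ → Module.End K E) : Prop
    extends IsHeckeFamily p n (leviIndices m) t x where
  isUnit_sub : ∀ l < n, ∀ l' < n, (l < m ↔ m ≤ l') → IsUnit (x l' - x l)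
  isUnit_sub_smul : ∀ l < n, ∀ l' < n, (l < m ↔ m ≤ l') → IsUnit (x l' - p ^ 2 • x l)

namespace Shuffle

open Classical in
/-- The component of `T i` mapping the copy of `E` labelled by the shuffle `c` to itself. -/
def diag (p : K) (t x : ℕ → Module.End K E) (c : Shuffle n m) (i : ℕ) : Module.End K E :=
  if c.IsMixed i then exchangeCoeff (p - p⁻¹) (x (c i)) (x (c (i + 1))) else t (c i)

open Classical in
/-- The component of `T i` mapping the copy of `E` labelled by the shuffle `c` to the copy labelled
by `c.swap i`. -/
def offDiag (p : K) (t x : ℕ → Module.End K E) (c : Shuffle n m) (i : ℕ) : Module.End K E :=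
  if c.IsMixed i then p • 1 - c.diag p t x i else 0

variable {c : Shuffle n m} {i : ℕ}

theorem diag_of_isMixed (h : c.IsMixed i) :
    c.diag p t x i = exchangeCoeff (p - p⁻¹) (x (c i)) (x (c (i + 1))) :=
  if_pos h

theorem diag_of_not_isMixed (h : ¬ c.IsMixed i) : c.diag p t x i = t (c i) :=
  if_neg h

theorem offDiag_of_isMixed (h : c.IsMixed i) :
    c.offDiag p t x i = p • 1 - c.diag p t x i :=
  if_pos h

theorem offDiag_of_not_isMixed (h : ¬ c.IsMixed i) : c.offDiag p t x i = 0 :=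
  if_neg h

theorem commute_offDiag {z : Module.End K E} (h : Commute z (c.diag p t x i)) :
    Commute z (c.offDiag p t x i) := by
  by_cases hc : c.IsMixed i
  · rw [offDiag_of_isMixed hc]
    exact commute_smul_one_sub p h
  · rw [offDiag_of_not_isMixed hc]
    exact Commute.zero_right z

open Classical in
theorem diag_swap_of_lt {j : ℕ} (h : i + 1 < j ∨ j + 1 < i) :
    (c.swap i).diag p t x j = c.diag p t x j := by
  rw [diag, diag, c.swap_apply_of_ne (by lia) (by lia), c.swap_apply_of_ne (by lia) (by lia)]
  exact if_congr (c.isMixed_swap_iff_of_lt h) rfl rfl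

open Classical in
theorem offDiag_swap_of_lt {j : ℕ} (h : i + 1 < j ∨ j + 1 < i) :
    (c.swap i).offDiag p t x j = c.offDiag p t x j := by
  rw [offDiag, offDiag, diag_swap_of_lt h]
  exact if_congr (c.isMixed_swap_iff_of_lt h) rfl rfl

end Shuffle

namespace IsSeparatedFamily

variable (H : IsSeparatedFamily p n m t x) {c : Shuffle n m} {i : ℕ}
include H

theorem isUnit_sub_apply (hi : i + 1 < n) (h : c.IsMixed i) :
    IsUnit (x (c (i + 1)) - x (c i)) :=
  H.isUnit_sub _ (c.apply_lt (by lia)) _ (c.apply_lt hi) h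

theorem commute_x (c : Shuffle n m) {i j : ℕ} (hi : i < n) (hj : j < n) :
    Commute (x (c i)) (x (c j)) :=
  H.X_comm _ (c.apply_lt hi) _ (c.apply_lt hj)

theorem commute_diag_of_isMixed {z : Module.End K E} (hi : i + 1 < n) (h : c.IsMixed i)
    (hz : Commute z (x (c i))) (hz' : Commute z (x (c (i + 1)))) :
    Commute z (c.diag p t x i) := by
  rw [Shuffle.diag_of_isMixed h]
  exact commute_exchangeCoeff hz hz' (H.isUnit_sub_apply hi h)

theorem isUnit_sub_diag (hp : p ≠ 0) (hi : i + 1 < n) (h : c.IsMixed i) :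
    IsUnit (p • 1 - c.diag p t x i) := by
  rw [Shuffle.diag_of_isMixed h]
  exact isUnit_sub_exchangeCoeff hp (H.isUnit_sub_apply hi h)
    (H.isUnit_sub_smul _ (c.apply_lt (by lia)) _ (c.apply_lt hi) h)

theorem diag_swap (hi : i + 1 < n) (h : c.IsMixed i) :
    (c.swap i).diag p t x i = (p - p⁻¹) • 1 - c.diag p t x i := by
  rw [Shuffle.diag_of_isMixed (c.isMixed_swap hi h), Shuffle.diag_of_isMixed h,
    c.swap_apply_left hi h, c.swap_apply_right hi h,
    exchangeCoeff_swap _ (H.isUnit_sub_apply hi h)]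

theorem commute_t_x (hi : i + 1 < n) (h : ¬ c.IsMixed i) {j : ℕ} (hj : j < n) (hji : j ≠ i)
    (hji' : j ≠ i + 1) : Commute (t (c i)) (x (c j)) := by
  have hc := c.apply_succ_of_not_isMixed h
  exact H.T_comm_X _ (c.apply_mem_leviIndices h) _ (c.apply_lt hj) (hc ▸ c.apply_lt hi)
    (c.apply_ne hji) (hc ▸ c.apply_ne hji')

theorem commute_t_t (hi : i + 1 < n) (h : ¬ c.IsMixed i) {j : ℕ} (hj : j + 1 < n)
    (h' : ¬ c.IsMixed j) (hij : i + 1 < j) : Commute (t (c i)) (t (c j)) := by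
  have hi' := c.apply_succ_of_not_isMixed h
  have hj' := c.apply_succ_of_not_isMixed h'
  have := c.apply_lt hi
  have := c.apply_lt hj
  have := c.apply_ne (i := i) (j := j) (by lia)
  have := c.apply_ne (i := i + 1) (j := j) (by lia)
  have := c.apply_ne (i := i) (j := j + 1) (by lia)
  have hmem := c.apply_mem_leviIndices h
  have hmem' := c.apply_mem_leviIndices h'
  rcases lt_or_gt_of_ne ‹c i ≠ c j› with hlt | hgt
  · exact H.T_comm _ hmem _ hmem' (by lia) (by lia)
  · exact (H.T_comm _ hmem' _ hmem (by lia) (by lia)).symm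

theorem commute_diag_x (c : Shuffle n m) (hi : i + 1 < n) {j : ℕ} (hj : j < n) (hji : j ≠ i)
    (hji' : j ≠ i + 1) : Commute (c.diag p t x i) (x (c j)) := by
  by_cases h : c.IsMixed i
  · exact (H.commute_diag_of_isMixed hi h (H.commute_x c hj (by lia)) (H.commute_x c hj hi)).symm
  · rw [Shuffle.diag_of_not_isMixed h]
    exact H.commute_t_x hi h hj hji hji'

theorem commute_diag_diag (c : Shuffle n m) {j : ℕ} (hij : i + 1 < j) (hj : j + 1 < n) :
    Commute (c.diag p t x i) (c.diag p t x j) := by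
  by_cases h' : c.IsMixed j
  · exact H.commute_diag_of_isMixed hj h'
      (H.commute_diag_x c (by lia) (by lia) (by lia) (by lia))
      (H.commute_diag_x c (by lia) hj (by lia) (by lia))
  by_cases h : c.IsMixed i
  · exact (H.commute_diag_of_isMixed (by lia) h
      (H.commute_diag_x c hj (by lia) (by lia) (by lia))
      (H.commute_diag_x c hj (by lia) (by lia) (by lia))).symm
  · rw [Shuffle.diag_of_not_isMixed h, Shuffle.diag_of_not_isMixed h']
    exact H.commute_t_t (by lia) h hj h' hij

theorem isExchange (hi : i + 1 < n) (h : ¬ c.IsMixed i) {j : ℕ} (hj : j < n)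
    (hji : j ≠ i) (hji' : j ≠ i + 1) (hm : c i < m ↔ m ≤ c j) :
    IsExchange (p - p⁻¹) (t (c i)) (exchangeCoeff (p - p⁻¹) (x (c i)) (x (c j)))
      (exchangeCoeff (p - p⁻¹) (x (c (i + 1))) (x (c j))) := by
  have hmem := c.apply_mem_leviIndices h
  have hc := c.apply_succ_of_not_isMixed h
  have hlt : c i + 1 < n := hc ▸ c.apply_lt hi
  have hm' : c (i + 1) < m ↔ m ≤ c j := by rw [Shuffle.IsMixed] at h; lia
  refine isExchange_exchangeCoeff ?_ ?_ (H.T_mul_self _ hmem hlt) (H.commute_x c (by lia) hi)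
    (H.commute_x c (by lia) hj) (H.commute_x c hi hj) (H.commute_t_x hi h hj hji hji').symm
    (H.isUnit_sub _ (c.apply_lt (by lia)) _ (c.apply_lt hj) hm)
    (H.isUnit_sub _ (c.apply_lt hi) _ (c.apply_lt hj) hm')
  · rw [hc, H.T_mul_X hmem hlt]
  · rw [hc, H.T_mul_X_succ hmem hlt]

theorem isExchange_diag_swap_succ (hi : i + 2 < n) (h : ¬ c.IsMixed i) (h' : c.IsMixed (i + 1)) :
    IsExchange (p - p⁻¹) (t (c i)) ((c.swap (i + 1)).diag p t x i) (c.diag p t x (i + 1)) := by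
  have hm : c i < m ↔ m ≤ c (i + 2) := by
    rw [Shuffle.IsMixed] at h h'
    lia
  rw [Shuffle.diag_of_isMixed h', Shuffle.diag_of_isMixed (c.isMixed_swap_succ hi h h'),
    c.swap_apply_left hi h', c.swap_apply_of_ne (by lia) (by lia)]
  exact H.isExchange (by lia) h hi (by lia) (by lia) hm

theorem isExchange_diag_succ_swap (hi : i + 2 < n) (h : c.IsMixed i) (h' : ¬ c.IsMixed (i + 1)) :
    IsExchange (p - p⁻¹) (t (c (i + 1))) ((c.swap i).diag p t x (i + 1)) (c.diag p t x i) := by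
  have hi' : i + 1 < n := by lia
  have hmix := c.isMixed_succ_swap hi' h h'
  have hu : IsUnit (x (c i) - x (c (i + 2))) := by
    have := (H.isUnit_sub_apply hi hmix).neg
    rwa [c.swap_apply_right hi' h, c.swap_apply_of_ne (by lia) (by lia), neg_sub] at this
  have hu' : IsUnit (x (c i) - x (c (i + 1))) := by
    simpa only [neg_sub] using (H.isUnit_sub_apply hi' h).neg
  have hm : c (i + 1) < m ↔ m ≤ c i := by
    rw [Shuffle.IsMixed] at h
    lia
  have exch := (H.isExchange hi h' (j := i) (by lia) (by lia) (by lia) hm).flip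
  rwa [← exchangeCoeff_swap _ hu, ← exchangeCoeff_swap _ hu', ← Shuffle.diag_of_isMixed (t := t) h,
    ← c.swap_apply_right hi' h, ← c.swap_apply_of_ne (i := i) (j := i + 2) (by lia) (by lia),
    ← Shuffle.diag_of_isMixed (t := t) hmix] at exch

end IsSeparatedFamily

/-- Copies `θ c` of `E` in `V`, one for each shuffle `c`, on which `T i` and `X i` act as they do on
the vectors `T_c ⊗ e` of an induced module, where `T_c` is an intertwiner for the shuffle `c`. -/
structure IsShuffleFrame (p : K) (t x : ℕ → Module.End K E) (T X : ℕ → Module.End K V)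
    (θ : Shuffle n m → E →ₗ[K] V) : Prop where
  X_apply : ∀ c, ∀ i < n, ∀ e, X i (θ c e) = θ c (x (c i) e)
  T_apply : ∀ c i, i + 1 < n → ∀ e,
    T i (θ c e) = θ c (c.diag p t x i e) + θ (c.swap i) (c.offDiag p t x i e)

namespace IsShuffleFrame

variable (F : IsShuffleFrame p t x T X θ) {c : Shuffle n m} {i : ℕ}
include F

theorem isLink (hi : i + 1 < n) (h : c.IsMixed i) :
    IsLink p (T i) (c.diag p t x i) (θ c) (θ (c.swap i)) := fun e => by
  rw [F.T_apply c i hi, Shuffle.offDiag_of_isMixed h]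

theorem T_apply_of_not_isMixed (hi : i + 1 < n) (h : ¬ c.IsMixed i) (e : E) :
    T i (θ c e) = θ c (t (c i) e) := by
  rw [F.T_apply c i hi, Shuffle.offDiag_of_not_isMixed h, Shuffle.diag_of_not_isMixed h,
    LinearMap.zero_apply, map_zero, add_zero]

theorem T_apply_T_apply (hp : p ≠ 0) (H : IsSeparatedFamily p n m t x) (hi : i + 1 < n) (e : E) :
    T i (T i (θ c e)) = (p - p⁻¹) • T i (θ c e) + θ c e := by
  by_cases h : c.IsMixed i
  · have back := F.isLink hi (c.isMixed_swap hi h)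
    rw [H.diag_swap hi h, c.swap_swap hi h] at back
    exact (F.isLink hi h).mul_self hp back e
  · have hlt : c i + 1 < n := c.apply_succ_of_not_isMixed h ▸ c.apply_lt hi
    have ht := LinearMap.congr_fun (H.T_mul_self _ (c.apply_mem_leviIndices h) hlt) e
    simp only [Module.End.mul_apply, LinearMap.add_apply, LinearMap.smul_apply,
      Module.End.one_apply] at ht
    simp only [F.T_apply_of_not_isMixed hi h, ht, map_add, map_smul]

theorem T_apply_X_apply (H : IsSeparatedFamily p n m t x) (hi : i + 1 < n) (e : E) :
    T i (X i (θ c e)) = X (i + 1) (T i (θ c e)) - (p - p⁻¹) • X (i + 1) (θ c e) := by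
  by_cases h : c.IsMixed i
  · have link := F.isLink hi h
    rw [Shuffle.diag_of_isMixed h] at link
    refine link.apply_weight (H.commute_x c (by lia) hi) (H.isUnit_sub_apply hi h)
      (F.X_apply c i (by lia)) (F.X_apply c _ hi) (fun e => ?_) e
    rw [F.X_apply _ _ hi, c.swap_apply_right hi h]
  · have hc := c.apply_succ_of_not_isMixed h
    have ht := LinearMap.congr_fun (H.T_mul_X (c.apply_mem_leviIndices h) (hc ▸ c.apply_lt hi)) e
    simp only [Module.End.mul_apply, LinearMap.sub_apply, LinearMap.smul_apply, ← hc] at ht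
    simp only [F.X_apply c i (by lia), F.X_apply c (i + 1) hi, F.T_apply_of_not_isMixed hi h, ht,
      map_sub, map_smul]

theorem T_apply_X_apply_of_ne (H : IsSeparatedFamily p n m t x) (hi : i + 1 < n) {j : ℕ}
    (hj : j < n) (hji : j ≠ i) (hji' : j ≠ i + 1) (e : E) :
    T i (X j (θ c e)) = X j (T i (θ c e)) := by
  have hd := H.commute_diag_x c hi hj hji hji'
  have hd' := LinearMap.congr_fun hd.eq e
  have ho' := LinearMap.congr_fun (Shuffle.commute_offDiag hd.symm).eq e
  simp only [Module.End.mul_apply] at hd' ho'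
  rw [F.X_apply c j hj, F.T_apply c i hi, F.T_apply c i hi, map_add, F.X_apply _ j hj,
    F.X_apply _ j hj, c.swap_apply_of_ne hji hji', hd', ho']

theorem T_apply_T_apply_of_lt (H : IsSeparatedFamily p n m t x) {j : ℕ} (hij : i + 1 < j)
    (hj : j + 1 < n) (e : E) : T i (T j (θ c e)) = T j (T i (θ c e)) := by
  have hi : i + 1 < n := by lia
  have hdd := H.commute_diag_diag c hij hj
  have hdo := Shuffle.commute_offDiag hdd
  have hod := Shuffle.commute_offDiag hdd.symm
  have hoo := Shuffle.commute_offDiag hod.symm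
  replace hdd := LinearMap.congr_fun hdd.eq e
  replace hdo := LinearMap.congr_fun hdo.eq e
  replace hod := LinearMap.congr_fun hod.eq e
  replace hoo := LinearMap.congr_fun hoo.eq e
  simp only [Module.End.mul_apply] at hdd hdo hod hoo
  simp only [F.T_apply _ i hi, F.T_apply _ j hj, map_add, Shuffle.diag_swap_of_lt (Or.inl hij),
    Shuffle.diag_swap_of_lt (Or.inr hij), Shuffle.offDiag_swap_of_lt (Or.inl hij),
    Shuffle.offDiag_swap_of_lt (Or.inr hij), c.swap_comm hij hj, hdd, hdo, hod, hoo]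
  abel

theorem braid_apply_of_not_isMixed (H : IsSeparatedFamily p n m t x) (hi : i + 2 < n)
    (h : ¬ c.IsMixed i) (h' : ¬ c.IsMixed (i + 1)) (e : E) :
    T i (T (i + 1) (T i (θ c e))) = T (i + 1) (T i (T (i + 1) (θ c e))) := by
  have hc := c.apply_succ_of_not_isMixed h
  have hc' := c.apply_succ_of_not_isMixed h'
  have := c.apply_lt hi
  have ht := LinearMap.congr_fun (H.braid (c i) (c.apply_mem_leviIndices h)
    (hc ▸ c.apply_mem_leviIndices h') (by lia)) e
  simp only [Module.End.mul_apply] at ht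
  simp only [F.T_apply_of_not_isMixed (i := i) (by lia) h,
    F.T_apply_of_not_isMixed (i := i + 1) hi h', hc, ht]

theorem braid_apply_of_isMixed_right (hp : p ≠ 0) (H : IsSeparatedFamily p n m t x)
    (hi : i + 2 < n) (h : ¬ c.IsMixed i) (h' : c.IsMixed (i + 1)) (e : E) :
    T i (T (i + 1) (T i (θ c e))) = T (i + 1) (T i (T (i + 1) (θ c e))) := by
  have hi' : i + 1 < n := by lia
  obtain ⟨hc, hc'⟩ := c.swap_succ_swap_apply hi h h'
  have h₂ : ¬ ((c.swap (i + 1)).swap i).IsMixed (i + 1) := by rwa [Shuffle.IsMixed, hc, hc']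
  have link' := F.isLink hi (c.isMixed_swap hi h')
  rw [H.diag_swap hi h', c.swap_swap hi h'] at link'
  refine braid_apply_link_start hp (H.isExchange_diag_swap_succ hi h h')
    (F.T_apply_of_not_isMixed hi' h) (F.isLink hi h')
    (F.isLink hi' (c.isMixed_swap_succ hi h h')) link' (fun e => ?_) e
  rw [F.T_apply_of_not_isMixed hi h₂, hc]

theorem apply_swap_eq_zero (hp : p ≠ 0) (H : IsSeparatedFamily p n m t x) (hi : i + 1 < n)
    (h : c.IsMixed i) {B : Module.End K V} (hB : ∃ B', B * T i = B' * B)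
    (hc : ∀ e, B (θ c e) = 0) (e : E) : B (θ (c.swap i) e) = 0 := by
  obtain ⟨e, rfl⟩ := ((Module.End.isUnit_iff _).1 (H.isUnit_sub_diag hp hi h)).2 e
  obtain ⟨B', hB'⟩ := hB
  have := LinearMap.congr_fun hB' (θ c e)
  rw [Module.End.mul_apply, Module.End.mul_apply, hc, map_zero] at this
  rw [(F.isLink hi h).apply_sub, map_sub, this, hc, sub_zero]

theorem braid_apply (hp : p ≠ 0) (H : IsSeparatedFamily p n m t x)
    (hT : ∀ i, i + 1 < n → T i * T i = (p - p⁻¹) • T i + 1) (hi : i + 2 < n) (c : Shuffle n m)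
    (e : E) : T i (T (i + 1) (T i (θ c e))) = T (i + 1) (T i (T (i + 1) (θ c e))) := by
  set B := T i * T (i + 1) * T i - T (i + 1) * T i * T (i + 1) with hB
  have comm₁ : ∃ B', B * T i = B' * B := ⟨(p - p⁻¹) • 1 - T (i + 1), by
    linear_combination (norm := (rw [hB]; noncomm_ring))
      (T i * T (i + 1)) * hT i (by lia) - hT (i + 1) hi * (T i * T (i + 1))⟩
  have comm₂ : ∃ B', B * T (i + 1) = B' * B := ⟨(p - p⁻¹) • 1 - T i, by
    linear_combination (norm := (rw [hB]; noncomm_ring))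
      hT i (by lia) * (T (i + 1) * T i) - (T (i + 1) * T i) * hT (i + 1) hi⟩
  have hi' : i + 1 < n := by lia
  have right (c : Shuffle n m) (h : ¬ c.IsMixed i) (h' : c.IsMixed (i + 1)) (e : E) :
      B (θ c e) = 0 := sub_eq_zero.2 (F.braid_apply_of_isMixed_right hp H hi h h' e)
  have both (c : Shuffle n m) (h : c.IsMixed i) (h' : c.IsMixed (i + 1)) (e : E) :
      B (θ c e) = 0 := by
    rw [← c.swap_swap hi h']
    refine F.apply_swap_eq_zero hp H hi (c.isMixed_swap hi h') comm₂ (right _ ?_ ?_) e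
    · rw [Shuffle.IsMixed, c.swap_apply_left hi h', c.swap_apply_of_ne (by lia) (by lia)]
      rw [Shuffle.IsMixed] at h h'
      lia
    · exact c.isMixed_swap hi h'
  have left (h : c.IsMixed i) (h' : ¬ c.IsMixed (i + 1)) : B (θ c e) = 0 := by
    rw [← c.swap_swap hi' h]
    exact F.apply_swap_eq_zero hp H hi' (c.isMixed_swap hi' h) comm₁
      (both _ (c.isMixed_swap hi' h) (c.isMixed_succ_swap hi' h h')) e
  by_cases h : c.IsMixed i <;> by_cases h' : c.IsMixed (i + 1)
  · exact sub_eq_zero.1 (both c h h' e)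
  · exact sub_eq_zero.1 (left h h')
  · exact sub_eq_zero.1 (right c h h' e)
  · exact F.braid_apply_of_not_isMixed H hi h h' e

theorem isHeckeFamily (hp : p ≠ 0) (H : IsSeparatedFamily p n m t x)
    (ext : ∀ A B : Module.End K V, (∀ c e, A (θ c e) = B (θ c e)) → A = B)
    (hX : ∀ i < n, IsUnit (X i)) : IsHeckeFamily p n Set.univ T X := by
  have mul_self (i : ℕ) (hi : i + 1 < n) : T i * T i = (p - p⁻¹) • T i + 1 :=
    ext _ _ fun _ e => F.T_apply_T_apply hp H hi e
  exact
  { X_comm := fun i hi j hj => ext _ _ fun c e => by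
      have := LinearMap.congr_fun (H.commute_x c hj hi).eq e
      simp only [Module.End.mul_apply] at this
      simp only [Module.End.mul_apply, F.X_apply c i hi, F.X_apply c j hj, this]
    X_isUnit := hX
    T_mul_self := fun i _ hi => mul_self i hi
    braid := fun i _ _ hi => ext _ _ (F.braid_apply hp H mul_self hi)
    T_comm := fun i _ j _ hij hj => ext _ _ fun _ e => F.T_apply_T_apply_of_lt H hij hj e
    TXT := fun i _ hi => IsHeckeFamily.TXT_of_T_mul_X
      (ext _ _ fun _ e => F.T_apply_X_apply H hi e) (mul_self i hi)
    T_comm_X := fun i _ j hj hi h h' =>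
      ext _ _ fun _ e => F.T_apply_X_apply_of_ne H hi hj h h' e }

end IsShuffleFrame

end Frame

section Intertwiner

variable {K E V : Type*} [Field K] [AddCommGroup E] [Module K E] [AddCommGroup V] [Module K V]
  {p : K} {n m : ℕ} {t x : ℕ → Module.End K E} {T X : ℕ → Module.End K V} {ψ : E →ₗ[K] V}

open Classical in
/-- The extension of `ψ` to a family of maps indexed by shuffles, defined along a descending chain
of shuffles by solving the equation `IsLink` for its last argument. -/
def intertwiner (p : K) (t x : ℕ → Module.End K E) (T : ℕ → Module.End K V) (ψ : E →ₗ[K] V)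
    (c : Shuffle n m) : E →ₗ[K] V :=
  if h : c = 1 then ψ else
    let i := (Shuffle.exists_isDescent h).choose
    (T i ∘ₗ intertwiner p t x T ψ (c.swap i) -
      intertwiner p t x T ψ (c.swap i) ∘ₗ (c.swap i).diag p t x i) ∘ₗ
        Ring.inverse (p • 1 - (c.swap i).diag p t x i)
termination_by c.length
decreasing_by all_goals exact (Shuffle.exists_isDescent h).choose_spec.length_swap_lt

theorem intertwiner_one : intertwiner p t x T ψ (1 : Shuffle n m) = ψ := by
  rw [intertwiner, dif_pos rfl]

namespace IsSeparatedFamily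

variable (H : IsSeparatedFamily p n m t x) (hp : p ≠ 0) {c : Shuffle n m}
include H hp

theorem isUnit_sub_diag_swap {i : ℕ} (h : c.IsDescent i) :
    IsUnit (p • 1 - (c.swap i).diag p t x i) :=
  H.isUnit_sub_diag hp h.succ_lt (c.isMixed_swap h.succ_lt h.isMixed)

theorem exists_isLink_intertwiner (h : c ≠ 1) : ∃ i, c.IsDescent i ∧
    IsLink p (T i) ((c.swap i).diag p t x i) (intertwiner p t x T ψ (c.swap i))
      (intertwiner p t x T ψ c) := by
  have hi := (Shuffle.exists_isDescent h).choose_spec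
  refine ⟨_, hi, fun e => ?_⟩
  have hinv := LinearMap.congr_fun (Ring.inverse_mul_cancel _ (H.isUnit_sub_diag_swap hp hi)) e
  rw [Module.End.mul_apply, Module.End.one_apply] at hinv
  conv_rhs => rw [intertwiner.eq_def _ _ _ _ _ c, dif_neg h]
  rw [LinearMap.comp_apply, hinv]
  simp

variable (HV : IsHeckeFamily p n Set.univ T X)
include HV

theorem X_apply_intertwiner (hX : ∀ i < n, ∀ e, X i (ψ e) = ψ (x i e)) (c : Shuffle n m) {i : ℕ}
    (hi : i < n) (e : E) :
    X i (intertwiner p t x T ψ c e) = intertwiner p t x T ψ c (x (c i) e) := by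
  by_cases h : c = 1
  · subst h
    rw [intertwiner_one]
    exact hX i hi e
  obtain ⟨j, hj, link⟩ := H.exists_isLink_intertwiner (T := T) (ψ := ψ) hp h
  have ih {i : ℕ} (hi : i < n) := X_apply_intertwiner hX (c.swap j) hi
  have hj' := hj.succ_lt
  have hmix := c.isMixed_swap hj' hj.isMixed
  have hu := H.isUnit_sub_diag_swap hp hj
  by_cases hij : i = j ∨ i = j + 1
  · rw [Shuffle.diag_of_isMixed hmix] at link hu
    have key := link.apply_weight_swap (H.commute_x _ (by lia) hj') (H.isUnit_sub_apply hj' hmix)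
      hu (HV.T_mul_X trivial hj') (HV.T_mul_X_succ trivial hj') (ih (by lia)) (ih hj') e
    rw [c.swap_apply_left hj' hj.isMixed, c.swap_apply_right hj' hj.isMixed] at key
    rcases hij with rfl | rfl
    exacts [key.1, key.2]
  · rw [not_or] at hij
    refine link.apply_of_commute hu (HV.T_comm_X j trivial i hi hj' hij.1 hij.2)
      (H.commute_diag_x _ hj' (j := i) hi hij.1 hij.2).symm (fun e => ?_) e |>.trans ?_
    · exact ih hi e
    · rw [c.swap_apply_of_ne hij.1 hij.2]
termination_by c.length
decreasing_by exact hj.length_swap_lt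

end IsSeparatedFamily

/-- The maps `θ` satisfy at the shuffle `c` the part of the conditions of `IsShuffleFrame` on the
`T i` that involves only `c` and shorter shuffles. -/
structure IsShuffleFrameAt (p : K) (t x : ℕ → Module.End K E) (T : ℕ → Module.End K V)
    (θ : Shuffle n m → E →ₗ[K] V) (c : Shuffle n m) : Prop where
  T_apply : ∀ i, i + 1 < n → ¬ c.IsMixed i → ∀ e, T i (θ c e) = θ c (t (c i) e)
  isLink : ∀ i, c.IsDescent i →
    IsLink p (T i) ((c.swap i).diag p t x i) (θ (c.swap i)) (θ c)

namespace IsShuffleFrameAt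

variable {θ : Shuffle n m → E →ₗ[K] V} {c : Shuffle n m} {i j : ℕ}
  (H : IsSeparatedFamily p n m t x) (hp : p ≠ 0) (HV : IsHeckeFamily p n Set.univ T X)
include H hp HV

theorem isLink_swap (F : IsShuffleFrameAt p t x T θ c) (h : c.IsDescent i) :
    IsLink p (T i) ((p - p⁻¹) • 1 - (c.swap i).diag p t x i) (θ c) (θ (c.swap i)) :=
  (F.isLink i h).symm hp (HV.T_mul_self i trivial h.succ_lt) (H.isUnit_sub_diag_swap hp h)

theorem T_apply_of_lt (hi : c.IsDescent i)
    (link : IsLink p (T i) ((c.swap i).diag p t x i) (θ (c.swap i)) (θ c))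
    (F : IsShuffleFrameAt p t x T θ (c.swap i)) (hj : j + 1 < n) (h : ¬ c.IsMixed j)
    (hij : i + 1 < j ∨ j + 1 < i) (e : E) : T j (θ c e) = θ c (t (c j) e) := by
  have h' : ¬ (c.swap i).IsMixed j := mt (c.isMixed_swap_iff_of_lt hij).1 h
  have hc : (c.swap i) j = c j := c.swap_apply_of_ne (by lia) (by lia)
  have hi' := hi.succ_lt
  have hT : Commute (T i) (T j) := hij.elim (fun h => HV.T_comm i trivial j trivial h hj)
    fun h => (HV.T_comm j trivial i trivial h hi').symm
  have hd : Commute ((c.swap i).diag p t x j) ((c.swap i).diag p t x i) := hij.elim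
    (fun h => (H.commute_diag_diag _ h hj).symm) fun h => H.commute_diag_diag _ h hi'
  rw [Shuffle.diag_of_not_isMixed h'] at hd
  rw [← hc]
  exact link.apply_of_commute (H.isUnit_sub_diag_swap hp hi) hT hd (F.T_apply j hj h') e

theorem T_apply_succ (hi : c.IsDescent i)
    (link : IsLink p (T i) ((c.swap i).diag p t x i) (θ (c.swap i)) (θ c))
    (F : IsShuffleFrameAt p t x T θ (c.swap i))
    (F' : IsShuffleFrameAt p t x T θ ((c.swap i).swap (i + 1)))
    (hi₂ : i + 2 < n) (h : ¬ c.IsMixed (i + 1)) (e : E) :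
    T (i + 1) (θ c e) = θ c (t (c (i + 1)) e) := by
  have des := hi.swap_succ h
  obtain ⟨hc, hc'⟩ := c.swap_swap_succ_apply hi₂ hi.isMixed h
  have h₂ : ¬ ((c.swap i).swap (i + 1)).IsMixed i := by rwa [Shuffle.IsMixed, hc, hc']
  have exch := H.isExchange_diag_swap_succ hi₂ h₂ (Shuffle.isMixed_swap _ hi₂ des.isMixed)
  rw [Shuffle.swap_swap _ hi₂ des.isMixed] at exch
  rw [← hc]
  exact apply_link_end hp exch
    ((H.isUnit_sub_diag_swap hp hi).mul (H.isUnit_sub_diag_swap hp des))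
    (F'.T_apply i hi.succ_lt h₂) (F.isLink _ des) link (F.isLink_swap H hp HV des)
    (HV.braid i trivial trivial hi₂) e

theorem T_apply_pred (hi : c.IsDescent (i + 1))
    (link : IsLink p (T (i + 1)) ((c.swap (i + 1)).diag p t x (i + 1)) (θ (c.swap (i + 1))) (θ c))
    (F : IsShuffleFrameAt p t x T θ (c.swap (i + 1)))
    (F' : IsShuffleFrameAt p t x T θ ((c.swap (i + 1)).swap i))
    (h : ¬ c.IsMixed i) (e : E) : T i (θ c e) = θ c (t (c i) e) := by
  have des := hi.swap_pred h
  obtain ⟨hc, hc'⟩ := c.swap_succ_swap_apply hi.succ_lt h hi.isMixed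
  have h₂ : ¬ ((c.swap (i + 1)).swap i).IsMixed (i + 1) := by rwa [Shuffle.IsMixed, hc, hc']
  have exch := H.isExchange_diag_succ_swap hi.succ_lt
    (Shuffle.isMixed_swap _ des.succ_lt des.isMixed) h₂
  rw [Shuffle.swap_swap _ des.succ_lt des.isMixed] at exch
  rw [← hc]
  exact apply_link_end hp exch
    ((H.isUnit_sub_diag_swap hp hi).mul (H.isUnit_sub_diag_swap hp des))
    (F'.T_apply _ hi.succ_lt h₂) (F.isLink _ des) link (F.isLink_swap H hp HV des)
    (HV.braid i trivial trivial hi.succ_lt).symm e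

theorem isLink_of_lt (hi : c.IsDescent i)
    (link : IsLink p (T i) ((c.swap i).diag p t x i) (θ (c.swap i)) (θ c))
    (hj : c.IsDescent j) (hij : i + 1 < j ∨ j + 1 < i)
    (Fi : IsShuffleFrameAt p t x T θ (c.swap i)) (Fj : IsShuffleFrameAt p t x T θ (c.swap j)) :
    IsLink p (T j) ((c.swap j).diag p t x j) (θ (c.swap j)) (θ c) := by
  have hi' := hi.succ_lt
  have hj' := hj.succ_lt
  have comm : (c.swap j).swap i = (c.swap i).swap j :=
    hij.elim (fun h => (c.swap_comm h hj').symm) fun h => c.swap_comm h hi'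
  have des {i j : ℕ} (h : i + 1 < j ∨ j + 1 < i) (hi : c.IsDescent i) :
      (c.swap j).IsDescent i := by
    rwa [Shuffle.IsDescent, c.swap_apply_of_ne (by lia) (by lia),
      c.swap_apply_of_ne (by lia) (by lia)]
  have link₁ := Fj.isLink i (des hij hi)
  have link₂ := Fi.isLink j (des hij.symm hj)
  rw [← comm, Shuffle.diag_swap_of_lt hij] at link₂
  have hα : ((c.swap j).swap i).diag p t x i = (c.swap i).diag p t x i := by
    rw [comm, Shuffle.diag_swap_of_lt hij.symm]
  have hT : Commute (T i) (T j) := hij.elim (fun h => HV.T_comm i trivial j trivial h hj')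
    fun h => (HV.T_comm j trivial i trivial h hi').symm
  have hd : Commute (((c.swap j).swap i).diag p t x i) (((c.swap j).swap i).diag p t x j) :=
    hij.elim (fun h => H.commute_diag_diag _ h hj') fun h => (H.commute_diag_diag _ h hi').symm
  rw [hα, Shuffle.diag_swap_of_lt hij] at hd
  rw [hα] at link₁
  exact link₁.square link₂ link hT hd (H.isUnit_sub_diag_swap hp hi)

end IsShuffleFrameAt

namespace IsSeparatedFamily

variable (H : IsSeparatedFamily p n m t x) (hp : p ≠ 0) (HV : IsHeckeFamily p n Set.univ T X)
include H hp HV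

theorem isShuffleFrameAt_intertwiner
    (hT : ∀ i ∈ leviIndices m, i + 1 < n → ∀ e, T i (ψ e) = ψ (t i e)) (c : Shuffle n m) :
    IsShuffleFrameAt p t x T (intertwiner p t x T ψ) c := by
  by_cases hc : c = 1
  · subst hc
    refine ⟨fun i hi h => ?_, fun i hi => ?_⟩
    · rw [intertwiner_one]
      exact hT i (Shuffle.apply_mem_leviIndices _ h) hi
    · have := hi.1
      have := hi.2
      simp only [Shuffle.one_apply] at *
      lia
  obtain ⟨i, hi, link⟩ := H.exists_isLink_intertwiner (T := T) (ψ := ψ) hp hc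
  have ih (c' : Shuffle n m) (_ : c'.length < c.length) := isShuffleFrameAt_intertwiner hT c'
  have Fi := ih _ hi.length_swap_lt
  refine ⟨fun j hj h => ?_, fun j hj => ?_⟩
  · rcases lt_trichotomy j i with hji | rfl | hij
    · rcases Nat.lt_or_eq_of_le (Nat.succ_le_of_lt hji) with hji | rfl
      · exact IsShuffleFrameAt.T_apply_of_lt H hp HV hi link Fi hj h (Or.inr hji)
      · exact IsShuffleFrameAt.T_apply_pred H hp HV hi link Fi
          (ih _ ((hi.swap_pred h).length_swap_lt.trans hi.length_swap_lt)) h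
    · exact absurd hi.isMixed h
    · rcases Nat.lt_or_eq_of_le (Nat.succ_le_of_lt hij) with hij | rfl
      · exact IsShuffleFrameAt.T_apply_of_lt H hp HV hi link Fi hj h (Or.inl hij)
      · exact IsShuffleFrameAt.T_apply_succ H hp HV hi link Fi
          (ih _ ((hi.swap_succ h).length_swap_lt.trans hi.length_swap_lt)) hj h
  · by_cases hij : j = i
    · exact hij ▸ link
    · refine IsShuffleFrameAt.isLink_of_lt H hp HV hi link hj ?_ Fi (ih _ hj.length_swap_lt)
      by_contra! hfar
      obtain rfl | rfl : j = i + 1 ∨ i = j + 1 := by lia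
      exacts [absurd hj.1 (not_le.2 hi.2), absurd hi.1 (not_le.2 hj.2)]
termination_by c.length

theorem isShuffleFrame_intertwiner
    (hT : ∀ i ∈ leviIndices m, i + 1 < n → ∀ e, T i (ψ e) = ψ (t i e))
    (hX : ∀ i < n, ∀ e, X i (ψ e) = ψ (x i e)) :
    IsShuffleFrame (n := n) (m := m) p t x T X (intertwiner p t x T ψ) where
  X_apply c i hi := H.X_apply_intertwiner hp HV hX c hi
  T_apply c i hi e := by
    have F := H.isShuffleFrameAt_intertwiner hp HV hT
    by_cases h : c.IsMixed i
    · rw [Shuffle.offDiag_of_isMixed h]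
      rcases h.isDescent_or hi with hdes | hdes
      · have link := (F c).isLink_swap H hp HV hdes
        rw [H.diag_swap hi h, sub_sub_cancel] at link
        exact link e
      · have link := (F (c.swap i)).isLink i hdes
        rw [c.swap_swap hi h] at link
        exact link e
    · rw [(F c).T_apply i hi h, Shuffle.offDiag_of_not_isMixed h, Shuffle.diag_of_not_isMixed h,
        LinearMap.zero_apply, map_zero, add_zero]

end IsSeparatedFamily

end Intertwiner

section Induced

variable {K E V : Type*} [Field K] [AddCommGroup E] [Module K E] [AddCommGroup V] [Module K V]
  {p : K} {n m : ℕ} {t x : ℕ → Module.End K E} {T X : ℕ → Module.End K V}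

/-- The action of the generator `T i` on the induced module, modelled as a direct sum of copies of
`E` indexed by shuffles: the diagonal and off-diagonal components are chosen so that the copies are
moved into each other by intertwiners. -/
def inducedT (p : K) (n m : ℕ) (t x : ℕ → Module.End K E) (i : ℕ) :
    Module.End K (Shuffle n m →₀ E) :=
  Finsupp.lsum K fun c => Finsupp.lsingle c ∘ₗ c.diag p t x i +
    Finsupp.lsingle (c.swap i) ∘ₗ c.offDiag p t x i

/-- The action of the generator `X i` on the model of the induced module. -/
def inducedX (n m : ℕ) (x : ℕ → Module.End K E) (i : ℕ) : Module.End K (Shuffle n m →₀ E) :=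
  Finsupp.lsum K fun c => Finsupp.lsingle c ∘ₗ x (c i)

theorem isShuffleFrame_lsingle : IsShuffleFrame p t x (inducedT p n m t x) (inducedX n m x)
    (fun c => Finsupp.lsingle c) where
  X_apply c i _ e := by simp [inducedX]
  T_apply c i _ e := by simp [inducedT]

theorem inducedX_apply (f : Shuffle n m →₀ E) (i : ℕ) (c : Shuffle n m) :
    inducedX n m x i f c = x (c i) (f c) := by
  induction f using Finsupp.induction_linear with
  | zero => simp
  | add f g hf hg => simp only [map_add, Finsupp.add_apply, hf, hg]
  | single d e => by_cases h : d = c <;> simp [inducedX, h]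

theorem IsSeparatedFamily.isHeckeFamily_induced (H : IsSeparatedFamily p n m t x) (hp : p ≠ 0) :
    IsHeckeFamily p n Set.univ (inducedT p n m t x) (inducedX n m x) := by
  refine isShuffleFrame_lsingle.isHeckeFamily hp H (fun A B h => ?_) (fun i hi => ?_)
  · exact Finsupp.lhom_ext h
  · have hx (c : Shuffle n m) := H.X_isUnit _ (c.apply_lt hi)
    refine ⟨⟨inducedX n m x i, inducedX n m (fun l => Ring.inverse (x l)) i, ?_, ?_⟩, rfl⟩ <;>
      refine LinearMap.ext fun f => Finsupp.ext fun c => ?_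
    · rw [Module.End.mul_apply, inducedX_apply, inducedX_apply, ← Module.End.mul_apply,
        Ring.mul_inverse_cancel _ (hx c), Module.End.one_apply, Module.End.one_apply]
    · rw [Module.End.mul_apply, inducedX_apply, inducedX_apply, ← Module.End.mul_apply,
        Ring.inverse_mul_cancel _ (hx c), Module.End.one_apply, Module.End.one_apply]

namespace IsShuffleFrame

variable {θ : Shuffle n m → E →ₗ[K] V} (F : IsShuffleFrame p t x T X θ)
include F

theorem lsum_inducedT {i : ℕ} (hi : i + 1 < n) (f : Shuffle n m →₀ E) :
    Finsupp.lsum K θ (inducedT p n m t x i f) = T i (Finsupp.lsum K θ f) := by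
  induction f using Finsupp.induction_linear with
  | zero => simp only [map_zero]
  | add f g hf hg => simp only [map_add, hf, hg]
  | single c e =>
    rw [inducedT, Finsupp.lsum_single, LinearMap.add_apply, map_add]
    simp [F.T_apply c i hi]

theorem lsum_inducedX {i : ℕ} (hi : i < n) (f : Shuffle n m →₀ E) :
    Finsupp.lsum K θ (inducedX n m x i f) = X i (Finsupp.lsum K θ f) := by
  induction f using Finsupp.induction_linear with
  | zero => simp only [map_zero]
  | add f g hf hg => simp only [map_add, hf, hg]
  | single c e => simp [inducedX, F.X_apply c i hi]

end IsShuffleFrame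

theorem IsSeparatedFamily.eq_top_of_single_one_mem (H : IsSeparatedFamily p n m t x) (hp : p ≠ 0)
    {W : Submodule K (Shuffle n m →₀ E)}
    (hW : ∀ i, i + 1 < n → ∀ f ∈ W, inducedT p n m t x i f ∈ W)
    (hone : ∀ e, Finsupp.single 1 e ∈ W) : W = ⊤ := by
  have mem (c : Shuffle n m) : ∀ e, Finsupp.single c e ∈ W := by
    induction c using Shuffle.induction_on with
    | one => exact hone
    | swap c i hi ih =>
      intro e
      obtain ⟨e, rfl⟩ := ((Module.End.isUnit_iff _).1 (H.isUnit_sub_diag_swap hp hi)).2 e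
      have hi' := hi.succ_lt
      have link := (isShuffleFrame_lsingle (p := p) (t := t) (x := x)).isLink hi'
        (c.isMixed_swap hi' hi.isMixed)
      rw [c.swap_swap hi' hi.isMixed] at link
      have h := link.apply_sub e
      simp only [Finsupp.lsingle_apply] at h
      rw [h]
      exact W.sub_mem (hW i hi' _ (ih _)) (ih _)
  refine eq_top_iff.2 fun f _ => ?_
  induction f using Finsupp.induction_linear with
  | zero => exact W.zero_mem
  | add f g hf hg => exact W.add_mem (hf trivial) (hg trivial)
  | single c e => exact mem c e

end Induced

section Spectrum

variable {K V : Type*} [Field K] [AddCommGroup V] [Module K V] {W : Submodule K V}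
  {f g : Module.End K V}

theorem mem_spectrum_of_apply_eq_smul {a : K} {v : V} (hv : v ≠ 0) (h : f v = a • v) :
    a ∈ spectrum K f :=
  (Module.End.hasEigenvalue_of_hasEigenvector
    ⟨Module.End.mem_eigenspace_iff.2 h, hv⟩).mem_spectrum

variable [IsAlgClosed K] [FiniteDimensional K V]

theorem exists_eigenvector_mem (hW : W ≠ ⊥) (hf : ∀ w ∈ W, f w ∈ W) :
    ∃ a : K, ∃ v ∈ W, v ≠ 0 ∧ f v = a • v := by
  have := Submodule.nontrivial_iff_ne_bot.2 hW
  obtain ⟨a, ha⟩ := Module.End.exists_eigenvalue (f.restrict hf)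
  obtain ⟨v, hv⟩ := ha.exists_hasEigenvector
  exact ⟨a, v, v.2, fun h => hv.2 (Subtype.ext h), congrArg Subtype.val hv.apply_eq_smul⟩

theorem isUnit_sub_of_disjoint_spectrum (hfg : Commute f g)
    (h : Disjoint (spectrum K f) (spectrum K g)) : IsUnit (g - f) := by
  rw [LinearMap.isUnit_iff_ker_eq_bot]
  by_contra hker
  have hgf {w : V} : w ∈ LinearMap.ker (g - f) ↔ g w = f w := by
    rw [LinearMap.mem_ker, LinearMap.sub_apply, sub_eq_zero]
  obtain ⟨a, v, hv, hv0, hfv⟩ := exists_eigenvector_mem (f := f) hker fun w hw => by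
    rw [hgf] at hw ⊢
    rw [← Module.End.mul_apply, ← hfg.eq, Module.End.mul_apply, hw]
  exact Set.disjoint_left.1 h (mem_spectrum_of_apply_eq_smul hv0 hfv)
    (mem_spectrum_of_apply_eq_smul hv0 ((hgf.1 hv).trans hfv))

/-- The vector `v` is a simultaneous eigenvector of `X 0, …, X (n - 1)`, the eigenvalue of `X i`
being `a i`. -/
structure IsWeightVector (n : ℕ) (X : ℕ → Module.End K V) (a : ℕ → K) (v : V) : Prop where
  ne_zero : v ≠ 0
  apply : ∀ i < n, X i v = a i • v

theorem exists_isWeightVector_mem {n : ℕ} {X : ℕ → Module.End K V}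
    (hX : ∀ i < n, ∀ j < n, Commute (X i) (X j)) (hW : W ≠ ⊥)
    (hWX : ∀ i < n, ∀ w ∈ W, X i w ∈ W) : ∃ a, ∃ v ∈ W, IsWeightVector n X a v := by
  induction n generalizing W with
  | zero =>
    obtain ⟨v, hv, hv0⟩ := W.ne_bot_iff.1 hW
    exact ⟨0, v, hv, hv0, by simp⟩
  | succ n ih =>
    obtain ⟨b, v, hv, hv0, hb⟩ := exists_eigenvector_mem hW (hWX n n.lt_succ_self)
    obtain ⟨a, u, ⟨hu, hub⟩, hu0, ha⟩ := ih (W := W ⊓ (X n).eigenspace b)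
      (fun i hi j hj => hX i (by lia) j (by lia))
      ((Submodule.ne_bot_iff _).2 ⟨v, ⟨hv, Module.End.mem_eigenspace_iff.2 hb⟩, hv0⟩)
      (fun i hi w hw => ⟨hWX i (by lia) w hw.1,
        Module.End.mapsTo_genEigenspace_of_comm (hX n (by lia) i (by lia)) b 1 hw.2⟩)
    refine ⟨Function.update a n b, u, hu, hu0, fun i hi => ?_⟩
    obtain hi | rfl := Nat.lt_succ_iff_lt_or_eq.1 hi
    · rw [Function.update_of_ne hi.ne, ha i hi]
    · rw [Function.update_self, Module.End.mem_eigenspace_iff.1 hub]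

end Spectrum

open Classical in
theorem sum_filter_comp_swap_lt {A : Type*} {I : Set A} {a : ℕ → A} {n i : ℕ}
    (hi : i + 1 < n) (h : a i ∉ I) (h' : a (i + 1) ∈ I) :
    ∑ j ∈ Finset.range n with (a ∘ Equiv.swap i (i + 1)) j ∈ I, j <
      ∑ j ∈ Finset.range n with a j ∈ I, j := by
  calc ∑ j ∈ Finset.range n with (a ∘ Equiv.swap i (i + 1)) j ∈ I, j
      = ∑ j ∈ Finset.range n with a j ∈ I, Equiv.swap i (i + 1) j := by
        refine Finset.sum_equiv (Equiv.swap i (i + 1)) (fun j => ?_) fun j _ => ?_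
        · simp only [Finset.mem_filter, Finset.mem_range, Function.comp_apply, and_congr_left_iff]
          intro _
          rw [Equiv.swap_apply_def]
          split_ifs <;> lia
        · rw [Equiv.swap_apply_self]
    _ < _ := by
        refine Finset.sum_lt_sum (fun j hj => ?_) ⟨i + 1, by simp [hi, h'], by simp⟩
        have hji : j ≠ i := by
          rintro rfl
          exact h (Finset.mem_filter.1 hj).2
        rw [Equiv.swap_apply_def]
        split_ifs <;> lia

section Weights

variable {K V : Type*} [Field K] [AddCommGroup V] [Module K V] {p : K} {n m : ℕ} {D : Set ℕ}
  {T X : ℕ → Module.End K V} {W : Submodule K V} {I J : Set K}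

/-- The subspace `W` is stable under the operators `T i`, `i ∈ D`, and `X i` of a family of degree
`n`. -/
structure IsStableUnder (n : ℕ) (D : Set ℕ) (T X : ℕ → Module.End K V) (W : Submodule K V) :
    Prop where
  T_mem : ∀ i ∈ D, i + 1 < n → ∀ w ∈ W, T i w ∈ W
  X_mem : ∀ i < n, ∀ w ∈ W, X i w ∈ W

/-- Irreducibility of the representation given by the operators `T i`, `i ∈ D`, and `X i` of a
family of degree `n`. -/
structure IsIrreducibleFamily (n : ℕ) (D : Set ℕ) (T X : ℕ → Module.End K V) : Prop where
  nontrivial : Nontrivial V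
  eq_bot_or_eq_top : ∀ W, IsStableUnder n D T X W → W = ⊥ ∨ W = ⊤

/-- Two sets of weights such that no weight in one of them is linked to a weight in the other, two
weights being linked if they are equal or differ by the factor `p ^ 2`. -/
structure IsSeparatedPair (p : K) (I J : Set K) : Prop where
  disjoint : Disjoint I J
  left_notMem : ∀ a ∈ I, p ^ 2 * a ∉ J
  right_notMem : ∀ a ∈ J, p ^ 2 * a ∉ I

theorem IsSeparatedPair.symm (h : IsSeparatedPair p I J) : IsSeparatedPair p J I :=
  ⟨h.disjoint.symm, h.right_notMem, h.left_notMem⟩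

namespace IsHeckeFamily

variable {a : ℕ → K} {v : V} {i : ℕ}

-- The eigenvalue of `X i` on an eigenvector of `T i` determines that of `X (i + 1)`, because
-- `T i` has eigenvalues `p` and `-p⁻¹` and `T i * X i * T i = X (i + 1)`.
theorem apply_ne_smul_of_isWeightVector (H : IsHeckeFamily p n Set.univ T X) (hp : p ≠ 0)
    (hv : IsWeightVector n X a v) (hi : i + 1 < n) (h : a (i + 1) ≠ p ^ 2 * a i)
    (h' : a i ≠ p ^ 2 * a (i + 1)) (z : K) : T i v ≠ z • v := by
  intro hz
  have hquad : z * z = (p - p⁻¹) * z + 1 := by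
    refine smul_left_injective K hv.ne_zero ?_
    have := LinearMap.congr_fun (H.T_mul_self i trivial hi) v
    simpa [hz, smul_smul, add_smul] using this
  have hweight : a (i + 1) = z * z * a i := by
    refine smul_left_injective K hv.ne_zero ?_
    have := LinearMap.congr_fun (H.TXT i trivial hi) v
    simp only [Module.End.mul_apply, hz, map_smul, hv.apply i (by lia), hv.apply _ hi,
      smul_smul] at this
    simp only [← this]
    congr 1
    ring
  have hroot : (z - p) * (p * z + 1) = 0 := by
    field_simp at hquad
    linear_combination hquad
  rcases mul_eq_zero.1 hroot with hz | hz
  · exact h (by rw [hweight, sub_eq_zero.1 hz]; ring)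
  · exact h' (by rw [hweight]; linear_combination (-(p * z) + 1) * a i * hz)

theorem isWeightVector_swap (H : IsHeckeFamily p n Set.univ T X) (hp : p ≠ 0)
    (hv : IsWeightVector n X a v) (hi : i + 1 < n) (hne : a i ≠ a (i + 1))
    (h : a (i + 1) ≠ p ^ 2 * a i) (h' : a i ≠ p ^ 2 * a (i + 1)) :
    IsWeightVector n X (a ∘ Equiv.swap i (i + 1))
      (T i v - ((p - p⁻¹) * a (i + 1) / (a (i + 1) - a i)) • v) := by
  have hα : (p - p⁻¹) * a (i + 1) / (a (i + 1) - a i) * (a (i + 1) - a i) =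
    (p - p⁻¹) * a (i + 1) := div_mul_cancel₀ _ (sub_ne_zero.2 hne.symm)
  generalize (p - p⁻¹) * a (i + 1) / (a (i + 1) - a i) = α at hα
  refine ⟨sub_ne_zero.2 (H.apply_ne_smul_of_isWeightVector hp hv hi h h' α), fun j hj => ?_⟩
  rw [map_sub, map_smul, Function.comp_apply, hv.apply j hj]
  rcases eq_or_ne j i with rfl | hji
  · have hX := LinearMap.congr_fun (H.T_mul_X_succ trivial hi) v
    simp only [Module.End.mul_apply, LinearMap.add_apply, LinearMap.smul_apply, hv.apply _ hi,
      map_smul] at hX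
    rw [Equiv.swap_apply_left]
    linear_combination (norm := module) -hX + hα • v
  rcases eq_or_ne j (i + 1) with rfl | hji'
  · have hX := LinearMap.congr_fun (H.T_mul_X trivial hi) v
    simp only [Module.End.mul_apply, LinearMap.sub_apply, LinearMap.smul_apply, hv.apply _ hi,
      hv.apply i (by lia), map_smul] at hX
    rw [Equiv.swap_apply_right]
    linear_combination (norm := module) -hX - hα • v
  · have hX := LinearMap.congr_fun (H.T_comm_X i trivial j hj hi hji hji').eq v
    simp only [Module.End.mul_apply, hv.apply j hj, map_smul] at hX
    rw [Equiv.swap_apply_of_ne_of_ne hji hji', ← hX]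
    module

end IsHeckeFamily

theorem IsHeckeFamily.exists_sorted_isWeightVector_mem [IsAlgClosed K] [FiniteDimensional K V]
    (H : IsHeckeFamily p n Set.univ T X) (hp : p ≠ 0) (hIJ : IsSeparatedPair p I J)
    (hX : ∀ i < n, spectrum K (X i) ⊆ I ∪ J) (hW : IsStableUnder n Set.univ T X W)
    (hW0 : W ≠ ⊥) :
    ∃ a, ∃ v ∈ W, IsWeightVector n X a v ∧ ∀ i, i + 1 < n → a i ∈ J → a (i + 1) ∈ J := by
  classical
  obtain ⟨a, v, hvW, hv⟩ := exists_isWeightVector_mem H.X_comm hW0 hW.X_mem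
  induction hk : ∑ j ∈ Finset.range n with a j ∈ I, j using Nat.strong_induction_on
    generalizing a v with
  | _ k ih =>
    by_cases hsorted : ∀ i, i + 1 < n → a i ∈ J → a (i + 1) ∈ J
    · exact ⟨a, v, hvW, hv, hsorted⟩
    push Not at hsorted
    obtain ⟨i, hi, hJ, hnJ⟩ := hsorted
    have hI : a (i + 1) ∈ I :=
      (hX _ hi (mem_spectrum_of_apply_eq_smul hv.ne_zero (hv.apply _ hi))).resolve_right hnJ
    have hnI : a i ∉ I := Set.disjoint_right.1 hIJ.disjoint hJ
    exact ih _ (hk ▸ sum_filter_comp_swap_lt hi hnI hI) _ _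
      (W.sub_mem (hW.T_mem i trivial hi v hvW) (W.smul_mem _ hvW))
      (H.isWeightVector_swap hp hv hi (ne_of_mem_of_not_mem hI hnI).symm
        (ne_of_mem_of_not_mem hI (hIJ.right_notMem _ hJ))
        (ne_of_mem_of_not_mem hJ (hIJ.left_notMem _ hI))) rfl

end Weights

section InducedIrreducible

variable {K E : Type*} [Field K] [AddCommGroup E] [Module K E] {p : K} {n m : ℕ}
  {t x : ℕ → Module.End K E} {I J : Set K}

theorem spectrum_smul_subset {f : Module.End K E} {S S' : Set K} {z : K} (hz : z ≠ 0)
    (hS : ∀ a ∈ S, z * a ∈ S') (hf : spectrum K f ⊆ S) : spectrum K (z • f) ⊆ S' := by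
  have h := spectrum.unit_smul_eq_smul (R := K) f (Units.mk0 z hz)
  rw [Units.smul_mk0] at h
  rw [h]
  rintro _ ⟨a, ha, rfl⟩
  exact hS a (hf ha)

-- A weight vector has nonzero components only at those shuffles `c` for which its weights, read
-- through `c`, lie in `I` for labels below `m` and in `J` for the others. If its weights are
-- sorted, this leaves no room for a descent of `c`.
theorem IsWeightVector.eq_single_one {a : ℕ → K} {f : Shuffle n m →₀ E}
    (hf : IsWeightVector n (inducedX n m x) a f) (hIJ : Disjoint I J)
    (hI : ∀ i < n, i < m → spectrum K (x i) ⊆ I) (hJ : ∀ i < n, m ≤ i → spectrum K (x i) ⊆ J)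
    (ha : ∀ i, i + 1 < n → a i ∈ J → a (i + 1) ∈ J) : f = Finsupp.single 1 (f 1) := by
  have hzero (c : Shuffle n m) (hc : c ≠ 1) : f c = 0 := by
    by_contra hfc
    have hmem {i : ℕ} (hi : i < n) : a i ∈ spectrum K (x (c i)) :=
      mem_spectrum_of_apply_eq_smul hfc <| by
        rw [← inducedX_apply, hf.apply i hi, Finsupp.smul_apply]
    obtain ⟨i, hi⟩ := Shuffle.exists_isDescent hc
    have hi' := hi.succ_lt
    exact Set.disjoint_left.1 hIJ (hI _ (c.apply_lt hi') hi.2 (hmem hi'))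
      (ha i hi' (hJ _ (c.apply_lt (by lia)) hi.1 (hmem (by lia))))
  ext c
  by_cases hc : c = 1
  · rw [hc, Finsupp.single_eq_same]
  · rw [hzero c hc, Finsupp.single_eq_of_ne hc]

theorem inducedT_single_one {i : ℕ} (hi : i ∈ leviIndices m) (hin : i + 1 < n) (e : E) :
    inducedT p n m t x i (Finsupp.single 1 e) = Finsupp.single 1 (t i e) := by
  have hmix : ¬ (1 : Shuffle n m).IsMixed i := by
    have : i + 1 ≠ m := hi
    rw [Shuffle.IsMixed, Shuffle.one_apply, Shuffle.one_apply]
    lia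
  simpa only [Shuffle.one_apply, Finsupp.lsingle_apply] using
    isShuffleFrame_lsingle (p := p) (t := t) (x := x).T_apply_of_not_isMixed hin hmix e

theorem inducedX_single_one (i : ℕ) (e : E) :
    inducedX n m x i (Finsupp.single 1 e) = Finsupp.single 1 (x i e) := by
  rw [inducedX, Finsupp.lsum_single, LinearMap.comp_apply, Finsupp.lsingle_apply, Shuffle.one_apply]

theorem IsStableUnder.comap_lsingle_one {W : Submodule K (Shuffle n m →₀ E)}
    (hW : IsStableUnder n Set.univ (inducedT p n m t x) (inducedX n m x) W) :
    IsStableUnder n (leviIndices m) t x (W.comap (Finsupp.lsingle 1)) where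
  T_mem i hi hin e he := by
    rw [Submodule.mem_comap, Finsupp.lsingle_apply, ← inducedT_single_one (p := p) (x := x) hi hin]
    exact hW.T_mem i trivial hin _ he
  X_mem i hi e he := by
    rw [Submodule.mem_comap, Finsupp.lsingle_apply, ← inducedX_single_one]
    exact hW.X_mem i hi _ he

variable [FiniteDimensional K E]

theorem spectrum_inducedX_subset (hI : ∀ i < n, i < m → spectrum K (x i) ⊆ I)
    (hJ : ∀ i < n, m ≤ i → spectrum K (x i) ⊆ J) {i : ℕ} (hi : i < n) :
    spectrum K (inducedX n m x i) ⊆ I ∪ J := by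
  intro a ha
  obtain ⟨f, hf⟩ := (Module.End.HasEigenvalue.of_mem_spectrum ha).exists_hasEigenvector
  obtain ⟨c, hc⟩ := Finsupp.ne_iff.1 hf.2
  have hac : a ∈ spectrum K (x (c i)) := mem_spectrum_of_apply_eq_smul hc <| by
    rw [← inducedX_apply, hf.apply_eq_smul, Finsupp.smul_apply]
  exact (lt_or_ge (c i) m).imp (fun h => hI _ (c.apply_lt hi) h hac)
    (fun h => hJ _ (c.apply_lt hi) h hac)

variable [IsAlgClosed K]

theorem IsHeckeFamily.isSeparatedFamily (H : IsHeckeFamily p n (leviIndices m) t x) (hp : p ≠ 0)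
    (hIJ : IsSeparatedPair p I J) (hI : ∀ i < n, i < m → spectrum K (x i) ⊆ I)
    (hJ : ∀ i < n, m ≤ i → spectrum K (x i) ⊆ J) : IsSeparatedFamily p n m t x where
  toIsHeckeFamily := H
  isUnit_sub l hl l' hl' h := by
    refine isUnit_sub_of_disjoint_spectrum (H.X_comm l hl l' hl') ?_
    rcases lt_or_ge l m with hlm | hlm
    · exact hIJ.disjoint.mono (hI l hl hlm) (hJ l' hl' (h.1 hlm))
    · exact hIJ.symm.disjoint.mono (hJ l hl hlm) (hI l' hl' (by lia))
  isUnit_sub_smul l hl l' hl' h := by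
    have hp2 := pow_ne_zero 2 hp
    refine isUnit_sub_of_disjoint_spectrum ((H.X_comm l hl l' hl').smul_left _) ?_
    rcases lt_or_ge l m with hlm | hlm
    · exact disjoint_compl_left.mono (spectrum_smul_subset hp2 hIJ.left_notMem (hI l hl hlm))
        (hJ l' hl' (h.1 hlm))
    · exact disjoint_compl_left.mono (spectrum_smul_subset hp2 hIJ.right_notMem (hJ l hl hlm))
        (hI l' hl' (by lia))

theorem IsIrreducibleFamily.induced (hE : IsIrreducibleFamily n (leviIndices m) t x)
    (H : IsHeckeFamily p n (leviIndices m) t x) (hp : p ≠ 0) (hIJ : IsSeparatedPair p I J)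
    (hI : ∀ i < n, i < m → spectrum K (x i) ⊆ I) (hJ : ∀ i < n, m ≤ i → spectrum K (x i) ⊆ J) :
    IsIrreducibleFamily n Set.univ (inducedT p n m t x) (inducedX n m x) where
  nontrivial := by
    have := hE.nontrivial
    infer_instance
  eq_bot_or_eq_top W hW := by
    have H' := H.isSeparatedFamily hp hIJ hI hJ
    refine or_iff_not_imp_left.2 fun hW0 => ?_
    obtain ⟨a, f, hfW, hf, ha⟩ := (H'.isHeckeFamily_induced hp).exists_sorted_isWeightVector_mem hp
      hIJ (fun i hi => spectrum_inducedX_subset hI hJ hi) hW hW0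
    have hf1 := hf.eq_single_one hIJ.disjoint hI hJ ha
    have hcomap : W.comap (Finsupp.lsingle 1) ≠ ⊥ := by
      refine (Submodule.ne_bot_iff _).2 ⟨f 1, ?_, fun h0 => hf.ne_zero ?_⟩
      · rwa [Submodule.mem_comap, Finsupp.lsingle_apply, ← hf1]
      · rw [hf1, h0, Finsupp.single_zero]
    have htop := (hE.eq_bot_or_eq_top _ hW.comap_lsingle_one).resolve_left hcomap
    exact H'.eq_top_of_single_one_mem hp (fun i hi f hf => hW.T_mem i trivial hi f hf) fun e =>
      Submodule.mem_comap.1 (htop ▸ Submodule.mem_top : e ∈ W.comap (Finsupp.lsingle 1))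

end InducedIrreducible

section HeckeAlgebra

theorem sub_mul_add_inv_eq_zero_iff {K R : Type*} [Field K] [Ring R] [Algebra K R] {p : K}
    (hp : p ≠ 0) (a : R) :
    (a - algebraMap K R p) * (a + algebraMap K R p⁻¹) = 0 ↔ a * a = (p - p⁻¹) • a + 1 := by
  have h : (a - algebraMap K R p) * (a + algebraMap K R p⁻¹) = a * a - ((p - p⁻¹) • a + 1) := by
    rw [sub_mul, mul_add, mul_add, ← map_mul, mul_inv_cancel₀ hp, map_one, ← Algebra.commutes,
      ← Algebra.smul_def, ← Algebra.smul_def]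
    module
  rw [h, sub_eq_zero]

/-- The linear map `g` intertwines the representations `r` and `s` of an algebra. -/
def IsIntertwining {K A V Z : Type*} [Field K] [Ring A] [Algebra K A] [AddCommGroup V] [Module K V]
    [AddCommGroup Z] [Module K Z] (r : A →ₐ[K] Module.End K V) (s : A →ₐ[K] Module.End K Z)
    (g : V →ₗ[K] Z) : Prop :=
  ∀ a v, g (r a v) = s a (g v)

variable {p₁ : ℂ} {n m k : ℕ}

/-- The generator exchanging the zero-based positions `i` and `i + 1`, for a natural number `i`;
its junk value is `0`, taken when `i + 1 ≥ n`. -/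
def heckeT (p₁ : ℂ) (n i : ℕ) : HA p₁ n := if h : i < n - 1 then TgA p₁ ⟨i, h⟩ else 0

/-- The generator `XgA p₁ i` for a natural number `i`; its junk value is `0`, taken when `i ≥ n`. -/
def heckeX (p₁ : ℂ) (n i : ℕ) : HA p₁ n := if h : i < n then XgA p₁ ⟨i, h⟩ else 0

theorem heckeT_of_lt {i : ℕ} (hi : i + 1 < n) : heckeT p₁ n i = TgA p₁ ⟨i, by lia⟩ :=
  dif_pos (by lia)

theorem heckeX_of_lt {i : ℕ} (hi : i < n) : heckeX p₁ n i = XgA p₁ ⟨i, hi⟩ :=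
  dif_pos hi

namespace HA

theorem mkAlgHom_eq {x y : FreeAlgebra ℂ (AGen n)} (h : HARel p₁ n x y) :
    RingQuot.mkAlgHom ℂ (HARel p₁ n) x = RingQuot.mkAlgHom ℂ (HARel p₁ n) y :=
  RingQuot.mkAlgHom_rel ℂ h

theorem X_mul_Xi (i : Fin n) : XgA p₁ i * XigA p₁ i = 1 := by
  simpa only [XgA, XigA, map_mul, map_one] using mkAlgHom_eq (HARel.Xinv_right (p₁ := p₁) i)

theorem Xi_mul_X (i : Fin n) : XigA p₁ i * XgA p₁ i = 1 := by
  simpa only [XgA, XigA, map_mul, map_one] using mkAlgHom_eq (HARel.Xinv_left (p₁ := p₁) i)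

theorem Xi_eq_inverse (i : Fin n) : XigA p₁ i = Ring.inverse (XgA p₁ i) :=
  (Ring.inverse_unit ⟨_, _, X_mul_Xi i, Xi_mul_X i⟩).symm

theorem isHeckeFamily (hp : p₁ ≠ 0) :
    IsHeckeFamily p₁ n Set.univ (heckeT p₁ n) (heckeX p₁ n) where
  X_comm i hi j hj := by
    rw [heckeX_of_lt hi, heckeX_of_lt hj]
    simpa only [commute_iff_eq, XgA, map_mul] using
      mkAlgHom_eq (HARel.Xcomm (p₁ := p₁) ⟨i, hi⟩ ⟨j, hj⟩)
  X_isUnit i hi := by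
    rw [heckeX_of_lt hi]
    exact ⟨⟨_, _, X_mul_Xi ⟨i, hi⟩, Xi_mul_X ⟨i, hi⟩⟩, rfl⟩
  T_mul_self i _ hi := by
    rw [heckeT_of_lt hi, ← sub_mul_add_inv_eq_zero_iff hp]
    simpa only [TgA, map_mul, map_sub, map_add, AlgHom.commutes, map_zero] using
      mkAlgHom_eq (HARel.quad (p₁ := p₁) ⟨i, by lia⟩)
  braid i _ _ hi := by
    rw [heckeT_of_lt (by lia), heckeT_of_lt hi]
    simpa only [TgA, map_mul] using
      mkAlgHom_eq (HARel.braid (p₁ := p₁) ⟨i, by lia⟩ ⟨i + 1, by lia⟩ rfl)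
  T_comm i _ j _ hij hj := by
    rw [heckeT_of_lt (by lia), heckeT_of_lt hj]
    simpa only [commute_iff_eq, TgA, map_mul] using
      mkAlgHom_eq (HARel.Tcomm (p₁ := p₁) ⟨i, by lia⟩ ⟨j, by lia⟩ (Or.inl hij))
  TXT i _ hi := by
    rw [heckeT_of_lt hi, heckeX_of_lt hi, heckeX_of_lt (by lia)]
    simpa only [TgA, XgA, map_mul] using
      mkAlgHom_eq (HARel.TXT (p₁ := p₁) ⟨i, by lia⟩ ⟨i, by lia⟩ ⟨i + 1, hi⟩ rfl rfl)
  T_comm_X i _ a ha hi h h' := by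
    rw [heckeT_of_lt hi, heckeX_of_lt ha]
    simpa only [commute_iff_eq, TgA, XgA, map_mul] using
      mkAlgHom_eq (HARel.TXcomm (p₁ := p₁) ⟨i, by lia⟩ ⟨a, ha⟩ ⟨h, h'⟩)

theorem induction {P : HA p₁ n → Prop} (hC : ∀ z : ℂ, P (algebraMap ℂ _ z))
    (hT : ∀ i, i + 1 < n → P (heckeT p₁ n i)) (hX : ∀ i < n, P (heckeX p₁ n i))
    (hXi : ∀ i, P (XigA p₁ i)) (hadd : ∀ x y, P x → P y → P (x + y))
    (hmul : ∀ x y, P x → P y → P (x * y)) (x : HA p₁ n) : P x := by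
  obtain ⟨y, rfl⟩ := RingQuot.mkAlgHom_surjective ℂ (HARel p₁ n) x
  induction y using FreeAlgebra.induction with
  | grade0 r => exact (AlgHom.commutes (RingQuot.mkAlgHom ℂ (HARel p₁ n)) r).symm ▸ hC r
  | grade1 g =>
    match g with
    | .T i => exact (heckeT_of_lt (p₁ := p₁) (n := n) (i := i) (by lia)).subst (hT i (by lia))
    | .X i => exact (heckeX_of_lt i.2).subst (hX i i.2)
    | .Xi i => exact hXi i
  | mul a b ha hb => rw [map_mul]; exact hmul _ _ ha hb
  | add a b ha hb => rw [map_add]; exact hadd _ _ ha hb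

theorem isIntertwining {V Z : Type*} [AddCommGroup V] [Module ℂ V] [AddCommGroup Z] [Module ℂ Z]
    {r : HA p₁ n →ₐ[ℂ] Module.End ℂ V} {s : HA p₁ n →ₐ[ℂ] Module.End ℂ Z} {g : V →ₗ[ℂ] Z}
    (hT : ∀ i, i + 1 < n → ∀ v, g (r (heckeT p₁ n i) v) = s (heckeT p₁ n i) (g v))
    (hX : ∀ i < n, ∀ v, g (r (heckeX p₁ n i) v) = s (heckeX p₁ n i) (g v)) :
    IsIntertwining r s g := by
  refine induction (fun z v => ?_) hT hX (fun i v => ?_) (fun x y hx hy v => ?_)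
    (fun x y hx hy v => ?_)
  · simp only [AlgHom.commutes, Module.algebraMap_end_apply, map_smul]
  · have h := hX i i.2 (r (XigA p₁ i) v)
    rw [heckeX_of_lt i.2, ← Module.End.mul_apply, ← map_mul, X_mul_Xi, map_one,
      Module.End.one_apply] at h
    rw [h, ← Module.End.mul_apply, ← map_mul, Xi_mul_X, map_one, Module.End.one_apply]
  · simp only [map_add, LinearMap.add_apply, hx v, hy v]
  · simp only [map_mul, Module.End.mul_apply, hx _, hy v]

theorem commute_apply {R : Type*} [Ring R] [Algebra ℂ R] (r : HA p₁ n →ₐ[ℂ] R) {b : R}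
    (hT : ∀ i, i + 1 < n → Commute b (r (heckeT p₁ n i)))
    (hX : ∀ i < n, Commute b (r (heckeX p₁ n i))) (x : HA p₁ n) : Commute b (r x) := by
  have h : IsIntertwining ((Algebra.lmul ℂ R).comp r) ((Algebra.lmul ℂ R).comp r)
      (LinearMap.mulLeft ℂ b) :=
    isIntertwining (fun i hi v => by simpa [mul_assoc] using congrArg (· * v) (hT i hi).eq)
      (fun i hi v => by simpa [mul_assoc] using congrArg (· * v) (hX i hi).eq)
  simpa [commute_iff_eq] using h x 1

end HA

theorem apply_mem_of_mul_eq_one {K V : Type*} [Field K] [AddCommGroup V] [Module K V]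
    [FiniteDimensional K V] {W : Submodule K V} {f g : Module.End K V} (hgf : g * f = 1)
    (hf : ∀ w ∈ W, f w ∈ W) : ∀ w ∈ W, g w ∈ W := by
  have hgf' (v : V) : g (f v) = v := LinearMap.congr_fun hgf v
  have hmap : W.map f = W := Submodule.eq_of_le_of_finrank_eq (Submodule.map_le_iff_le_comap.2 hf)
    (LinearEquiv.finrank_map_eq
      (LinearEquiv.ofInjectiveEndo f (Function.LeftInverse.injective hgf')) W)
  intro w hw
  obtain ⟨w', hw', rfl⟩ := hmap.ge hw
  rwa [hgf']

theorem IsStableUnder.apply_mem {V : Type*} [AddCommGroup V] [Module ℂ V] [FiniteDimensional ℂ V]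
    {r : HA p₁ n →ₐ[ℂ] Module.End ℂ V} {W : Submodule ℂ V}
    (hW : IsStableUnder n Set.univ (r ∘ heckeT p₁ n) (r ∘ heckeX p₁ n) W) :
    ∀ x, ∀ w ∈ W, r x w ∈ W := by
  refine HA.induction (fun z w hw => ?_) (fun i => hW.T_mem i trivial) hW.X_mem (fun i => ?_)
    (fun x y hx hy w hw => ?_) (fun x y hx hy w hw => ?_)
  · rw [AlgHom.commutes, Module.algebraMap_end_apply]
    exact W.smul_mem z hw
  · refine apply_mem_of_mul_eq_one (f := r (XgA p₁ i)) ?_ ?_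
    · rw [← map_mul, HA.Xi_mul_X, map_one]
    · exact heckeX_of_lt (p₁ := p₁) i.2 ▸ hW.X_mem i i.2
  · rw [map_add]
    exact W.add_mem (hx w hw) (hy w hw)
  · rw [map_mul]
    exact hx _ (hy w hw)

namespace IsHeckeFamily

variable {R : Type*} [Ring R] [Algebra ℂ R] {T X : ℕ → R}

/-- The images of the generators of the affine Hecke algebra under the representation given by a
Hecke family. -/
def genImage (T X : ℕ → R) : AGen n → R
  | .T i => T i
  | .X i => X i
  | .Xi i => Ring.inverse (X i)

theorem lift_genImage_eq (H : IsHeckeFamily p₁ n Set.univ T X) (hp : p₁ ≠ 0)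
    ⦃x y : FreeAlgebra ℂ (AGen n)⦄ (h : HARel p₁ n x y) :
    FreeAlgebra.lift ℂ (genImage T X) x = FreeAlgebra.lift ℂ (genImage T X) y := by
  cases h <;> simp only [aT, aX, aXi, map_mul, map_sub, map_add, map_zero, map_one,
    AlgHom.commutes, FreeAlgebra.lift_ι_apply, genImage]
  case Xcomm i j => exact H.X_comm i i.2 j j.2
  case Xinv_right i => exact Ring.mul_inverse_cancel _ (H.X_isUnit i i.2)
  case Xinv_left i => exact Ring.inverse_mul_cancel _ (H.X_isUnit i i.2)
  case braid i j hj => rw [hj]; exact H.braid i trivial trivial (by lia)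
  case Tcomm i j h =>
    exact h.elim (fun h => H.T_comm i trivial j trivial h (by lia))
      (fun h => (H.T_comm j trivial i trivial h (by lia)).symm)
  case quad i => exact (sub_mul_add_inv_eq_zero_iff hp _).2 (H.T_mul_self i trivial (by lia))
  case TXT i a b ha hb => rw [ha, hb]; exact H.TXT i trivial (by lia)
  case TXcomm i a h => exact H.T_comm_X i trivial a a.2 (by lia) h.1 h.2

/-- The representation of the affine Hecke algebra given by a Hecke family. -/
def lift (H : IsHeckeFamily p₁ n Set.univ T X) (hp : p₁ ≠ 0) : HA p₁ n →ₐ[ℂ] R :=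
  RingQuot.liftAlgHom ℂ ⟨FreeAlgebra.lift ℂ (genImage T X), H.lift_genImage_eq hp⟩

theorem lift_T (H : IsHeckeFamily p₁ n Set.univ T X) (hp : p₁ ≠ 0) (i : Fin (n - 1)) :
    H.lift hp (TgA p₁ i) = T i := by
  rw [lift, TgA, RingQuot.liftAlgHom_mkAlgHom_apply, aT, FreeAlgebra.lift_ι_apply, genImage]

theorem lift_X (H : IsHeckeFamily p₁ n Set.univ T X) (hp : p₁ ≠ 0) (i : Fin n) :
    H.lift hp (XgA p₁ i) = X i := by
  rw [lift, XgA, RingQuot.liftAlgHom_mkAlgHom_apply, aX, FreeAlgebra.lift_ι_apply, genImage]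

theorem lift_Xi (H : IsHeckeFamily p₁ n Set.univ T X) (hp : p₁ ≠ 0) (i : Fin n) :
    H.lift hp (XigA p₁ i) = Ring.inverse (X i) := by
  rw [lift, XigA, RingQuot.liftAlgHom_mkAlgHom_apply, aXi, FreeAlgebra.lift_ι_apply, genImage]

end IsHeckeFamily

end HeckeAlgebra

section Embeddings

variable {p₁ : ℂ} {n m k : ℕ} {em₁ : HA p₁ m →ₐ[ℂ] HA p₁ (m + k)}
  {em₂ : HA p₁ k →ₐ[ℂ] HA p₁ (m + k)}

theorem exists_isEmb1 (hp : p₁ ≠ 0) (m k : ℕ) :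
    ∃ em₁ : HA p₁ m →ₐ[ℂ] HA p₁ (m + k), IsEmb1 p₁ m (m + k) em₁ := by
  have H := (HA.isHeckeFamily (n := m + k) hp).restrict
  refine ⟨H.lift hp, fun i i' h => ?_, fun i i' h => ?_, fun i i' h => ?_⟩
  · rw [H.lift_T, ← h, heckeT_of_lt (by lia)]
  · rw [H.lift_X, ← h, heckeX_of_lt i'.2]
  · rw [H.lift_Xi, ← h, heckeX_of_lt i'.2, HA.Xi_eq_inverse]

theorem exists_isEmb2 (hp : p₁ ≠ 0) (m k : ℕ) :
    ∃ em₂ : HA p₁ k →ₐ[ℂ] HA p₁ (m + k), IsEmb2 p₁ m k (m + k) em₂ := by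
  have H := (HA.isHeckeFamily (n := m + k) hp).shift
  refine ⟨H.lift hp, fun i i' h => ?_, fun i i' h => ?_, fun i i' h => ?_⟩
  · rw [H.lift_T, ← h, heckeT_of_lt (by lia)]
  · rw [H.lift_X, ← h, heckeX_of_lt i'.2]
  · rw [H.lift_Xi, ← h, heckeX_of_lt i'.2, HA.Xi_eq_inverse]

theorem IsEmb1.map_T (h : IsEmb1 p₁ m (m + k) em₁) {i : ℕ} (hi : i + 1 < m) :
    em₁ (heckeT p₁ m i) = heckeT p₁ (m + k) i := by
  rw [heckeT_of_lt hi, heckeT_of_lt (by lia)]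
  exact h.1 _ _ rfl

theorem IsEmb1.map_X (h : IsEmb1 p₁ m (m + k) em₁) {i : ℕ} (hi : i < m) :
    em₁ (heckeX p₁ m i) = heckeX p₁ (m + k) i := by
  rw [heckeX_of_lt hi, heckeX_of_lt (by lia)]
  exact h.2.1 _ _ rfl

theorem IsEmb2.map_T (h : IsEmb2 p₁ m k (m + k) em₂) {i : ℕ} (hi : i + 1 < k) :
    em₂ (heckeT p₁ k i) = heckeT p₁ (m + k) (m + i) := by
  rw [heckeT_of_lt hi, heckeT_of_lt (by lia)]
  exact h.1 _ _ rfl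

theorem IsEmb2.map_X (h : IsEmb2 p₁ m k (m + k) em₂) {i : ℕ} (hi : i < k) :
    em₂ (heckeX p₁ k i) = heckeX p₁ (m + k) (m + i) := by
  rw [heckeX_of_lt hi, heckeX_of_lt (by lia)]
  exact h.2.1 _ _ rfl

theorem IsEmb1.commute (h₁ : IsEmb1 p₁ m (m + k) em₁) (h₂ : IsEmb2 p₁ m k (m + k) em₂)
    (hp : p₁ ≠ 0) (x : HA p₁ m) (y : HA p₁ k) : Commute (em₁ x) (em₂ y) := by
  have H := HA.isHeckeFamily (n := m + k) hp
  refine HA.commute_apply em₂ (fun j hj => ?_) (fun j hj => ?_) y <;>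
  refine (HA.commute_apply em₁ (fun i hi => ?_) (fun i hi => ?_) x).symm
  · rw [h₁.map_T hi, h₂.map_T hj]
    exact (H.T_comm _ trivial _ trivial (by lia) (by lia)).symm
  · rw [h₁.map_X hi, h₂.map_T hj]
    exact H.T_comm_X _ trivial _ (by lia) (by lia) (by lia) (by lia)
  · rw [h₁.map_T hi, h₂.map_X hj]
    exact (H.T_comm_X _ trivial _ (by lia) (by lia) (by lia) (by lia)).symm
  · rw [h₁.map_X hi, h₂.map_X hj]
    exact H.X_comm _ (by lia) _ (by lia)

end Embeddings

section Representations

variable {p₁ : ℂ} {n : ℕ} {S I J : Set ℂ}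

theorem ZInv.isSeparatedPair (hI : ZInv p₁ I) (hJ : ZInv p₁ J) (hIJ : Disjoint I J) :
    IsSeparatedPair p₁ I J where
  disjoint := hIJ
  left_notMem a ha := Set.disjoint_left.1 hIJ (mul_comm a _ ▸ (hI a ha).1)
  right_notMem a ha := Set.disjoint_right.1 hIJ (mul_comm a _ ▸ (hJ a ha).1)

namespace ARep

/-- The operators by which the generators `heckeT p₁ n i` act. -/
def T (M : ARep p₁ n) : ℕ → Module.End ℂ M.carrier := M.rho ∘ heckeT p₁ n

/-- The operators by which the generators `heckeX p₁ n i` act. -/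
def X (M : ARep p₁ n) : ℕ → Module.End ℂ M.carrier := M.rho ∘ heckeX p₁ n

theorem isHeckeFamily (M : ARep p₁ n) (hp : p₁ ≠ 0) : IsHeckeFamily p₁ n Set.univ M.T M.X :=
  (HA.isHeckeFamily hp).map M.rho

theorem isIrredA_iff {M : ARep p₁ n} : IsIrredA M ↔ IsIrreducibleFamily n Set.univ M.T M.X :=
  ⟨fun h => ⟨nontrivial_of_ne _ _ h.1.choose_spec, fun W hW => h.2 W hW.apply_mem⟩, fun h =>
    ⟨have := h.nontrivial; exists_ne 0, fun W hW =>
      h.eq_bot_or_eq_top W ⟨fun _ _ _ => hW _, fun _ _ => hW _⟩⟩⟩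

theorem ofTypeA_iff {M : ARep p₁ n} : OfTypeA M S ↔ ∀ i < n, spectrum ℂ (M.X i) ⊆ S := by
  constructor
  · intro h i hi a ha
    obtain ⟨v, hv⟩ := (Module.End.HasEigenvalue.of_mem_spectrum ha).exists_hasEigenvector
    exact h ⟨i, hi⟩ a v hv.2 (heckeX_of_lt (p₁ := p₁) hi ▸ hv.apply_eq_smul)
  · intro h i a v hv hav
    rw [← heckeX_of_lt i.2] at hav
    exact h i i.2 (mem_spectrum_of_apply_eq_smul hv hav)

/-- The representation given by a Hecke family of operators. -/
def ofFamily {V : Type} [AddCommGroup V] [Module ℂ V] [FiniteDimensional ℂ V]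
    {t x : ℕ → Module.End ℂ V} (H : IsHeckeFamily p₁ n Set.univ t x) (hp : p₁ ≠ 0) :
    ARep p₁ n :=
  ⟨V, H.lift hp⟩

section OfFamily

variable {V : Type} [AddCommGroup V] [Module ℂ V] [FiniteDimensional ℂ V]
  {t x : ℕ → Module.End ℂ V} (H : IsHeckeFamily p₁ n Set.univ t x) (hp : p₁ ≠ 0)

theorem ofFamily_T {i : ℕ} (hi : i + 1 < n) : (ofFamily H hp).T i = t i := by
  rw [T, Function.comp_apply, heckeT_of_lt hi]
  exact H.lift_T hp _

theorem ofFamily_X {i : ℕ} (hi : i < n) : (ofFamily H hp).X i = x i := by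
  rw [X, Function.comp_apply, heckeX_of_lt hi]
  exact H.lift_X hp _

theorem isIrredA_ofFamily (h : IsIrreducibleFamily n Set.univ t x) : IsIrredA (ofFamily H hp) :=
  isIrredA_iff.2 ⟨h.nontrivial, fun W hW => h.eq_bot_or_eq_top W
    ⟨fun i hi hin => ofFamily_T H hp hin ▸ hW.T_mem i hi hin,
      fun i hi => ofFamily_X H hp hi ▸ hW.X_mem i hi⟩⟩

theorem ofTypeA_ofFamily (h : ∀ i < n, spectrum ℂ (x i) ⊆ S) : OfTypeA (ofFamily H hp) S :=
  ofTypeA_iff.2 fun i hi => (ofFamily_X H hp hi).symm ▸ h i hi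

end OfFamily

end ARep

end Representations

section TensorIrreducible

open scoped TensorProduct

variable {K M N : Type*} [Field K] [AddCommGroup M] [Module K M] [AddCommGroup N] [Module K N]

theorem burnside [IsAlgClosed K] [FiniteDimensional K M] [Nontrivial M]
    (A : Subalgebra K (Module.End K M))
    (hA : ∀ W : Submodule K M, (∀ a ∈ A, ∀ w ∈ W, a w ∈ W) → W = ⊥ ∨ W = ⊤) : A = ⊤ := by
  classical
  have : IsSimpleModule A M := by
    refine (isSimpleModule_iff A M).2 { eq_bot_or_eq_top := fun U => ?_ }
    exact (hA (U.restrictScalars K) fun a ha w hw => U.smul_mem (⟨a, ha⟩ : A) hw).imp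
      (Submodule.restrictScalars_eq_bot_iff K _ _).1 (Submodule.restrictScalars_eq_top_iff K _ _).1
  have hscalar := (IsSimpleModule.algebraMap_end_bijective_of_isAlgClosed (A := A) (V := M) K).2
  refine eq_top_iff.2 fun f _ => ?_
  let f' : Module.End (Module.End A M) M :=
    { toFun := f
      map_add' := f.map_add
      map_smul' := fun g v => by
        obtain ⟨z, rfl⟩ := hscalar g
        simp }
  let b := Module.finBasis K M
  obtain ⟨a, ha⟩ := jacobson_density (R := A) f' (Finset.univ.image b)
  have hfa : f = a := b.ext fun i => ha (b i) (Finset.mem_image_of_mem _ (Finset.mem_univ i))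
  exact hfa ▸ a.2

theorem rTensor_smulRight_coord {ι : Type*} [DecidableEq ι] (b : Module.Basis ι K M) (i : ι)
    (x : M) (u : M ⊗[K] N) : ((b.coord i).smulRight x).rTensor N u =
      x ⊗ₜ (TensorProduct.equivFinsuppOfBasisLeft b u i) := by
  induction u using TensorProduct.induction_on with
  | zero => simp only [map_zero, Finsupp.zero_apply, TensorProduct.tmul_zero]
  | add u v hu hv => rw [map_add, map_add, hu, hv, Finsupp.add_apply, TensorProduct.tmul_add]
  | tmul y z => simp [TensorProduct.smul_tmul]

theorem eq_top_of_rTensor_mem_of_lTensor_mem {U : Submodule K (M ⊗[K] N)} (hU : U ≠ ⊥)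
    (hM : ∀ f : Module.End K M, ∀ u ∈ U, f.rTensor N u ∈ U)
    (hN : ∀ f : Module.End K N, ∀ u ∈ U, f.lTensor M u ∈ U) : U = ⊤ := by
  classical
  obtain ⟨u, hu, hu0⟩ := U.ne_bot_iff.1 hU
  let b := Module.Basis.ofVectorSpace K M
  obtain ⟨i, hi⟩ : ∃ i, TensorProduct.equivFinsuppOfBasisLeft b u i ≠ 0 :=
    Finsupp.ne_iff.1 ((LinearEquiv.map_ne_zero_iff _).2 hu0)
  obtain ⟨φ, hφ⟩ := not_forall.1 (mt (Module.forall_dual_apply_eq_zero_iff K _).1 hi)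
  rw [eq_top_iff, ← TensorProduct.span_tmul_eq_top, Submodule.span_le]
  rintro _ ⟨x, y, rfl⟩
  have h := hN (φ.smulRight ((φ (TensorProduct.equivFinsuppOfBasisLeft b u i))⁻¹ • y)) _
    (rTensor_smulRight_coord b i x u ▸ hM _ u hu)
  rwa [LinearMap.lTensor_tmul, LinearMap.smulRight_apply, smul_smul, mul_inv_cancel₀ hφ,
    one_smul] at h

end TensorIrreducible

theorem IsIrredA.rho_surjective {p₁ : ℂ} {n : ℕ} {M : ARep p₁ n} (hM : IsIrredA M) :
    Function.Surjective M.rho := by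
  obtain ⟨v, hv⟩ := hM.1
  have : Nontrivial M.carrier := nontrivial_of_ne v 0 hv
  rw [← AlgHom.range_eq_top]
  exact burnside _ fun W hW => hM.2 W fun x w hw => hW _ ⟨x, rfl⟩ w hw

section LeviActions

variable {p₁ : ℂ} {m k : ℕ} {E Z : Type*} [AddCommGroup E] [Module ℂ E] [AddCommGroup Z]
  [Module ℂ Z] {em₁ : HA p₁ m →ₐ[ℂ] HA p₁ (m + k)} {em₂ : HA p₁ k →ₐ[ℂ] HA p₁ (m + k)}

/-- The operators by which the generators `T i`, `i ∈ leviIndices m`, act in a pair of commuting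
representations of the two factors. -/
def leviT (r : HA p₁ m →ₐ[ℂ] Module.End ℂ E) (s : HA p₁ k →ₐ[ℂ] Module.End ℂ E) :
    ℕ → Module.End ℂ E :=
  glue m (r ∘ heckeT p₁ m) (s ∘ heckeT p₁ k)

/-- The operators by which the generators `X i` act in a pair of commuting representations of the
two factors. -/
def leviX (r : HA p₁ m →ₐ[ℂ] Module.End ℂ E) (s : HA p₁ k →ₐ[ℂ] Module.End ℂ E) :
    ℕ → Module.End ℂ E :=
  glue m (r ∘ heckeX p₁ m) (s ∘ heckeX p₁ k)

variable {r : HA p₁ m →ₐ[ℂ] Module.End ℂ E} {s : HA p₁ k →ₐ[ℂ] Module.End ℂ E}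

theorem isHeckeFamily_levi (hrs : ∀ x y, Commute (r x) (s y)) (hp : p₁ ≠ 0) :
    IsHeckeFamily p₁ (m + k) (leviIndices m) (leviT r s) (leviX r s) :=
  ((HA.isHeckeFamily hp).map r).glue ((HA.isHeckeFamily hp).map s) (fun _ _ => hrs _ _)
    (fun _ _ => hrs _ _) (fun _ _ => hrs _ _) fun _ _ => hrs _ _

theorem IsStableUnder.of_levi {W : Submodule ℂ E}
    (hW : IsStableUnder (m + k) (leviIndices m) (leviT r s) (leviX r s) W) :
    IsStableUnder m Set.univ (r ∘ heckeT p₁ m) (r ∘ heckeX p₁ m) W ∧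
      IsStableUnder k Set.univ (s ∘ heckeT p₁ k) (s ∘ heckeX p₁ k) W := by
  refine ⟨⟨fun i _ hi => ?_, fun i hi => ?_⟩, ⟨fun i _ hi => ?_, fun i hi => ?_⟩⟩
  · have h := hW.T_mem i (ne_of_lt hi) (by lia)
    rwa [leviT, glue_of_lt _ _ (by lia)] at h
  · have h := hW.X_mem i (by lia)
    rwa [leviX, glue_of_lt _ _ hi] at h
  · have h := hW.T_mem (m + i) (Nat.ne_of_gt (by lia)) (by lia)
    rwa [leviT, glue_add] at h
  · have h := hW.X_mem (m + i) (by lia)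
    rwa [leviX, glue_add] at h

/-- The linear map `θ` commutes with the action of both factors, which act on its target through
the embeddings `em₁` and `em₂`. -/
structure IsLeviIntertwining (em₁ : HA p₁ m →ₐ[ℂ] HA p₁ (m + k))
    (em₂ : HA p₁ k →ₐ[ℂ] HA p₁ (m + k)) (r : HA p₁ m →ₐ[ℂ] Module.End ℂ E)
    (s : HA p₁ k →ₐ[ℂ] Module.End ℂ E) (R : HA p₁ (m + k) →ₐ[ℂ] Module.End ℂ Z)
    (θ : E →ₗ[ℂ] Z) : Prop where
  left : IsIntertwining r (R.comp em₁) θ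
  right : IsIntertwining s (R.comp em₂) θ

namespace IsLeviIntertwining

variable {R : HA p₁ (m + k) →ₐ[ℂ] Module.End ℂ Z} {θ : E →ₗ[ℂ] Z}
  (h₁ : IsEmb1 p₁ m (m + k) em₁) (h₂ : IsEmb2 p₁ m k (m + k) em₂)
include h₁ h₂

theorem T_apply (h : IsLeviIntertwining em₁ em₂ r s R θ) {i : ℕ} (hi : i ∈ leviIndices m)
    (hin : i + 1 < m + k) (e : E) : R (heckeT p₁ (m + k) i) (θ e) = θ (leviT r s i e) := by
  rcases lt_or_exists_add_of_mem_leviIndices hi with hi | ⟨i, rfl⟩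
  · rw [leviT, glue_of_lt _ _ (by lia), ← h₁.map_T hi]
    exact (h.left _ e).symm
  · rw [leviT, glue_add, ← h₂.map_T (by lia)]
    exact (h.right _ e).symm

theorem X_apply (h : IsLeviIntertwining em₁ em₂ r s R θ) {i : ℕ} (hi : i < m + k) (e : E) :
    R (heckeX p₁ (m + k) i) (θ e) = θ (leviX r s i e) := by
  rcases lt_or_ge i m with him | him
  · rw [leviX, glue_of_lt _ _ him, ← h₁.map_X him]
    exact (h.left _ e).symm
  · obtain ⟨i, rfl⟩ := Nat.exists_eq_add_of_le him
    rw [leviX, glue_add, ← h₂.map_X (by lia)]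
    exact (h.right _ e).symm

theorem of_generators
    (hT : ∀ i ∈ leviIndices m, i + 1 < m + k →
      ∀ e, R (heckeT p₁ (m + k) i) (θ e) = θ (leviT r s i e))
    (hX : ∀ i < m + k, ∀ e, R (heckeX p₁ (m + k) i) (θ e) = θ (leviX r s i e)) :
    IsLeviIntertwining em₁ em₂ r s R θ := by
  refine ⟨HA.isIntertwining (fun i hi e => ?_) fun i hi e => ?_,
    HA.isIntertwining (fun i hi e => ?_) fun i hi e => ?_⟩
  · have h := hT i (ne_of_lt hi) (by lia) e
    rw [leviT, glue_of_lt _ _ (by lia), ← h₁.map_T hi] at h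
    exact h.symm
  · have h := hX i (by lia) e
    rw [leviX, glue_of_lt _ _ hi, ← h₁.map_X hi] at h
    exact h.symm
  · have h := hT (m + i) (Nat.ne_of_gt (by lia)) (by lia) e
    rw [leviT, glue_add, ← h₂.map_T hi] at h
    exact h.symm
  · have h := hX (m + i) (by lia) e
    rw [leviX, glue_add, ← h₂.map_X hi] at h
    exact h.symm

end IsLeviIntertwining

end LeviActions

section Lift

open scoped TensorProduct

variable {K M N V Z : Type*} [Field K] [AddCommGroup M] [Module K M] [AddCommGroup N] [Module K N]
  [AddCommGroup V] [Module K V] [AddCommGroup Z] [Module K Z]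

theorem exists_lift_eq (χ : M ⊗[K] N →ₗ[K] V) :
    ∃ φ : M →ₗ[K] N →ₗ[K] V, TensorProduct.lift φ = χ :=
  (TensorProduct.lift.equiv (.id K) M N V).surjective χ

theorem apply_lift_eq_lift_iff {φ : M →ₗ[K] N →ₗ[K] V} {ψ : M →ₗ[K] N →ₗ[K] Z} {g : V →ₗ[K] Z} :
    (∀ e, g (TensorProduct.lift φ e) = TensorProduct.lift ψ e) ↔ ∀ u v, g (φ u v) = ψ u v :=
  ⟨fun h u v => h (u ⊗ₜ v), fun h => LinearMap.congr_fun
    (TensorProduct.ext' h : g ∘ₗ TensorProduct.lift φ = TensorProduct.lift ψ)⟩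

end Lift

section InducedModules

open scoped TensorProduct

variable {p₁ : ℂ} {m k n : ℕ}

theorem IsIntertwining.ker_mem {V V' : ARep p₁ n} {g : V.carrier →ₗ[ℂ] V'.carrier}
    (hg : IsIntertwining V.rho V'.rho g) (x : HA p₁ n) :
    ∀ w ∈ LinearMap.ker g, V.rho x w ∈ LinearMap.ker g := fun w hw => by
  rw [LinearMap.mem_ker, hg, LinearMap.mem_ker.1 hw, map_zero]

theorem IsIntertwining.range_mem {V V' : ARep p₁ n} {g : V.carrier →ₗ[ℂ] V'.carrier}
    (hg : IsIntertwining V.rho V'.rho g) (x : HA p₁ n) :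
    ∀ w ∈ LinearMap.range g, V'.rho x w ∈ LinearMap.range g := by
  rintro _ ⟨w, rfl⟩
  exact ⟨_, hg x w⟩

theorem IsIntertwining.comap_mem {V V' : ARep p₁ n} {g : V.carrier →ₗ[ℂ] V'.carrier}
    (hg : IsIntertwining V.rho V'.rho g) {W : Submodule ℂ V'.carrier}
    (hW : ∀ x, ∀ w ∈ W, V'.rho x w ∈ W) (x : HA p₁ n) :
    ∀ w ∈ W.comap g, V.rho x w ∈ W.comap g := fun w hw => by
  rw [Submodule.mem_comap, hg]
  exact hW x _ hw

theorem IsIrredA.of_surjective {V V' : ARep p₁ n} (hV : IsIrredA V)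
    {g : V.carrier →ₗ[ℂ] V'.carrier} (hg : IsIntertwining V.rho V'.rho g)
    (hsurj : Function.Surjective g) (hne : ∃ v : V'.carrier, v ≠ 0) : IsIrredA V' := by
  refine ⟨hne, fun W hW => (hV.2 _ (hg.comap_mem hW)).imp (fun h => ?_) fun h => ?_⟩
  · rw [← Submodule.map_comap_eq_of_surjective hsurj W, h, Submodule.map_bot]
  · rw [← Submodule.map_comap_eq_of_surjective hsurj W, h, Submodule.map_top,
      LinearMap.range_eq_top.2 hsurj]

theorem OfTypeA.of_injective {V V' : ARep p₁ n} {S : Set ℂ} (hV : OfTypeA V S)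
    {g : V'.carrier →ₗ[ℂ] V.carrier} (hg : IsIntertwining V'.rho V.rho g)
    (hinj : Function.Injective g) : OfTypeA V' S := fun i a v hv hav =>
  hV i a (g v) ((map_ne_zero_iff g hinj).2 hv) (by rw [← hg, hav, map_smul])

theorem IsIntertwining.symm {V V' : ARep p₁ n} {g : V.carrier ≃ₗ[ℂ] V'.carrier}
    (hg : IsIntertwining V.rho V'.rho g) : IsIntertwining V'.rho V.rho g.symm := fun x w => by
  refine g.injective ?_
  simpa using (hg x (g.symm w)).symm

theorem IsIntertwining.comp {U V W : ARep p₁ n} {f : V.carrier →ₗ[ℂ] W.carrier}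
    {g : U.carrier →ₗ[ℂ] V.carrier} (hf : IsIntertwining V.rho W.rho f)
    (hg : IsIntertwining U.rho V.rho g) : IsIntertwining U.rho W.rho (f ∘ₗ g) := fun x u => by
  rw [LinearMap.comp_apply, hg, hf, LinearMap.comp_apply]

namespace ARep

variable (M : ARep p₁ m) (N : ARep p₁ k)

/-- The action of the first factor on the tensor product of two representations. -/
def tensorLeft : HA p₁ m →ₐ[ℂ] Module.End ℂ (M.carrier ⊗[ℂ] N.carrier) :=
  (Module.End.rTensorAlgHom ℂ M.carrier N.carrier).comp M.rho

/-- The action of the second factor on the tensor product of two representations. -/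
def tensorRight : HA p₁ k →ₐ[ℂ] Module.End ℂ (M.carrier ⊗[ℂ] N.carrier) :=
  (Module.End.lTensorAlgHom ℂ N.carrier M.carrier).comp N.rho

theorem commute_tensorLeft_tensorRight (x : HA p₁ m) (y : HA p₁ k) :
    Commute (tensorLeft M N x) (tensorRight M N y) :=
  (LinearMap.rTensor_comp_lTensor _ _ _).trans (LinearMap.lTensor_comp_rTensor _ _ _).symm

variable {M N}

theorem isIrreducibleFamily_tensor (hM : IsIrredA M) (hN : IsIrredA N) :
    IsIrreducibleFamily (m + k) (leviIndices m) (leviT (tensorLeft M N) (tensorRight M N))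
      (leviX (tensorLeft M N) (tensorRight M N)) where
  nontrivial := by
    have := nontrivial_of_ne _ _ hM.1.choose_spec
    have := nontrivial_of_ne _ _ hN.1.choose_spec
    infer_instance
  eq_bot_or_eq_top W hW := by
    refine or_iff_not_imp_left.2 fun hW0 => eq_top_of_rTensor_mem_of_lTensor_mem hW0 ?_ ?_
    · exact hM.rho_surjective.forall.2 hW.of_levi.1.apply_mem
    · exact hN.rho_surjective.forall.2 hW.of_levi.2.apply_mem

variable {I J : Set ℂ}

theorem spectrum_leviX_tensor_of_lt (hM : OfTypeA M I) {i : ℕ} (hi : i < m) :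
    spectrum ℂ (leviX (tensorLeft M N) (tensorRight M N) i) ⊆ I := by
  rw [leviX, glue_of_lt _ _ hi]
  exact (AlgHom.spectrum_apply_subset (Module.End.rTensorAlgHom ℂ M.carrier N.carrier) _).trans
    (ofTypeA_iff.1 hM i hi)

theorem spectrum_leviX_tensor_of_ge (hN : OfTypeA N J) {i : ℕ} (hi : i < m + k) (hmi : m ≤ i) :
    spectrum ℂ (leviX (tensorLeft M N) (tensorRight M N) i) ⊆ J := by
  obtain ⟨i, rfl⟩ := Nat.exists_eq_add_of_le hmi
  rw [leviX, glue_add]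
  exact (AlgHom.spectrum_apply_subset (Module.End.lTensorAlgHom ℂ N.carrier M.carrier) _).trans
    (ofTypeA_iff.1 hN i (by lia))

end ARep

open ARep

variable {em₁ : HA p₁ m →ₐ[ℂ] HA p₁ (m + k)} {em₂ : HA p₁ k →ₐ[ℂ] HA p₁ (m + k)}
  {M : ARep p₁ m} {N : ARep p₁ k} {V Z : ARep p₁ (m + k)}
  {θ : M.carrier ⊗[ℂ] N.carrier →ₗ[ℂ] V.carrier} {χ : M.carrier ⊗[ℂ] N.carrier →ₗ[ℂ] Z.carrier}

/-- The map `χ` from the tensor product of `M` and `N` to the restriction of `Z` to the two factors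
is a homomorphism of representations. -/
def IsTensorHom (em₁ : HA p₁ m →ₐ[ℂ] HA p₁ (m + k)) (em₂ : HA p₁ k →ₐ[ℂ] HA p₁ (m + k))
    (χ : M.carrier ⊗[ℂ] N.carrier →ₗ[ℂ] Z.carrier) : Prop :=
  IsLeviIntertwining em₁ em₂ (tensorLeft M N) (tensorRight M N) Z.rho χ

theorem isTensorHom_lift_iff {ψ : M.carrier →ₗ[ℂ] N.carrier →ₗ[ℂ] Z.carrier} :
    IsTensorHom em₁ em₂ (TensorProduct.lift ψ) ↔
      (∀ x u v, ψ (M.rho x u) v = Z.rho (em₁ x) (ψ u v)) ∧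
        ∀ y u v, ψ u (N.rho y v) = Z.rho (em₂ y) (ψ u v) := by
  refine ⟨fun h => ⟨fun x u v => h.left x (u ⊗ₜ v), fun y u v => h.right y (u ⊗ₜ v)⟩, fun h => ?_⟩
  have hl (x : HA p₁ m) : TensorProduct.lift ψ ∘ₗ tensorLeft M N x =
      Z.rho (em₁ x) ∘ₗ TensorProduct.lift ψ := TensorProduct.ext' (h.1 x)
  have hr (y : HA p₁ k) : TensorProduct.lift ψ ∘ₗ tensorRight M N y =
      Z.rho (em₂ y) ∘ₗ TensorProduct.lift ψ := TensorProduct.ext' (h.2 y)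
  exact ⟨fun x => LinearMap.congr_fun (hl x), fun y => LinearMap.congr_fun (hr y)⟩

theorem IsTensorHom.comp (hθ : IsTensorHom em₁ em₂ θ) {g : V.carrier →ₗ[ℂ] Z.carrier}
    (hg : IsIntertwining V.rho Z.rho g) : IsTensorHom em₁ em₂ (g ∘ₗ θ) where
  left x e := by
    rw [LinearMap.comp_apply, hθ.left]
    exact hg _ _
  right y e := by
    rw [LinearMap.comp_apply, hθ.right]
    exact hg _ _

/-- The images of `θ` generate the representation `V`. -/
def Generates (θ : M.carrier ⊗[ℂ] N.carrier →ₗ[ℂ] V.carrier) : Prop :=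
  ∀ W : Submodule ℂ V.carrier, (∀ z, ∀ w ∈ W, V.rho z w ∈ W) → (∀ e, θ e ∈ W) → W = ⊤

theorem Generates.hom_ext (hθ : Generates θ) {g g' : V.carrier →ₗ[ℂ] Z.carrier}
    (hg : IsIntertwining V.rho Z.rho g) (hg' : IsIntertwining V.rho Z.rho g')
    (h : ∀ e, g (θ e) = g' (θ e)) : g = g' := by
  refine LinearMap.eqLocus_eq_top.1 (hθ _ (fun z w hw => ?_) h)
  rw [LinearMap.mem_eqLocus, hg, hg', LinearMap.mem_eqLocus.1 hw]

/-- The homomorphism `θ` exhibits `V` as the induced representation of `M` and `N`; this is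
`IsInducedA` in terms of the tensor product. -/
structure IsUniversal (em₁ : HA p₁ m →ₐ[ℂ] HA p₁ (m + k)) (em₂ : HA p₁ k →ₐ[ℂ] HA p₁ (m + k))
    (θ : M.carrier ⊗[ℂ] N.carrier →ₗ[ℂ] V.carrier) : Prop where
  isTensorHom : IsTensorHom em₁ em₂ θ
  generates : Generates θ
  exists_lift : ∀ (Z : ARep p₁ (m + k)) (χ : M.carrier ⊗[ℂ] N.carrier →ₗ[ℂ] Z.carrier),
    IsTensorHom em₁ em₂ χ →
      ∃ g : V.carrier →ₗ[ℂ] Z.carrier, IsIntertwining V.rho Z.rho g ∧ ∀ e, g (θ e) = χ e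

theorem isInducedA_iff : IsInducedA em₁ em₂ M N V ↔
    ∃ θ : M.carrier ⊗[ℂ] N.carrier →ₗ[ℂ] V.carrier, IsUniversal em₁ em₂ θ := by
  constructor
  · rintro ⟨φ, hl, hr, hgen, hlift⟩
    refine ⟨TensorProduct.lift φ, isTensorHom_lift_iff.2 ⟨hl, hr⟩,
      fun W hW h => hgen W hW fun u v => h (u ⊗ₜ v), fun Z χ hχ => ?_⟩
    obtain ⟨ψ, rfl⟩ := exists_lift_eq χ
    obtain ⟨hψl, hψr⟩ := isTensorHom_lift_iff.1 hχ
    obtain ⟨g, ⟨hg, hgφ⟩, -⟩ := hlift Z ψ hψl hψr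
    exact ⟨g, hg, apply_lift_eq_lift_iff.2 hgφ⟩
  · rintro ⟨θ, hθ⟩
    obtain ⟨φ, rfl⟩ := exists_lift_eq θ
    obtain ⟨hl, hr⟩ := isTensorHom_lift_iff.1 hθ.isTensorHom
    refine ⟨φ, hl, hr, fun W hW h => hθ.generates W hW fun e => ?_, fun Z ψ hψl hψr => ?_⟩
    · induction e using TensorProduct.induction_on with
      | zero => rw [map_zero]; exact W.zero_mem
      | tmul u v => exact h u v
      | add e e' he he' => rw [map_add]; exact W.add_mem he he'
    · obtain ⟨g, hg, hgθ⟩ := hθ.exists_lift Z _ (isTensorHom_lift_iff.2 ⟨hψl, hψr⟩)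
      refine ⟨g, ⟨hg, apply_lift_eq_lift_iff.1 hgθ⟩, fun g' ⟨hg', hgφ'⟩ => ?_⟩
      exact hθ.generates.hom_ext hg' hg fun e => by rw [hgθ, apply_lift_eq_lift_iff.2 hgφ']

theorem IsUniversal.comp_equiv (hθ : IsUniversal em₁ em₂ θ) {g : V.carrier ≃ₗ[ℂ] Z.carrier}
    (hg : IsIntertwining V.rho Z.rho g) (hgθ : ∀ e, g (θ e) = χ e) : IsUniversal em₁ em₂ χ := by
  obtain rfl : g.toLinearMap ∘ₗ θ = χ := LinearMap.ext hgθ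
  refine ⟨hθ.isTensorHom.comp hg, fun W hW h => ?_, fun Y υ hυ => ?_⟩
  · have := hθ.generates _ (hg.comap_mem hW) h
    rw [← Submodule.map_comap_eq_of_surjective (f := g.toLinearMap) g.surjective W, this,
      Submodule.map_top, LinearEquiv.range]
  · obtain ⟨f, hf, hfθ⟩ := hθ.exists_lift Y υ hυ
    exact ⟨f ∘ₗ g.symm.toLinearMap, hf.comp hg.symm, fun e => by simp [hfθ]⟩

theorem IsUniversal.exists_equiv (hθ : IsUniversal em₁ em₂ θ) (hV : IsIrredA V)
    (hχ : IsTensorHom em₁ em₂ χ) (hgen : Generates χ) (hne : χ ≠ 0) :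
    ∃ g : V.carrier ≃ₗ[ℂ] Z.carrier, IsIntertwining V.rho Z.rho g ∧ ∀ e, g (θ e) = χ e := by
  obtain ⟨g, hg, hgθ⟩ := hθ.exists_lift Z χ hχ
  have hker : LinearMap.ker g = ⊥ := by
    refine (hV.2 _ hg.ker_mem).resolve_right fun h => hne (LinearMap.ext fun e => ?_)
    rw [← hgθ, LinearMap.ker_eq_top.1 h, LinearMap.zero_apply, LinearMap.zero_apply]
  have hrange : LinearMap.range g = ⊤ := hgen _ hg.range_mem fun e => ⟨θ e, hgθ e⟩
  exact ⟨LinearEquiv.ofBijective g ⟨LinearMap.ker_eq_bot.1 hker, LinearMap.range_eq_top.1 hrange⟩,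
    hg, hgθ⟩

end InducedModules

section Existence

open scoped TensorProduct
open ARep

variable {p₁ : ℂ} {m k : ℕ} {I J : Set ℂ} {M : ARep p₁ m} {N : ARep p₁ k}

/-- The induced representation of `M` and `N`, for `M` and `N` of separated types. -/
def inducedRep (H : IsSeparatedFamily p₁ (m + k) m (leviT (tensorLeft M N) (tensorRight M N))
    (leviX (tensorLeft M N) (tensorRight M N))) (hp : p₁ ≠ 0) : ARep p₁ (m + k) :=
  ofFamily (H.isHeckeFamily_induced hp) hp

variable {em₁ : HA p₁ m →ₐ[ℂ] HA p₁ (m + k)} {em₂ : HA p₁ k →ₐ[ℂ] HA p₁ (m + k)}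

theorem isUniversal_lsingle_one (h₁ : IsEmb1 p₁ m (m + k) em₁) (h₂ : IsEmb2 p₁ m k (m + k) em₂)
    (H : IsSeparatedFamily p₁ (m + k) m (leviT (tensorLeft M N) (tensorRight M N))
      (leviX (tensorLeft M N) (tensorRight M N))) (hp : p₁ ≠ 0) :
    IsUniversal em₁ em₂ (V := inducedRep H hp) (Finsupp.lsingle 1) where
  isTensorHom := by
    refine IsLeviIntertwining.of_generators h₁ h₂ (fun i hi hin e => ?_) fun i hi e => ?_
    · exact (LinearMap.congr_fun (ofFamily_T _ hp hin) _).trans (inducedT_single_one hi hin e)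
    · exact (LinearMap.congr_fun (ofFamily_X _ hp hi) _).trans (inducedX_single_one i e)
  generates W hW hone := H.eq_top_of_single_one_mem hp
    (fun i hi f hf => ofFamily_T (H.isHeckeFamily_induced hp) hp hi ▸ hW _ f hf) hone
  exists_lift Z χ hχ := by
    have F := H.isShuffleFrame_intertwiner hp (Z.isHeckeFamily hp)
      (fun i hi hin e => hχ.T_apply h₁ h₂ hi hin e) fun i hi e => hχ.X_apply h₁ h₂ hi e
    refine ⟨Finsupp.lsum ℂ (intertwiner p₁ (leviT (tensorLeft M N) (tensorRight M N))
        (leviX (tensorLeft M N) (tensorRight M N)) Z.T χ),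
      HA.isIntertwining (fun i hi f => ?_) (fun i hi f => ?_), fun e => ?_⟩
    · exact (congrArg _ (LinearMap.congr_fun (ofFamily_T _ hp hi) f)).trans (F.lsum_inducedT hi f)
    · exact (congrArg _ (LinearMap.congr_fun (ofFamily_X _ hp hi) f)).trans (F.lsum_inducedX hi f)
    · exact (Finsupp.lsum_single _ _ _ _).trans (LinearMap.congr_fun intertwiner_one e)

theorem exists_isUniversal (h₁ : IsEmb1 p₁ m (m + k) em₁) (h₂ : IsEmb2 p₁ m k (m + k) em₂)
    (hp : p₁ ≠ 0) (hIJ : IsSeparatedPair p₁ I J) (hM : IsIrredA M) (hMI : OfTypeA M I)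
    (hN : IsIrredA N) (hNJ : OfTypeA N J) :
    ∃ (V : ARep p₁ (m + k)) (θ : M.carrier ⊗[ℂ] N.carrier →ₗ[ℂ] V.carrier),
      IsUniversal em₁ em₂ θ ∧ IsIrredA V ∧ OfTypeA V (I ∪ J) := by
  have H := isHeckeFamily_levi (commute_tensorLeft_tensorRight M N) hp
  have hI (i : ℕ) (_ : i < m + k) (him : i < m) := spectrum_leviX_tensor_of_lt (N := N) hMI him
  have hJ (i : ℕ) (hi : i < m + k) (hmi : m ≤ i) := spectrum_leviX_tensor_of_ge (M := M) hNJ hi hmi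
  have H' := H.isSeparatedFamily hp hIJ hI hJ
  exact ⟨inducedRep H' hp, _, isUniversal_lsingle_one h₁ h₂ H' hp,
    isIrredA_ofFamily _ _ ((isIrreducibleFamily_tensor hM hN).induced H hp hIJ hI hJ),
    ofTypeA_ofFamily _ _ fun i hi => spectrum_inducedX_subset hI hJ hi⟩

theorem IsUniversal.isIrredA_and_ofTypeA {V : ARep p₁ (m + k)}
    {θ : M.carrier ⊗[ℂ] N.carrier →ₗ[ℂ] V.carrier} (hθ : IsUniversal em₁ em₂ θ)
    (h₁ : IsEmb1 p₁ m (m + k) em₁) (h₂ : IsEmb2 p₁ m k (m + k) em₂)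
    (hp : p₁ ≠ 0) (hIJ : IsSeparatedPair p₁ I J) (hM : IsIrredA M) (hMI : OfTypeA M I)
    (hN : IsIrredA N) (hNJ : OfTypeA N J) : IsIrredA V ∧ OfTypeA V (I ∪ J) := by
  obtain ⟨V₀, θ₀, hθ₀, hV₀, hV₀IJ⟩ := exists_isUniversal h₁ h₂ hp hIJ hM hMI hN hNJ
  obtain ⟨g, -, hgθ⟩ := hθ.exists_lift V₀ θ₀ hθ₀.isTensorHom
  obtain ⟨v, hv⟩ := hV₀.1
  have hne : θ ≠ 0 := fun h => hv <| by
    have := hθ₀.generates ⊥ (by simp) fun e => by rw [← hgθ, h]; simp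
    simpa using this.ge (Submodule.mem_top : v ∈ ⊤)
  obtain ⟨e, he, -⟩ := hθ₀.exists_equiv hV₀ hθ.isTensorHom hθ.generates hne
  exact ⟨hV₀.of_surjective he e.surjective ⟨e v, (map_ne_zero_iff e e.injective).2 hv⟩,
    hV₀IJ.of_injective he.symm e.symm.injective⟩

end Existence

section SpectralPart

open Polynomial

variable {K V : Type*} [Field K] [AddCommGroup V] [Module K V] {f g T : Module.End K V}
  {S : Set K} {U : Submodule K V}

/-- The vectors annihilated by a polynomial in `f` whose roots all lie in `S`. If `K` is
algebraically closed and `V` is finite-dimensional, this is the sum of the generalized eigenspaces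
of `f` with eigenvalue in `S`. -/
def spectralPart (f : Module.End K V) (S : Set K) : Submodule K V where
  carrier := {v | ∃ P : K[X], (∀ a, P.IsRoot a → a ∈ S) ∧ aeval f P v = 0}
  add_mem' := by
    rintro v w ⟨P, hP, hv⟩ ⟨Q, hQ, hw⟩
    refine ⟨P * Q, fun a ha => (root_mul.1 ha).elim (hP a) (hQ a), ?_⟩
    have hPQv : aeval f (P * Q) v = 0 := by
      rw [mul_comm, map_mul, Module.End.mul_apply, hv, map_zero]
    have hPQw : aeval f (P * Q) w = 0 := by rw [map_mul, Module.End.mul_apply, hw, map_zero]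
    rw [map_add, hPQv, hPQw, add_zero]
  zero_mem' := ⟨1, fun a ha => (one_ne_zero (eval_one.symm.trans ha)).elim, map_zero _⟩
  smul_mem' := by
    rintro c v ⟨P, hP, hv⟩
    exact ⟨P, hP, by rw [map_smul, hv, smul_zero]⟩

theorem mem_spectralPart_of_apply_eq_smul {a : K} {v : V} (ha : a ∈ S) (hv : f v = a • v) :
    v ∈ spectralPart f S :=
  ⟨X - C a, fun b hb => root_X_sub_C.1 hb ▸ ha,
    by rw [Module.End.aeval_apply_of_mem_apply_eq_smul hv]; simp⟩

theorem mem_of_mem_spectralPart {a : K} {v : V} (h : v ∈ spectralPart f S) (hv0 : v ≠ 0)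
    (hv : f v = a • v) : a ∈ S := by
  obtain ⟨P, hP, hPv⟩ := h
  rw [Module.End.aeval_apply_of_mem_apply_eq_smul hv] at hPv
  exact hP a ((smul_eq_zero.1 hPv).resolve_right hv0)

theorem mem_spectralPart_of_aeval_mem {P : K[X]} {v : V} (hP : ∀ a, P.IsRoot a → a ∈ S)
    (h : aeval f P v ∈ spectralPart f S) : v ∈ spectralPart f S := by
  obtain ⟨Q, hQ, hv⟩ := h
  exact ⟨Q * P, fun a ha => (root_mul.1 ha).elim (hQ a) (hP a), by rwa [map_mul]⟩

theorem apply_mem_spectralPart_of_commute (h : Commute f g) {v : V} (hv : v ∈ spectralPart f S) :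
    g v ∈ spectralPart f S := by
  obtain ⟨P, hP, hPv⟩ := hv
  have h' : aeval f P * g = g * aeval f P := (Algebra.commute_of_mem_adjoin_singleton_of_commute
    (aeval_mem_adjoin_singleton K f) h.symm).symm.eq
  refine ⟨P, hP, ?_⟩
  rw [← Module.End.mul_apply, h', Module.End.mul_apply, hPv, map_zero]

theorem aeval_apply_sub_apply_aeval_mem (hf : U ≤ U.comap f) (hg : U ≤ U.comap g)
    (hT : ∀ u ∈ U, f (T u) - T (g u) ∈ U) (P : K[X]) :
    ∀ u ∈ U, aeval f P (T u) - T (aeval g P u) ∈ U := by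
  induction P using Polynomial.induction_on with
  | C a => simp
  | add P Q hP hQ =>
    intro u hu
    have := U.add_mem (hP u hu) (hQ u hu)
    simp only [map_add, LinearMap.add_apply]
    convert this using 1
    abel
  | monomial n a ih =>
    intro u hu
    have hdiff := aeval_apply_smul_mem_of_le_comap (hT u hu) (C a * X ^ n) f hf
    convert U.add_mem hdiff (ih (g u) (hg hu)) using 1
    rw [pow_succ, ← mul_assoc]
    simp only [map_mul (aeval _) _ X, aeval_X, Module.End.mul_apply, map_sub]
    abel

-- If `P(g) u = 0`, the hypothesis puts `P(f) (T u)` into `U`.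
theorem apply_mem_spectralPart_of_sub_mem (hf : U ≤ U.comap f) (hg : U ≤ U.comap g)
    (hT : ∀ u ∈ U, f (T u) - T (g u) ∈ U) (hUf : U ≤ spectralPart f S)
    (hUg : U ≤ spectralPart g S) {u : V} (hu : u ∈ U) : T u ∈ spectralPart f S := by
  obtain ⟨P, hP, hPu⟩ := hUg hu
  have h := aeval_apply_sub_apply_aeval_mem hf hg hT P u hu
  rw [hPu, map_zero, sub_zero] at h
  exact mem_spectralPart_of_aeval_mem hP (hUf h)

end SpectralPart

section WeightPart

variable {K V : Type*} [Field K] [AddCommGroup V] [Module K V] {p : K} {n : ℕ} {D : Set ℕ}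
  {T X : ℕ → Module.End K V} {S : ℕ → Set K} {v : V}

/-- The sum of the simultaneous generalized eigenspaces of `X 0, …, X (n - 1)` such that the
eigenvalue of `X i` lies in `S i`. -/
def weightPart (n : ℕ) (X : ℕ → Module.End K V) (S : ℕ → Set K) : Submodule K V :=
  ⨅ i < n, spectralPart (X i) (S i)

theorem mem_weightPart : v ∈ weightPart n X S ↔ ∀ i < n, v ∈ spectralPart (X i) (S i) := by
  simp only [weightPart, Submodule.mem_iInf]

theorem IsWeightVector.mem_weightPart {a : ℕ → K} (hv : IsWeightVector n X a v)
    (ha : ∀ i < n, a i ∈ S i) : v ∈ weightPart n X S :=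
  _root_.mem_weightPart.2 fun i hi => mem_spectralPart_of_apply_eq_smul (ha i hi) (hv.apply i hi)

namespace IsHeckeFamily

theorem mono {D' : Set ℕ} (H : IsHeckeFamily p n D T X) (h : D' ⊆ D) : IsHeckeFamily p n D' T X :=
  ⟨H.X_comm, H.X_isUnit, fun i hi => H.T_mul_self i (h hi),
    fun i hi hi' => H.braid i (h hi) (h hi'), fun i hi j hj => H.T_comm i (h hi) j (h hj),
    fun i hi => H.TXT i (h hi), fun i hi => H.T_comm_X i (h hi)⟩

theorem X_mul_T_sub_T_mul_X_swap (H : IsHeckeFamily p n D T X) {i j : ℕ} (hD : i ∈ D)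
    (hi : i + 1 < n) (hj : j < n) :
    ∃ c : K, X j * T i - T i * X (Equiv.swap i (i + 1) j) = c • X (i + 1) := by
  rcases eq_or_ne j i with rfl | h
  · refine ⟨-(p - p⁻¹), ?_⟩
    rw [Equiv.swap_apply_left, H.T_mul_X_succ hD hi]
    module
  rcases eq_or_ne j (i + 1) with rfl | h'
  · refine ⟨p - p⁻¹, ?_⟩
    rw [Equiv.swap_apply_right, H.T_mul_X hD hi]
    module
  · refine ⟨0, ?_⟩
    rw [Equiv.swap_apply_of_ne_of_ne h h', (H.T_comm_X i hD j hj hi h h').eq, sub_self, zero_smul]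

theorem isStableUnder_weightPart (H : IsHeckeFamily p n D T X)
    (hS : ∀ i ∈ D, i + 1 < n → S (i + 1) = S i) : IsStableUnder n D T X (weightPart n X S) := by
  have hX (i : ℕ) (hi : i < n) : weightPart n X S ≤ (weightPart n X S).comap (X i) := fun v hv =>
    mem_weightPart.2 fun j hj =>
      apply_mem_spectralPart_of_commute (H.X_comm j hj i hi) (mem_weightPart.1 hv j hj)
  refine ⟨fun i hD hi v hv => mem_weightPart.2 fun j hj => ?_, hX⟩
  obtain ⟨c, hc⟩ := H.X_mul_T_sub_T_mul_X_swap hD hi hj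
  have hswap : Equiv.swap i (i + 1) j < n ∧ S (Equiv.swap i (i + 1) j) = S j := by
    rw [Equiv.swap_apply_def]
    split_ifs with h h'
    · exact ⟨hi, h ▸ hS i hD hi⟩
    · exact ⟨by lia, h' ▸ (hS i hD hi).symm⟩
    · exact ⟨hj, rfl⟩
  refine apply_mem_spectralPart_of_sub_mem (hX j hj) (hX _ hswap.1) (fun u hu => ?_)
    (fun u hu => mem_weightPart.1 hu j hj)
    (fun u hu => hswap.2 ▸ mem_weightPart.1 hu _ hswap.1) hv
  have hu' : X (i + 1) u ∈ weightPart n X S := hX _ hi hu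
  have hcu : X j (T i u) - T i (X (Equiv.swap i (i + 1) j) u) = c • X (i + 1) u :=
    LinearMap.congr_fun hc u
  exact hcu ▸ Submodule.smul_mem _ c hu'

end IsHeckeFamily

theorem exists_add_eq_of_sorted {A : Type*} {I J : Set A} {a : ℕ → A}
    (ha : ∀ i < n, a i ∈ I ∪ J) (h : ∀ i, i + 1 < n → a i ∈ J → a (i + 1) ∈ J) :
    ∃ m k, m + k = n ∧ ∀ i < n, a i ∈ if i < m then I else J := by
  classical
  have hex : ∃ m, m = n ∨ a m ∈ J := ⟨n, Or.inl rfl⟩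
  have hle : Nat.find hex ≤ n := Nat.find_min' hex (Or.inl rfl)
  refine ⟨Nat.find hex, n - Nat.find hex, by lia, fun i hi => ?_⟩
  split_ifs with him
  · exact (ha i hi).resolve_right fun hJ => Nat.find_min hex him (Or.inr hJ)
  · have hmi : Nat.find hex ≤ i := not_lt.1 him
    have hmJ : a (Nat.find hex) ∈ J := (Nat.find_spec hex).resolve_left (by lia)
    induction i, hmi using Nat.le_induction with
    | base => exact hmJ
    | succ i hmi ih => exact h i hi (ih (by lia) (by lia))

end WeightPart

section Constituents

open scoped TensorProduct
open ARep

variable {p₁ : ℂ} {m k n : ℕ} {I J S : Set ℂ}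

namespace ARep

/-- The restriction of a representation to a stable subspace. -/
def subrep (M : ARep p₁ n) (W : Submodule ℂ M.carrier) (hW : ∀ x, ∀ w ∈ W, M.rho x w ∈ W) :
    ARep p₁ n where
  carrier := W
  rho := AlgHom.ofLinearMap
    { toFun x := (M.rho x).restrict (hW x)
      map_add' x y := by ext w; simp
      map_smul' c x := by ext w; simp }
    (by ext w; simp) (fun x y => by ext w; simp)

theorem exists_isIrredA_le {M : ARep p₁ n} {U : Submodule ℂ M.carrier}
    (hU : ∀ x, ∀ w ∈ U, M.rho x w ∈ U) (hU0 : U ≠ ⊥) :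
    ∃ (N : ARep p₁ n) (ι : N.carrier →ₗ[ℂ] M.carrier), IsIrredA N ∧
      IsIntertwining N.rho M.rho ι ∧ Function.Injective ι ∧ ∀ u, ι u ∈ U := by
  obtain ⟨W, hWU, hW⟩ := exists_minimal_le_of_wellFoundedLT
    (fun W : Submodule ℂ M.carrier => W ≠ ⊥ ∧ ∀ x, ∀ w ∈ W, M.rho x w ∈ W) U ⟨hU0, hU⟩
  obtain ⟨w, hw, hw0⟩ := W.ne_bot_iff.1 hW.prop.1
  have hι : IsIntertwining (M.subrep W hW.prop.2).rho M.rho W.subtype := fun _ _ => rfl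
  refine ⟨M.subrep W hW.prop.2, W.subtype, ⟨⟨(⟨w, hw⟩ : W), fun h => hw0 (congrArg Subtype.val h)⟩,
    fun (E : Submodule ℂ W) hE => or_iff_not_imp_left.2 fun hE0 => ?_⟩, hι, W.subtype_injective,
    fun u => hWU u.2⟩
  have hstab : ∀ x, ∀ w ∈ E.map W.subtype, M.rho x w ∈ E.map W.subtype := by
    rintro x _ ⟨e, he, rfl⟩
    exact ⟨_, hE x e he, rfl⟩
  have hne : E.map W.subtype ≠ ⊥ := fun h => hE0 (Submodule.map_injective_of_injective
    W.subtype_injective (h.trans (Submodule.map_bot _).symm))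
  have hle : W ≤ E.map W.subtype := hW.le_of_le ⟨hne, hstab⟩ (Submodule.map_subtype_le W E)
  rw [← Submodule.comap_map_eq_of_injective W.subtype_injective E]
  exact Submodule.comap_subtype_eq_top.2 hle

/-- The restriction of a representation along a homomorphism of affine Hecke algebras. -/
def res (L : ARep p₁ n) (em : HA p₁ m →ₐ[ℂ] HA p₁ n) : ARep p₁ m := ⟨L.carrier, L.rho.comp em⟩

/-- The representation on the space of linear maps from `E` to a representation `L` given by the
action on the values. -/
def hom (E : Type) [AddCommGroup E] [Module ℂ E] [FiniteDimensional ℂ E] (L : ARep p₁ n) :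
    ARep p₁ n :=
  ⟨E →ₗ[ℂ] L.carrier, (Algebra.lsmul ℂ ℂ (E →ₗ[ℂ] L.carrier)).comp L.rho⟩

end ARep

variable {em₁ : HA p₁ m →ₐ[ℂ] HA p₁ (m + k)} {em₂ : HA p₁ k →ₐ[ℂ] HA p₁ (m + k)}
  {L : ARep p₁ (m + k)} {W : Submodule ℂ L.carrier}

/-- The linear maps from `M` to `L` with values in `W` that intertwine the action of the first
factor. -/
def homInto (em₁ : HA p₁ m →ₐ[ℂ] HA p₁ (m + k)) (M : ARep p₁ m) (W : Submodule ℂ L.carrier) :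
    Submodule ℂ (M.carrier →ₗ[ℂ] L.carrier) where
  carrier := {f | IsIntertwining M.rho (L.rho.comp em₁) f ∧ ∀ u, f u ∈ W}
  add_mem' hf hg := ⟨fun x u => by simp [hf.1 x u, hg.1 x u], fun u => W.add_mem (hf.2 u) (hg.2 u)⟩
  zero_mem' := ⟨fun _ _ => by simp, fun _ => W.zero_mem⟩
  smul_mem' c f hf := ⟨fun x u => by simp [hf.1 x u], fun u => W.smul_mem c (hf.2 u)⟩

theorem comp_mem_homInto (hcomm : ∀ x y, Commute (em₁ x) (em₂ y))
    (hW : ∀ y, ∀ w ∈ W, L.rho (em₂ y) w ∈ W) {M : ARep p₁ m} (y : HA p₁ k) :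
    ∀ f ∈ homInto em₁ M W, L.rho (em₂ y) ∘ₗ f ∈ homInto em₁ M W := fun f hf => by
  refine ⟨fun x u => ?_, fun u => hW y _ (hf.2 u)⟩
  have h := LinearMap.congr_fun ((hcomm x y).map L.rho).eq (f u)
  rw [LinearMap.comp_apply, hf.1]
  exact h.symm

theorem exists_isTensorHom_of_stable (hcomm : ∀ x y, Commute (em₁ x) (em₂ y))
    (hW₁ : ∀ x, ∀ w ∈ W, L.rho (em₁ x) w ∈ W) (hW₂ : ∀ y, ∀ w ∈ W, L.rho (em₂ y) w ∈ W)
    (hW0 : W ≠ ⊥) :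
    ∃ (M : ARep p₁ m) (N : ARep p₁ k) (ψ : M.carrier →ₗ[ℂ] N.carrier →ₗ[ℂ] L.carrier),
      IsIrredA M ∧ IsIrredA N ∧ IsTensorHom em₁ em₂ (TensorProduct.lift ψ) ∧ ψ ≠ 0 ∧
        ∀ u v, ψ u v ∈ W := by
  obtain ⟨M, ι, hM, hι, hιinj, hιW⟩ := exists_isIrredA_le (M := L.res em₁) hW₁ hW0
  obtain ⟨u, hu⟩ := hM.1
  have hι0 : ι ≠ 0 := fun h => hu (hιinj (by rw [h]; rfl))
  obtain ⟨N, κ, hN, hκ, hκinj, hκhom⟩ := exists_isIrredA_le (M := (L.res em₂).hom M.carrier)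
    (comp_mem_homInto hcomm hW₂) ((Submodule.ne_bot_iff _).2 ⟨ι, ⟨hι, hιW⟩, hι0⟩)
  obtain ⟨v, hv⟩ := hN.1
  have hκv : κ v ≠ 0 := (map_ne_zero_iff κ hκinj).2 hv
  refine ⟨M, N, LinearMap.flip κ, hM, hN, isTensorHom_lift_iff.2 ⟨fun x u v => (hκhom v).1 x u,
    fun y u v => LinearMap.congr_fun (hκ y v) u⟩, fun h => hκv ?_, fun u v => (hκhom v).2 u⟩
  exact LinearMap.ext fun u => LinearMap.congr_fun (LinearMap.congr_fun h u) v

theorem IsIrredA.ofTypeA_of_bilinear {M : ARep p₁ m} (hM : IsIrredA M) {E : Type*} [AddCommGroup E]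
    [Module ℂ E] {L : ARep p₁ n} {em : HA p₁ m →ₐ[ℂ] HA p₁ n}
    {ψ : M.carrier →ₗ[ℂ] E →ₗ[ℂ] L.carrier}
    (hψ : ∀ x u e, ψ (M.rho x u) e = L.rho (em x) (ψ u e)) (hne : ψ ≠ 0)
    (hS : ∀ i < m, ∀ u e, ∀ a : ℂ, ψ u e ≠ 0 →
      L.rho (em (heckeX p₁ m i)) (ψ u e) = a • ψ u e → a ∈ S) :
    OfTypeA M S := by
  have hker : LinearMap.ker ψ = ⊥ := by
    refine (hM.2 _ fun x u hu => ?_).resolve_right fun h => hne (LinearMap.ker_eq_top.1 h)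
    ext e
    rw [hψ, LinearMap.mem_ker.1 hu, LinearMap.zero_apply, map_zero]
  intro i a u hu hau
  obtain ⟨e, he⟩ : ∃ e, ψ u e ≠ 0 := by
    by_contra! h
    exact hu (LinearMap.ker_eq_bot'.1 hker u (LinearMap.ext h))
  refine hS i i.2 u e a he ?_
  rw [← hψ, heckeX_of_lt i.2, hau, map_smul, LinearMap.smul_apply]

theorem IsStableUnder.apply_emb_mem (h₁ : IsEmb1 p₁ m (m + k) em₁) (h₂ : IsEmb2 p₁ m k (m + k) em₂)
    (hW : IsStableUnder (m + k) (leviIndices m) L.T L.X W) :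
    (∀ x, ∀ w ∈ W, L.rho (em₁ x) w ∈ W) ∧ ∀ y, ∀ w ∈ W, L.rho (em₂ y) w ∈ W := by
  constructor
  · refine IsStableUnder.apply_mem (r := L.rho.comp em₁) ⟨fun i _ hi => ?_, fun i hi => ?_⟩
    · simpa [h₁.map_T hi] using! hW.T_mem i (ne_of_lt hi) (by lia)
    · simpa [h₁.map_X hi] using! hW.X_mem i (by lia)
  · refine IsStableUnder.apply_mem (r := L.rho.comp em₂) ⟨fun i _ hi => ?_, fun i hi => ?_⟩
    · simpa [h₂.map_T hi] using! hW.T_mem (m + i) (ne_of_gt (by lia)) (by lia)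
    · simpa [h₂.map_X hi] using! hW.X_mem (m + i) (by lia)

theorem exists_isTensorHom (hp : p₁ ≠ 0) (h₁ : IsEmb1 p₁ m (m + k) em₁)
    (h₂ : IsEmb2 p₁ m k (m + k) em₂)
    (h : weightPart (m + k) L.X (fun i => if i < m then I else J) ≠ ⊥) :
    ∃ (M : ARep p₁ m) (N : ARep p₁ k) (χ : M.carrier ⊗[ℂ] N.carrier →ₗ[ℂ] L.carrier),
      IsIrredA M ∧ OfTypeA M I ∧ IsIrredA N ∧ OfTypeA N J ∧ IsTensorHom em₁ em₂ χ ∧ χ ≠ 0 := by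
  have hstab := ((L.isHeckeFamily hp).mono (leviIndices m).subset_univ).isStableUnder_weightPart
    (S := fun i => if i < m then I else J) fun i hi _ => by
      have : i + 1 ≠ m := hi
      simp only [show i + 1 < m ↔ i < m by lia]
  obtain ⟨hW₁, hW₂⟩ := hstab.apply_emb_mem h₁ h₂
  obtain ⟨M, N, ψ, hM, hN, hψ, hne, hψW⟩ :=
    exists_isTensorHom_of_stable (h₁.commute h₂ hp) hW₁ hW₂ h
  obtain ⟨hψ₁, hψ₂⟩ := isTensorHom_lift_iff.1 hψ
  have hflip : ψ.flip ≠ 0 := fun h => hne (by rw [← ψ.flip_flip, h]; rfl)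
  refine ⟨M, N, _, hM, hM.ofTypeA_of_bilinear hψ₁ hne fun i hi u v a hv0 hav => ?_, hN,
    hN.ofTypeA_of_bilinear (ψ := ψ.flip) (fun y v u => hψ₂ y u v) hflip
      fun i hi v u a hv0 hav => ?_, hψ, ?_⟩
  · rw [h₁.map_X hi] at hav
    simpa [hi] using mem_of_mem_spectralPart (mem_weightPart.1 (hψW u v) i (by lia)) hv0 hav
  · rw [h₂.map_X hi] at hav
    simpa using mem_of_mem_spectralPart (mem_weightPart.1 (hψW u v) (m + i) (by lia)) hv0 hav
  · exact fun h => hne (by ext u v; exact LinearMap.congr_fun h (u ⊗ₜ v))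

theorem IsIrredA.generates (hL : IsIrredA L) {M : ARep p₁ m} {N : ARep p₁ k}
    {χ : M.carrier ⊗[ℂ] N.carrier →ₗ[ℂ] L.carrier} (hχ : χ ≠ 0) : Generates χ :=
  fun W hW h => (hL.2 W hW).resolve_left fun hW0 => hχ <| LinearMap.ext fun e =>
    (Submodule.mem_bot ℂ).1 (hW0 ▸ h e)

theorem IsIrredA.exists_isInducedA (hp : p₁ ≠ 0) (hIJ : IsSeparatedPair p₁ I J) {L : ARep p₁ n}
    (hL : IsIrredA L) (hLIJ : OfTypeA L (I ∪ J)) :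
    ∃ (m k : ℕ) (_ : m + k = n) (em₁ : HA p₁ m →ₐ[ℂ] HA p₁ n) (em₂ : HA p₁ k →ₐ[ℂ] HA p₁ n)
      (_ : IsEmb1 p₁ m n em₁) (_ : IsEmb2 p₁ m k n em₂) (M : ARep p₁ m) (N : ARep p₁ k),
      IsIrredA M ∧ OfTypeA M I ∧ IsIrredA N ∧ OfTypeA N J ∧ IsInducedA em₁ em₂ M N L := by
  have hspec := ofTypeA_iff.1 hLIJ
  have := (isIrredA_iff.1 hL).nontrivial
  obtain ⟨a, v, -, hv, hsorted⟩ :=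
    (L.isHeckeFamily hp).exists_sorted_isWeightVector_mem hp hIJ hspec (W := ⊤)
      ⟨fun _ _ _ _ _ => trivial, fun _ _ _ _ => trivial⟩ top_ne_bot
  obtain ⟨m, k, rfl, ha⟩ := exists_add_eq_of_sorted (fun i hi =>
    hspec i hi (mem_spectrum_of_apply_eq_smul hv.ne_zero (hv.apply i hi))) hsorted
  obtain ⟨em₁, h₁⟩ := exists_isEmb1 hp m k
  obtain ⟨em₂, h₂⟩ := exists_isEmb2 hp m k
  obtain ⟨M, N, χ, hM, hMI, hN, hNJ, hχ, hχ0⟩ := exists_isTensorHom hp h₁ h₂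
    ((Submodule.ne_bot_iff _).2 ⟨v, hv.mem_weightPart ha, hv.ne_zero⟩)
  obtain ⟨V, θ, hθ, hV, -⟩ := exists_isUniversal h₁ h₂ hp hIJ hM hMI hN hNJ
  obtain ⟨g, hg, hgθ⟩ := hθ.exists_equiv hV hχ (hL.generates hχ0) hχ0
  exact ⟨m, k, rfl, em₁, em₂, h₁, h₂, M, N, hM, hMI, hN, hNJ,
    isInducedA_iff.2 ⟨χ, hθ.comp_equiv hg hgθ⟩⟩

end Constituents

theorem stmt18_general (p₁ : ℂ) (hp₁ : p₁ ≠ 0) (I J : Set ℂ) (hIJ : IsSeparatedPair p₁ I J) :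
    (∀ (m k : ℕ) (M : ARep p₁ m) (N : ARep p₁ k),
      IsIrredA M → OfTypeA M I → IsIrredA N → OfTypeA N J →
      ∀ (em₁ : HA p₁ m →ₐ[ℂ] HA p₁ (m + k)) (em₂ : HA p₁ k →ₐ[ℂ] HA p₁ (m + k)),
        IsEmb1 p₁ m (m + k) em₁ → IsEmb2 p₁ m k (m + k) em₂ →
        (∃ V : ARep p₁ (m + k), IsInducedA em₁ em₂ M N V) ∧
        (∀ V : ARep p₁ (m + k), IsInducedA em₁ em₂ M N V →
          IsIrredA V ∧ OfTypeA V (I ∪ J))) ∧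
    (∀ (n : ℕ) (L : ARep p₁ n), IsIrredA L → OfTypeA L (I ∪ J) →
      ∃ (m k : ℕ) (_ : m + k = n)
        (em₁ : HA p₁ m →ₐ[ℂ] HA p₁ n) (em₂ : HA p₁ k →ₐ[ℂ] HA p₁ n)
        (_ : IsEmb1 p₁ m n em₁) (_ : IsEmb2 p₁ m k n em₂)
        (M : ARep p₁ m) (N : ARep p₁ k),
        IsIrredA M ∧ OfTypeA M I ∧ IsIrredA N ∧ OfTypeA N J ∧
        IsInducedA em₁ em₂ M N L) := by
  refine ⟨fun m k M N hM hMI hN hNJ em₁ em₂ h₁ h₂ => ⟨?_, fun V hV => ?_⟩,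
    fun n L hL hLIJ => hL.exists_isInducedA hp₁ hIJ hLIJ⟩
  · obtain ⟨V, θ, hθ, -⟩ := exists_isUniversal h₁ h₂ hp₁ hIJ hM hMI hN hNJ
    exact ⟨V, isInducedA_iff.2 ⟨θ, hθ⟩⟩
  · obtain ⟨θ, hθ⟩ := isInducedA_iff.1 hV
    exact hθ.isIrredA_and_ofTypeA h₁ h₂ hp₁ hIJ hM hMI hN hNJ

theorem stmt18 (p₁ : ℂ) (hp₁ : p₁ ≠ 0) (h₁ : p₁ ^ 2 ≠ 1)
    (I J : Set ℂ) (hI : ZInv p₁ I) (hJ : ZInv p₁ J) (hIJ : I ∩ J = ∅) :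
    -- (1) induction of irreducibles of disjoint `ℤ`-invariant types is irreducible
    (∀ (m k : ℕ) (M : ARep p₁ m) (N : ARep p₁ k),
      IsIrredA M → OfTypeA M I → IsIrredA N → OfTypeA N J →
      ∀ (em₁ : HA p₁ m →ₐ[ℂ] HA p₁ (m + k)) (em₂ : HA p₁ k →ₐ[ℂ] HA p₁ (m + k)),
        IsEmb1 p₁ m (m + k) em₁ → IsEmb2 p₁ m k (m + k) em₂ →
        (∃ V : ARep p₁ (m + k), IsInducedA em₁ em₂ M N V) ∧
        (∀ V : ARep p₁ (m + k), IsInducedA em₁ em₂ M N V →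
          IsIrredA V ∧ OfTypeA V (I ∪ J))) ∧
    -- (2) conversely, every irreducible of type `I ∪ J` is induced
    (∀ (n : ℕ) (L : ARep p₁ n), IsIrredA L → OfTypeA L (I ∪ J) →
      ∃ (m k : ℕ) (_ : m + k = n)
        (em₁ : HA p₁ m →ₐ[ℂ] HA p₁ n) (em₂ : HA p₁ k →ₐ[ℂ] HA p₁ n)
        (_ : IsEmb1 p₁ m n em₁) (_ : IsEmb2 p₁ m k n em₂)
        (M : ARep p₁ m) (N : ARep p₁ k),
        IsIrredA M ∧ OfTypeA M I ∧ IsIrredA N ∧ OfTypeA N J ∧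
        IsInducedA em₁ em₂ M N L) :=
  stmt18_general p₁ hp₁ I J (hI.isSeparatedPair hJ (Set.disjoint_iff_inter_eq_empty.2 hIJ))
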